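/- arXiv:1405.4410 — 2 statements merged into one kernel-verified Lean document; each statement's English description precedes it below -/
import Mathlib

section
/- For all real numbers θ > 1 and σ > 1 there exists a constant C > 0, depending only on n, p, α, θ, σ, C₁ and C₂, with the following property: if u is a nonnegative C¹ solution of div A(x,Du) + b(x)|Du|^α ≥ q(x)g(u) in ℝⁿ, and 0 < r₁ < r₂ and 0 < M₁ < M₂ are real numbers such that σ·r₁ ≤ r₂, θ·M₁ ≤ M₂ and M₁ ≤ M(r₁;u) ≤ M(r₂;u) ≤ M₂, then (∫_{M₁}^{M₂} (g_θ(t)·t)^{−1/p} dt)^{p/(p−1)} + ∫_{M₁}^{M₂} g_θ(t)^{−1/α} dt ≥ C·∫_{r₁}^{r₂} (ξ·f_σ(ξ))^{1/(p−1)} dξ. -/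
open MeasureTheory Metric Set Filter
open scoped RealInnerProductSpace ENNReal

noncomputable section

abbrev Euc (n : ℕ) := EuclideanSpace ℝ (Fin n)

/-- Weak solution of `div A(x,Dv) + b(x)|Dv|^α ≥ a(x)` on an open set `U`:
for every nonnegative test function `φ ∈ C₀^∞(U)`,
`-∫ A(x,Dv)·Dφ + ∫ b |Dv|^α φ ≥ ∫ a φ`. -/
def IsWeakSol {n : ℕ} (A : Euc n → Euc n → Euc n) (b : Euc n → ℝ) (α : ℝ)
    (a : Euc n → ℝ) (U : Set (Euc n)) (v : Euc n → ℝ) : Prop :=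
  ∀ φ : Euc n → ℝ, ContDiff ℝ (⊤ : ℕ∞) φ → HasCompactSupport φ → tsupport φ ⊆ U →
    (∀ x, 0 ≤ φ x) →
    (∫ x in U, a x * φ x) ≤
      (-(∫ x in U, ⟪A x (gradient v x), gradient φ x⟫)) +
        ∫ x in U, b x * ‖gradient v x‖ ^ α * φ x

/-- Structural conditions on `A`: measurability, coercivity and growth. -/
def StructCond {n : ℕ} (A : Euc n → Euc n → Euc n) (p C₁ C₂ : ℝ) : Prop :=
  Measurable (Function.uncurry A) ∧
    ∀ x ζ : Euc n, C₁ * ‖ζ‖ ^ p ≤ ⟪ζ, A x ζ⟫ ∧ ‖A x ζ‖ ≤ C₂ * ‖ζ‖ ^ (p - 1)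

/-- Locally bounded function on `ℝⁿ`. -/
def LocBdd {n : ℕ} (b : Euc n → ℝ) : Prop :=
  ∀ K : Set (Euc n), IsCompact K → ∃ C, ∀ x ∈ K, b x ≤ C

/-- `M(r; u) = max_{|x| = r} u x`. -/
def sphMax {n : ℕ} (u : Euc n → ℝ) (r : ℝ) : ℝ := sSup (u '' Metric.sphere (0 : Euc n) r)

/-- `g_θ(t) = inf_{s ∈ (t/θ, θ t)} g s`. -/
def ginf (g : ℝ → ℝ) (θ t : ℝ) : ℝ := sInf (g '' Set.Ioo (t / θ) (θ * t))

/-- The open annulus `{x : r₁ < |x| < r₂}`. -/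
def Ann (n : ℕ) (r₁ r₂ : ℝ) : Set (Euc n) := {x : Euc n | r₁ < ‖x‖ ∧ ‖x‖ < r₂}

/-- `q_σ(r) = ess inf_{r/σ < |x| < σ r} q x`. -/
def qinf {n : ℕ} (q : Euc n → ℝ) (σ r : ℝ) : ℝ :=
  essInf q (volume.restrict (Ann n (r / σ) (σ * r)))

/-- `f_σ(r) = q_σ(r) / (1 + r q_σ(r)^{(α-p+1)/α} ess sup_{r/σ<|x|<σr} b^{(p-1)/α})`. -/
def fdef {n : ℕ} (q b : Euc n → ℝ) (p α σ r : ℝ) : ℝ :=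
  qinf q σ r /
    (1 + r * qinf q σ r ^ ((α - p + 1) / α) *
      essSup (fun x => b x ^ ((p - 1) / α)) (volume.restrict (Ann n (r / σ) (σ * r))))

/-! ### Truncated powers -/

lemma hasDerivAt_maxpow {s : ℝ} (hs : 1 < s) (t : ℝ) :
    HasDerivAt (fun t : ℝ => (max t 0) ^ s) (s * (max t 0) ^ (s - 1)) t := by
  rcases lt_trichotomy t 0 with h | h | h
  · have h1 : (fun t : ℝ => (max t 0) ^ s) =ᶠ[nhds t] fun _ => (0 : ℝ) := by
      filter_upwards [Iio_mem_nhds h] with x hx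
      rw [max_eq_right (le_of_lt hx), Real.zero_rpow (by linarith)]
    rw [max_eq_right h.le, Real.zero_rpow (by linarith), mul_zero]
    exact (hasDerivAt_const t (0 : ℝ)).congr_of_eventuallyEq h1
  · subst h
    rw [max_self, Real.zero_rpow (by linarith), mul_zero]
    have h1 : HasDerivWithinAt (fun t : ℝ => (max t 0) ^ s) 0 (Iic 0) 0 := by
      refine (hasDerivWithinAt_const (0 : ℝ) (Iic 0) (0 : ℝ)).congr ?_ ?_
      · intro x hx
        rw [max_eq_right hx, Real.zero_rpow (by linarith)]
      · rw [max_self, Real.zero_rpow (by linarith)]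
    have h2 : HasDerivWithinAt (fun t : ℝ => (max t 0) ^ s) 0 (Ici 0) 0 := by
      have h3 := (Real.hasDerivAt_rpow_const (x := 0) (p := s) (Or.inr hs.le)).hasDerivWithinAt
        (s := Ici 0)
      rw [Real.zero_rpow (by linarith), mul_zero] at h3
      refine h3.congr ?_ ?_
      · intro x hx
        rw [max_eq_left hx]
      · rw [max_self]
    have := h1.union h2
    rwa [Iic_union_Ici, hasDerivWithinAt_univ] at this
  · have h1 : (fun t : ℝ => (max t 0) ^ s) =ᶠ[nhds t] fun t => t ^ s := by
      filter_upwards [Ioi_mem_nhds h] with x hx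
      rw [max_eq_left (le_of_lt hx)]
    rw [max_eq_left h.le]
    exact (Real.hasDerivAt_rpow_const (Or.inr hs.le)).congr_of_eventuallyEq h1

lemma continuous_grad {n : ℕ} {u : Euc n → ℝ} (hu : ContDiff ℝ 1 u) :
    Continuous (gradient u) := by
  unfold gradient
  exact (LinearIsometryEquiv.continuous _).comp (hu.continuous_fderiv (by norm_num))

lemma hasGradientAt_of_C1 {n : ℕ} {u : Euc n → ℝ} (hu : ContDiff ℝ 1 u) (x : Euc n) :
    HasGradientAt u (gradient u x) x :=
  ((hu.differentiable (by norm_num)) x).hasGradientAt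

lemma norm_grad_eq {n : ℕ} (u : Euc n → ℝ) (x : Euc n) : ‖gradient u x‖ = ‖fderiv ℝ u x‖ := by
  unfold gradient
  simp

/-- truncated power on a ball -/
def trunc {n : ℕ} (x₀ : Euc n) (ρ : ℝ) (ψ : Euc n → ℝ) (s : ℝ) : Euc n → ℝ :=
  (ball x₀ ρ).indicator (fun x => (max (ψ x) 0) ^ s)

lemma trunc_hasGrad {n : ℕ} {x₀ : Euc n} {ρ : ℝ} (hρ : 0 < ρ) {ψ : Euc n → ℝ} {s : ℝ}
    (hs : 1 < s)
    (hψ : ContDiff ℝ 1 ψ) (hneg : ∀ x ∈ sphere x₀ ρ, ψ x < 0) (x : Euc n) :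
    HasGradientAt (trunc x₀ ρ ψ s)
      ((ball x₀ ρ).indicator (fun x => (s * (max (ψ x) 0) ^ (s - 1)) • gradient ψ x) x) x := by
  rw [hasGradientAt_iff_hasFDerivAt]
  by_cases hx : x ∈ ball x₀ ρ
  · rw [indicator_of_mem hx]
    have h1 := (hasGradientAt_iff_hasFDerivAt.1 (hasGradientAt_of_C1 hψ x))
    have h2 := (hasDerivAt_maxpow hs (ψ x)).comp_hasFDerivAt x h1
    have h3 : trunc x₀ ρ ψ s =ᶠ[nhds x] ((fun t : ℝ => (max t 0) ^ s) ∘ ψ) := by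
      filter_upwards [isOpen_ball.mem_nhds hx] with y hy
      simp only [trunc, Function.comp]
      rw [indicator_of_mem hy]
    refine (h2.congr_of_eventuallyEq h3).congr_fderiv ?_
    rw [map_smul]
  · rw [indicator_of_notMem hx, map_zero]
    have h3 : trunc x₀ ρ ψ s =ᶠ[nhds x] fun _ => (0 : ℝ) := by
      rw [mem_ball] at hx
      rcases (not_lt.1 hx).lt_or_eq with h | h
      · have : (closedBall x₀ ρ)ᶜ ∈ nhds x :=
          isClosed_closedBall.isOpen_compl.mem_nhds (by simpa using h)
        filter_upwards [this] with y hy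
        exact indicator_of_notMem (fun h' => hy (ball_subset_closedBall h')) _
      · have h4 := hneg x (by rw [mem_sphere]; exact h.symm)
        have : ∀ᶠ y in nhds x, ψ y < 0 :=
          hψ.continuous.continuousAt.eventually (Iio_mem_nhds h4)
        filter_upwards [this] with y hy
        simp only [trunc]
        refine indicator_apply_eq_zero.2 (fun _ => ?_)
        rw [max_eq_right hy.le, Real.zero_rpow (by linarith)]
    exact (hasFDerivAt_const (0 : ℝ) x).congr_of_eventuallyEq h3

lemma trunc_contDiff {n : ℕ} {x₀ : Euc n} {ρ : ℝ} (hρ : 0 < ρ) {ψ : Euc n → ℝ} {s : ℝ}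
    (hs : 1 < s)
    (hψ : ContDiff ℝ 1 ψ) (hneg : ∀ x ∈ sphere x₀ ρ, ψ x < 0) :
    ContDiff ℝ 1 (trunc x₀ ρ ψ s) := by
  rw [contDiff_one_iff_hasFDerivAt]
  refine ⟨fun x => InnerProductSpace.toDual ℝ (Euc n)
      ((ball x₀ ρ).indicator (fun x => (s * (max (ψ x) 0) ^ (s - 1)) • gradient ψ x) x), ?_,
      fun x => hasGradientAt_iff_hasFDerivAt.1 (trunc_hasGrad hρ hs hψ hneg x)⟩
  refine (LinearIsometryEquiv.continuous _).comp ?_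
  refine continuous_indicator ?_ ?_
  · intro a ha
    rw [frontier_ball _ hρ.ne'] at ha
    rw [max_eq_right (hneg a ha).le, Real.zero_rpow (by linarith), mul_zero, zero_smul]
  · refine Continuous.continuousOn ?_
    have h1 : Continuous (fun x => s * (max (ψ x) 0) ^ (s - 1)) := by
      refine continuous_const.mul (Continuous.rpow_const ?_ ?_)
      · exact hψ.continuous.max continuous_const
      · intro x
        right
        linarith
    exact h1.smul (continuous_grad hψ)

lemma trunc_nonneg {n : ℕ} (x₀ : Euc n) (ρ : ℝ) (ψ : Euc n → ℝ) (s : ℝ) (x : Euc n) :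
    0 ≤ trunc x₀ ρ ψ s x := by
  refine indicator_nonneg ?_ x
  intro y _
  positivity

lemma trunc_compact {n : ℕ} (x₀ : Euc n) (ρ : ℝ) (ψ : Euc n → ℝ) (s : ℝ) :
    HasCompactSupport (trunc x₀ ρ ψ s) := by
  refine HasCompactSupport.intro (isCompact_closedBall x₀ ρ) ?_
  intro x hx
  exact indicator_of_notMem (fun h' => hx (ball_subset_closedBall h')) _

lemma trunc_grad {n : ℕ} {x₀ : Euc n} {ρ : ℝ} (hρ : 0 < ρ) {ψ : Euc n → ℝ} {s : ℝ}
    (hs : 1 < s)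
    (hψ : ContDiff ℝ 1 ψ) (hneg : ∀ x ∈ sphere x₀ ρ, ψ x < 0) (x : Euc n) :
    gradient (trunc x₀ ρ ψ s) x =
      (ball x₀ ρ).indicator (fun x => (s * (max (ψ x) 0) ^ (s - 1)) • gradient ψ x) x :=
  (trunc_hasGrad hρ hs hψ hneg x).gradient

/-! ### Mollification -/

lemma mollify {n : ℕ} {φ : Euc n → ℝ} (hφ : ContDiff ℝ 1 φ) (hc : HasCompactSupport φ)
    (h0 : ∀ x, 0 ≤ φ x) {η : ℝ} (hη : 0 < η) :
    ∃ φ' : Euc n → ℝ, ContDiff ℝ (⊤ : ℕ∞) φ' ∧ HasCompactSupport φ' ∧ (∀ x, 0 ≤ φ' x) ∧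
      (∀ x, x ∉ cthickening 1 (tsupport φ) → φ' x = 0) ∧
      (∀ x, |φ' x - φ x| ≤ η) ∧ (∀ x, ‖gradient φ' x - gradient φ x‖ ≤ η) := by
  have huc1 : UniformContinuous φ := hc.uniformContinuous_of_continuous hφ.continuous
  have hcf : Continuous (fderiv ℝ φ) := hφ.continuous_fderiv (by norm_num)
  have huc2 : UniformContinuous (fderiv ℝ φ) :=
    hc.fderiv (𝕜 := ℝ) |>.uniformContinuous_of_continuous hcf
  obtain ⟨δ1, hδ1, h1⟩ := Metric.uniformContinuous_iff.1 huc1 η hη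
  obtain ⟨δ2, hδ2, h2⟩ := Metric.uniformContinuous_iff.1 huc2 η hη
  set δ := min 1 (min δ1 δ2) with hδ
  have hδ0 : 0 < δ := by positivity
  let B : ContDiffBump (0 : Euc n) := ⟨δ / 2, δ, by positivity, by linarith⟩
  have hBout : B.rOut = δ := rfl
  set k := B.normed volume with hk
  set φ' := convolution k φ (ContinuousLinearMap.lsmul ℝ ℝ) volume with hφ'
  have hkc : HasCompactSupport k := B.hasCompactSupport_normed
  have hks : ContDiff ℝ (⊤ : ℕ∞) k := B.contDiff_normed
  have hsupp : ∀ x, x ∉ cthickening 1 (tsupport φ) → φ' x = 0 := by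
    intro x hx
    by_contra hne
    have := support_convolution_subset (μ := volume) (f := k) (g := φ) (ContinuousLinearMap.lsmul ℝ ℝ)
      (show x ∈ Function.support φ' from hne)
    obtain ⟨y, hy, z, hz, hyz⟩ := Set.mem_add.1 this
    apply hx
    rw [hk, ContDiffBump.support_normed_eq, hBout] at hy
    refine mem_cthickening_of_dist_le x z 1 _ (subset_tsupport _ hz) ?_
    rw [← hyz, dist_eq_norm]
    have : y + z - z = y := by abel
    rw [this]
    rw [mem_ball_zero_iff] at hy
    exact hy.le.trans (min_le_left _ _)
  have hcomp : IsCompact (cthickening 1 (tsupport φ)) := hc.isCompact.cthickening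
  have hd1 : ∀ x, |φ' x - φ x| ≤ η := by
    intro x
    rw [← Real.dist_eq]
    refine ContDiffBump.dist_normed_convolution_le hφ.continuous.aestronglyMeasurable ?_
    intro y hy
    refine (h1 ?_).le
    rw [hBout] at hy
    exact lt_of_lt_of_le (mem_ball.1 hy) ((min_le_right _ _).trans (min_le_left _ _))
  have hfd : ∀ x, fderiv ℝ φ' x =
      convolution k (fderiv ℝ φ) (ContinuousLinearMap.lsmul ℝ ℝ) volume x := by
    intro x
    have := HasCompactSupport.hasFDerivAt_convolution_right (μ := volume)
      (ContinuousLinearMap.lsmul ℝ ℝ) hc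
      (hks.continuous.locallyIntegrable) hφ x
    rw [this.fderiv]
    unfold convolution
    congr 1
  refine ⟨φ', ?_, ?_, ?_, hsupp, hd1, ?_⟩
  · exact hkc.contDiff_convolution_left _ hks hφ.continuous.locallyIntegrable
  · exact HasCompactSupport.intro hcomp hsupp
  · intro x
    refine integral_nonneg ?_
    intro t
    exact mul_nonneg (B.nonneg_normed t) (h0 _)
  · intro x
    have : gradient φ' x - gradient φ x = (InnerProductSpace.toDual ℝ (Euc n)).symm
        (fderiv ℝ φ' x - fderiv ℝ φ x) := by
      simp [gradient, map_sub]
    rw [this, LinearIsometryEquiv.norm_map, hfd, ← dist_eq_norm]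
    refine ContDiffBump.dist_normed_convolution_le hcf.aestronglyMeasurable ?_
    intro y hy
    refine (h2 ?_).le
    rw [hBout] at hy
    exact lt_of_lt_of_le (mem_ball.1 hy) ((min_le_right _ _).trans (min_le_right _ _))

/-! ### C¹ test functions -/

lemma integrable_of_bdd_compact {n : ℕ} {K : Set (Euc n)} (hK : IsCompact K) {f : Euc n → ℝ}
    (hf : Measurable f) {C : ℝ} (hb : ∀ x ∈ K, |f x| ≤ C) (h0 : ∀ x, x ∉ K → f x = 0) :
    Integrable f := by
  have h1 : IntegrableOn f K := by
    refine Measure.integrableOn_of_bounded (M := C) hK.measure_lt_top.ne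
      hf.aestronglyMeasurable ?_
    filter_upwards [ae_restrict_mem hK.measurableSet] with x hx
    exact hb x hx
  refine (integrableOn_iff_integrable_of_support_subset ?_).1 h1
  intro x hx
  by_contra hxK
  exact hx (h0 x hxK)

lemma grad_zero_of_notMem {n : ℕ} {φ : Euc n → ℝ} {K : Set (Euc n)} (hK : IsClosed K)
    (h0 : ∀ x, x ∉ K → φ x = 0) {x : Euc n} (hx : x ∉ K) : gradient φ x = 0 := by
  have h3 : φ =ᶠ[nhds x] fun _ => (0 : ℝ) := by
    filter_upwards [hK.isOpen_compl.mem_nhds hx] with y hy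
    exact h0 y hy
  have : HasGradientAt φ 0 x := by
    rw [hasGradientAt_iff_hasFDerivAt, map_zero]
    exact (hasFDerivAt_const (0 : ℝ) x).congr_of_eventuallyEq h3
  exact this.gradient

def LocBddV {n : ℕ} {F : Type*} [NormedAddCommGroup F] (V : Euc n → F) : Prop :=
  ∀ K : Set (Euc n), IsCompact K → ∃ C, ∀ x ∈ K, ‖V x‖ ≤ C

lemma weak_integrable {n : ℕ} {c d : Euc n → ℝ} {V : Euc n → Euc n}
    (hc : Measurable c) (hd : Measurable d) (hV : Measurable V)
    (hc' : LocBddV c) (hd' : LocBddV d) (hV' : LocBddV V)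
    {φ : Euc n → ℝ} (hφ : ContDiff ℝ 1 φ) {K : Set (Euc n)} (hK : IsCompact K)
    (h0 : ∀ x, x ∉ K → φ x = 0) :
    Integrable (fun x => c x * φ x) ∧ Integrable (fun x => ⟪V x, gradient φ x⟫) ∧
      Integrable (fun x => d x * φ x) := by
  obtain ⟨Cc, hCc⟩ := hc' K hK
  obtain ⟨Cd, hCd⟩ := hd' K hK
  obtain ⟨CV, hCV⟩ := hV' K hK
  obtain ⟨Cφ, hCφ⟩ := hK.exists_bound_of_continuousOn hφ.continuous.continuousOn
  obtain ⟨Cg, hCg⟩ := hK.exists_bound_of_continuousOn (continuous_grad hφ).continuousOn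
  refine ⟨?_, ?_, ?_⟩
  · refine integrable_of_bdd_compact hK (hc.mul hφ.continuous.measurable) (C := Cc * Cφ) ?_ ?_
    · intro x hx
      rw [abs_mul]
      exact mul_le_mul (hCc x hx) (hCφ x hx) (abs_nonneg _) ((norm_nonneg _).trans (hCc x hx))
    · intro x hx
      rw [h0 x hx, mul_zero]
  · refine integrable_of_bdd_compact hK (hV.inner (continuous_grad hφ).measurable)
      (C := CV * Cg) ?_ ?_
    · intro x hx
      refine (abs_real_inner_le_norm _ _).trans ?_
      exact mul_le_mul (hCV x hx) (hCg x hx) (norm_nonneg _) ((norm_nonneg _).trans (hCV x hx))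
    · intro x hx
      rw [grad_zero_of_notMem hK.isClosed h0 hx, inner_zero_right]
  · refine integrable_of_bdd_compact hK (hd.mul hφ.continuous.measurable) (C := Cd * Cφ) ?_ ?_
    · intro x hx
      rw [abs_mul]
      exact mul_le_mul (hCd x hx) (hCφ x hx) (abs_nonneg _) ((norm_nonneg _).trans (hCd x hx))
    · intro x hx
      rw [h0 x hx, mul_zero]

lemma weak_C1_gen {n : ℕ} {c d : Euc n → ℝ} {V : Euc n → Euc n}
    (hc : Measurable c) (hd : Measurable d) (hV : Measurable V)
    (hc' : LocBddV c) (hd' : LocBddV d) (hV' : LocBddV V)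
    (hw : ∀ φ : Euc n → ℝ, ContDiff ℝ (⊤ : ℕ∞) φ → HasCompactSupport φ →
      (∀ x, 0 ≤ φ x) → (∫ x, c x * φ x) ≤ (-(∫ x, ⟪V x, gradient φ x⟫)) + ∫ x, d x * φ x)
    {φ : Euc n → ℝ} (hφ : ContDiff ℝ 1 φ) (hcs : HasCompactSupport φ) (hpos : ∀ x, 0 ≤ φ x) :
    Integrable (fun x => c x * φ x + ⟪V x, gradient φ x⟫ - d x * φ x) ∧
    ∫ x, (c x * φ x + ⟪V x, gradient φ x⟫ - d x * φ x) ≤ 0 := by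
  set K := cthickening 1 (tsupport φ) with hKdef
  have hK : IsCompact K := hcs.isCompact.cthickening
  have h0 : ∀ x, x ∉ K → φ x = 0 := by
    intro x hx
    by_contra h
    exact hx (self_subset_cthickening _ (subset_tsupport _ h))
  obtain ⟨i1, i2, i3⟩ := weak_integrable hc hd hV hc' hd' hV' hφ hK h0
  have i4 : Integrable (fun x => c x * φ x + ⟪V x, gradient φ x⟫ - d x * φ x) := (i1.add i2).sub i3
  refine ⟨i4, ?_⟩
  obtain ⟨Cc, hCc⟩ := hc' K hK
  obtain ⟨Cd, hCd⟩ := hd' K hK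
  obtain ⟨CV, hCV⟩ := hV' K hK
  set D := |Cc| + |CV| + |Cd| with hD
  have hmain : ∀ η > 0, ∫ x, (c x * φ x + ⟪V x, gradient φ x⟫ - d x * φ x) ≤
      η * (D * volume.real K) := by
    intro η hη
    obtain ⟨φ', hs, hcs', hpos', h0', hd1, hd2⟩ := mollify hφ hcs hpos hη
    obtain ⟨j1, j2, j3⟩ := weak_integrable hc hd hV hc' hd' hV' (hs.of_le (by norm_cast))
      hK h0'
    have hw' := hw φ' hs hcs' hpos'
    have j5 : Integrable (fun x => c x * φ' x + ⟪V x, gradient φ' x⟫) := j1.add j2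
    have j4 : Integrable (fun x => c x * φ' x + ⟪V x, gradient φ' x⟫ - d x * φ' x) := j5.sub j3
    have e1 : ∫ x, (c x * φ' x + ⟪V x, gradient φ' x⟫ - d x * φ' x) ≤ 0 := by
      rw [integral_sub j5 j3, integral_add j1 j2]
      linarith
    have e2 : (∫ x, (c x * φ x + ⟪V x, gradient φ x⟫ - d x * φ x))
        - ∫ x, (c x * φ' x + ⟪V x, gradient φ' x⟫ - d x * φ' x) ≤
        ∫ x in K, η * D := by
      rw [← integral_sub i4 j4]
      rw [← integral_indicator hK.measurableSet]
      refine integral_mono (i4.sub j4) ?_ ?_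
      · rw [integrable_indicator_iff hK.measurableSet]
        exact integrableOn_const hK.measure_lt_top.ne
      · intro x
        by_cases hx : x ∈ K
        · rw [indicator_of_mem hx]
          have k1 : c x * (φ x - φ' x) ≤ |Cc| * η := by
            refine (le_abs_self _).trans ?_
            rw [abs_mul]
            refine mul_le_mul ((hCc x hx).trans (le_abs_self _)) ?_ (abs_nonneg _) (abs_nonneg _)
            rw [abs_sub_comm]
            exact hd1 x
          have k2 : -(d x * (φ x - φ' x)) ≤ |Cd| * η := by
            refine (neg_le_abs _).trans ?_
            rw [abs_mul]
            refine mul_le_mul ((hCd x hx).trans (le_abs_self _)) ?_ (abs_nonneg _) (abs_nonneg _)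
            rw [abs_sub_comm]
            exact hd1 x
          have k3 : ⟪V x, gradient φ x - gradient φ' x⟫ ≤ |CV| * η := by
            refine (real_inner_le_norm _ _).trans ?_
            refine mul_le_mul ((hCV x hx).trans (le_abs_self _)) ?_ (norm_nonneg _) (abs_nonneg _)
            rw [norm_sub_rev]
            exact hd2 x
          rw [inner_sub_right] at k3
          simp only
          nlinarith
        · rw [indicator_of_notMem hx]
          beta_reduce
          rw [h0 x hx, h0' x hx, grad_zero_of_notMem hK.isClosed h0 hx,
            grad_zero_of_notMem hK.isClosed h0' hx]
          simp
    rw [setIntegral_const, smul_eq_mul] at e2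
    nlinarith
  by_contra hcon
  push Not at hcon
  set X := ∫ x, (c x * φ x + ⟪V x, gradient φ x⟫ - d x * φ x) with hX
  have hY : 0 ≤ D * volume.real K := by positivity
  have := hmain (X / (2 * (D * volume.real K + 1))) (by positivity)
  have h2 : X / (2 * (D * volume.real K + 1)) * (D * volume.real K) < X := by
    rw [div_mul_eq_mul_div, div_lt_iff₀ (by positivity)]
    nlinarith
  linarith

/-- Bundled data of a solution. -/
structure Sol (n : ℕ) (p C₁ C₂ α : ℝ) (A : Euc n → Euc n → Euc n) (b q : Euc n → ℝ)
    (g : ℝ → ℝ) (u : Euc n → ℝ) : Prop where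
  hn : 2 ≤ n
  hp : 1 < p
  hC₁ : 0 < C₁
  hC₂ : 0 < C₂
  hα₁ : p - 1 ≤ α
  hα₂ : α ≤ p
  hA : StructCond A p C₁ C₂
  hb : Measurable b
  hb0 : ∀ x, 0 ≤ b x
  hbl : LocBdd b
  hq : Measurable q
  hq0 : ∀ x, 0 ≤ q x
  hql : LocBdd q
  hg : ContinuousOn g (Set.Ici 0)
  hg0 : ∀ t ∈ Set.Ici (0 : ℝ), 0 ≤ g t
  hgp : ∀ t : ℝ, 0 < t → 0 < g t
  hu : ContDiff ℝ 1 u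
  hu0 : ∀ x, 0 ≤ u x
  hw : IsWeakSol A b α (fun x => q x * g (u x)) Set.univ u

lemma Sol.weak {n : ℕ} {p C₁ C₂ α : ℝ} {A : Euc n → Euc n → Euc n} {b q : Euc n → ℝ}
    {g : ℝ → ℝ} {u : Euc n → ℝ} (S : Sol n p C₁ C₂ α A b q g u)
    {φ : Euc n → ℝ} (hφ : ContDiff ℝ 1 φ) (hcs : HasCompactSupport φ) (hpos : ∀ x, 0 ≤ φ x) :
    Integrable (fun x => q x * g (u x) * φ x + ⟪A x (gradient u x), gradient φ x⟫ -
      b x * ‖gradient u x‖ ^ α * φ x) ∧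
    ∫ x, (q x * g (u x) * φ x + ⟪A x (gradient u x), gradient φ x⟫ -
      b x * ‖gradient u x‖ ^ α * φ x) ≤ 0 := by
  have hgu : Continuous (fun x => g (u x)) :=
    S.hg.comp_continuous S.hu.continuous S.hu0
  have hgr := continuous_grad S.hu
  have hp := S.hp
  have hα₁ := S.hα₁
  have hα : 0 < α := by linarith
  have hgα : Continuous (fun x => ‖gradient u x‖ ^ α) :=
    hgr.norm.rpow_const (fun x => Or.inr hα.le)
  have hgp : Continuous (fun x => C₂ * ‖gradient u x‖ ^ (p - 1)) :=
    continuous_const.mul (hgr.norm.rpow_const (fun x => Or.inr (by linarith)))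
  refine weak_C1_gen (S.hq.mul hgu.measurable) (S.hb.mul hgα.measurable)
    (S.hA.1.comp (measurable_id.prodMk hgr.measurable)) ?_ ?_ ?_ ?_ hφ hcs hpos
  · intro K hK
    obtain ⟨C, hC⟩ := S.hql K hK
    obtain ⟨C', hC'⟩ := hK.exists_bound_of_continuousOn hgu.continuousOn
    refine ⟨C * C', fun x hx => ?_⟩
    rw [Pi.mul_apply, norm_mul]
    have h1 : ‖q x‖ ≤ C := by rw [Real.norm_of_nonneg (S.hq0 x)]; exact hC x hx
    exact mul_le_mul h1 (hC' x hx) (norm_nonneg _) ((norm_nonneg _).trans h1)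
  · intro K hK
    obtain ⟨C, hC⟩ := S.hbl K hK
    obtain ⟨C', hC'⟩ := hK.exists_bound_of_continuousOn hgα.continuousOn
    refine ⟨C * C', fun x hx => ?_⟩
    rw [Pi.mul_apply, norm_mul]
    have h1 : ‖b x‖ ≤ C := by rw [Real.norm_of_nonneg (S.hb0 x)]; exact hC x hx
    exact mul_le_mul h1 (hC' x hx) (norm_nonneg _) ((norm_nonneg _).trans h1)
  · intro K hK
    obtain ⟨C', hC'⟩ := hK.exists_bound_of_continuousOn hgp.continuousOn
    refine ⟨C', fun x hx => ?_⟩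
    exact ((S.hA.2 x (gradient u x)).2.trans (le_abs_self _)).trans (hC' x hx)
  · intro φ h1 h2 h3
    have := S.hw φ h1 h2 (subset_univ _) h3
    simpa using this

/-! ### Sobolev consequence -/

lemma sobolev_cons (n : ℕ) (hn : 2 ≤ n) : ∃ CS : ℝ, 0 < CS ∧ ∀ φ : Euc n → ℝ, ContDiff ℝ 1 φ →
    HasCompactSupport φ → (∀ x, 0 ≤ φ x) → ∀ E : Set (Euc n), MeasurableSet E →
    volume E ≠ ⊤ →
    ∫ x in E, φ x ≤ CS * (volume.real E) ^ (1 / (n : ℝ)) * ∫ x, ‖gradient φ x‖ := by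
  have hn' : (1 : ℝ) < n := by exact_mod_cast hn
  obtain ⟨p', hp'⟩ : ∃ p', (n : ℝ).HolderConjugate p' := ⟨_, Real.HolderConjugate.conjExponent hn'⟩
  have hfr : ((Module.finrank ℝ (Euc n) : ℕ) : ℝ).HolderConjugate p' := by simpa using hp'
  set K := lintegralPowLePowLIntegralFDerivConst (volume : Measure (Euc n)) p' with hKdef
  have hp0 : 0 < p' := hp'.symm.pos
  refine ⟨(K : ℝ) ^ (1 / p') + 1, by positivity, ?_⟩
  intro φ hφ hcs hpos E hE hEf
  have h1 := lintegral_pow_le_pow_lintegral_fderiv (volume : Measure (Euc n)) hφ hcs hfr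
  have h_int : Integrable φ := hφ.continuous.integrable_of_hasCompactSupport hcs
  have hcg : Continuous (fderiv ℝ φ) := hφ.continuous_fderiv (by norm_num)
  have h_intg : Integrable (fderiv ℝ φ) :=
    hcg.integrable_of_hasCompactSupport (hcs.fderiv (𝕜 := ℝ))
  have h2 := ENNReal.lintegral_mul_le_Lp_mul_Lq (volume : Measure (Euc n)) hp'
    (f := E.indicator (fun _ => (1 : ℝ≥0∞))) (g := fun x => ‖φ x‖ₑ)
    ((measurable_const.indicator hE).aemeasurable) hφ.continuous.enorm.measurable.aemeasurable
  have h3 : ∫⁻ a, (E.indicator (fun _ => (1 : ℝ≥0∞)) * fun x => ‖φ x‖ₑ) a = ∫⁻ x in E, ‖φ x‖ₑ := by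
    rw [← lintegral_indicator hE]
    congr 1
    ext x
    by_cases hx : x ∈ E <;> simp [hx]
  have h4 : ∫⁻ a, (E.indicator (fun _ => (1 : ℝ≥0∞)) a) ^ (n : ℝ) = volume E := by
    rw [← setLIntegral_one, ← lintegral_indicator hE]
    congr 1
    ext x
    by_cases hx : x ∈ E
    · simp [hx]
    · have : n ≠ 0 := by omega
      simp [hx, this]
  rw [h3, h4] at h2
  have h5 : (∫⁻ a, ‖φ a‖ₑ ^ p') ^ (1 / p') ≤ (K : ℝ≥0∞) ^ (1 / p') * ∫⁻ x, ‖fderiv ℝ φ x‖ₑ := by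
    refine (ENNReal.rpow_le_rpow h1 (by positivity)).trans ?_
    rw [ENNReal.mul_rpow_of_nonneg _ _ (by positivity), ← ENNReal.rpow_mul, mul_one_div_cancel hp0.ne',
      ENNReal.rpow_one]
  have h6 : ∫⁻ x in E, ‖φ x‖ₑ ≤
      volume E ^ (1 / (n : ℝ)) * ((K : ℝ≥0∞) ^ (1 / p') * ∫⁻ x, ‖fderiv ℝ φ x‖ₑ) :=
    h2.trans (by gcongr)
  have h7 : ∫ x in E, φ x = (∫⁻ x in E, ‖φ x‖ₑ).toReal := by
    rw [← integral_norm_eq_lintegral_enorm h_int.aestronglyMeasurable.restrict]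
    congr 1
    ext x
    rw [Real.norm_of_nonneg (hpos x)]
  have h8 : ∫ x, ‖gradient φ x‖ = (∫⁻ x, ‖fderiv ℝ φ x‖ₑ).toReal := by
    rw [← integral_norm_eq_lintegral_enorm h_intg.aestronglyMeasurable]
    congr 1
    ext x
    rw [norm_grad_eq]
  have hfin : ∫⁻ x, ‖fderiv ℝ φ x‖ₑ ≠ ⊤ := h_intg.2.ne
  have h9 := ENNReal.toReal_mono (ENNReal.mul_ne_top
    (ENNReal.rpow_ne_top_of_nonneg (by positivity) hEf)
    (ENNReal.mul_ne_top (ENNReal.rpow_ne_top_of_nonneg (by positivity) ENNReal.coe_ne_top) hfin)) h6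
  rw [← h7, ENNReal.toReal_mul, ENNReal.toReal_mul, ← h8, ← ENNReal.toReal_rpow,
    ← ENNReal.toReal_rpow, ENNReal.coe_toReal] at h9
  refine h9.trans ?_
  have hg0 : 0 ≤ ∫ x, ‖gradient φ x‖ := integral_nonneg (fun x => norm_nonneg _)
  have hE0 : 0 ≤ (volume.real E) ^ (1 / (n : ℝ)) := by positivity
  have := mul_nonneg hE0 hg0
  change (volume.real E) ^ (1 / (n : ℝ)) * _ ≤ _
  nlinarith

/-! ### Energy inequality and the maximum principle -/

lemma rpow_pred_mul {X p : ℝ} (hX : 0 ≤ X) (hp : 0 < p) : X ^ (p - 1) * X = X ^ p := by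
  rw [← Real.rpow_add_one' hX (by linarith)]
  congr 1
  ring

lemma rpow_mul_self {X p : ℝ} (hX : 0 ≤ X) (hp : 0 < p) : X ^ p * X = X ^ (p + 1) := by
  rw [← Real.rpow_add_one' hX (by linarith)]

lemma young_aux {X Z p c K : ℝ} (hX : 0 ≤ X) (hZ : 0 ≤ Z) (hp : 1 < p) (hc : 0 < c) (hK : 0 ≤ K) :
    K * X ^ (p - 1) * Z ≤ c * X ^ p + K * (K / c) ^ (p - 1) * Z ^ p := by
  have h1 := rpow_pred_mul hX (by linarith : 0 < p)
  have h2 := rpow_pred_mul hZ (by linarith : 0 < p)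
  have hXp : 0 ≤ X ^ (p - 1) := by positivity
  rcases le_total (K * Z) (c * X) with h | h
  · have : K * X ^ (p - 1) * Z ≤ c * X ^ p := by
      rw [← h1]
      nlinarith
    have h3 : 0 ≤ K * (K / c) ^ (p - 1) * Z ^ p := by positivity
    linarith
  · have h4 : X ≤ K / c * Z := by
      rw [div_mul_eq_mul_div, le_div_iff₀ hc]
      linarith
    have h5 : X ^ (p - 1) ≤ (K / c) ^ (p - 1) * Z ^ (p - 1) := by
      rw [← Real.mul_rpow (by positivity) hZ]
      exact Real.rpow_le_rpow hX h4 (by linarith)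
    have h6 : 0 ≤ c * X ^ p := by positivity
    have h7 : K * X ^ (p - 1) * Z ≤ K * ((K / c) ^ (p - 1) * Z ^ (p - 1)) * Z := by gcongr
    rw [← h2]
    linarith

lemma mul_le_pow_add {X Z p : ℝ} (hX : 0 ≤ X) (hZ : 0 ≤ Z) (hp : 1 < p) :
    Z ^ (p - 1) * X ≤ Z ^ p + X ^ p := by
  rcases le_total X Z with h | h
  · rw [← rpow_pred_mul hZ (by linarith : 0 < p)]
    have : 0 ≤ X ^ p := by positivity
    have : 0 ≤ Z ^ (p - 1) := by positivity
    nlinarith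
  · have h1 : Z ^ (p - 1) ≤ X ^ (p - 1) := Real.rpow_le_rpow hZ h (by linarith)
    have h2 : 0 ≤ Z ^ p := by positivity
    rw [← rpow_pred_mul hX (by linarith : 0 < p)]
    nlinarith

section
variable {n : ℕ} {p C₁ C₂ α : ℝ} {A : Euc n → Euc n → Euc n} {b q : Euc n → ℝ}
    {g : ℝ → ℝ} {u : Euc n → ℝ}

lemma Sol.energy (S : Sol n p C₁ C₂ α A b q g u) {x₀ : Euc n} {ρ : ℝ} (hρ : 0 < ρ)
    {ψ : Euc n → ℝ} (hψ : ContDiff ℝ 1 ψ) (hneg : ∀ x ∈ sphere x₀ ρ, ψ x < 0) :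
    IntegrableOn (fun x => q x * g (u x) * (max (ψ x) 0) ^ 2 +
      2 * (max (ψ x) 0) * ⟪A x (gradient u x), gradient ψ x⟫ -
      b x * ‖gradient u x‖ ^ α * (max (ψ x) 0) ^ 2) (ball x₀ ρ) ∧
    ∫ x in ball x₀ ρ, (q x * g (u x) * (max (ψ x) 0) ^ 2 +
      2 * (max (ψ x) 0) * ⟪A x (gradient u x), gradient ψ x⟫ -
      b x * ‖gradient u x‖ ^ α * (max (ψ x) 0) ^ 2) ≤ 0 := by
  have h2 : (1 : ℝ) < 2 := by norm_num
  have hw := S.weak (trunc_contDiff hρ h2 hψ hneg) (trunc_compact x₀ ρ ψ 2) (trunc_nonneg x₀ ρ ψ 2)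
  have e : (fun x => q x * g (u x) * trunc x₀ ρ ψ 2 x +
      ⟪A x (gradient u x), gradient (trunc x₀ ρ ψ 2) x⟫ -
      b x * ‖gradient u x‖ ^ α * trunc x₀ ρ ψ 2 x) =
      (ball x₀ ρ).indicator (fun x => q x * g (u x) * (max (ψ x) 0) ^ 2 +
      2 * (max (ψ x) 0) * ⟪A x (gradient u x), gradient ψ x⟫ -
      b x * ‖gradient u x‖ ^ α * (max (ψ x) 0) ^ 2) := by
    ext x
    rw [trunc_grad hρ h2 hψ hneg]
    by_cases hx : x ∈ ball x₀ ρ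
    · simp only [trunc, indicator_of_mem hx]
      rw [inner_smul_right, Real.rpow_two]
      norm_num
    · simp only [trunc, indicator_of_notMem hx]
      simp
  rw [e] at hw
  rw [integrable_indicator_iff measurableSet_ball, integral_indicator measurableSet_ball] at hw
  exact hw

lemma trunc_sobolev {CS : ℝ} (hS : ∀ φ : Euc n → ℝ, ContDiff ℝ 1 φ →
    HasCompactSupport φ → (∀ x, 0 ≤ φ x) → ∀ E : Set (Euc n), MeasurableSet E →
    volume E ≠ ⊤ →
    ∫ x in E, φ x ≤ CS * (volume.real E) ^ (1 / (n : ℝ)) * ∫ x, ‖gradient φ x‖)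
    {x₀ : Euc n} {ρ : ℝ} (hρ : 0 < ρ) {ψ : Euc n → ℝ} {s : ℝ} (hs : 1 < s)
    (hψ : ContDiff ℝ 1 ψ) (hneg : ∀ x ∈ sphere x₀ ρ, ψ x < 0)
    {E : Set (Euc n)} (hE : MeasurableSet E) (hEV : E ⊆ ball x₀ ρ) :
    ∫ x in E, (max (ψ x) 0) ^ s ≤ CS * (volume.real E) ^ (1 / (n : ℝ)) *
      ∫ x in ball x₀ ρ, s * (max (ψ x) 0) ^ (s - 1) * ‖gradient ψ x‖ := by
  have hEf : volume E ≠ ⊤ := ((measure_mono hEV).trans_lt measure_ball_lt_top).ne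
  have h := hS _ (trunc_contDiff hρ hs hψ hneg) (trunc_compact x₀ ρ ψ s) (trunc_nonneg x₀ ρ ψ s)
    E hE hEf
  have e1 : ∫ x in E, trunc x₀ ρ ψ s x = ∫ x in E, (max (ψ x) 0) ^ s := by
    refine setIntegral_congr_fun hE ?_
    intro x hx
    exact indicator_of_mem (hEV hx) _
  have e2 : ∫ x, ‖gradient (trunc x₀ ρ ψ s) x‖ =
      ∫ x in ball x₀ ρ, s * (max (ψ x) 0) ^ (s - 1) * ‖gradient ψ x‖ := by
    rw [← integral_indicator measurableSet_ball]
    congr 1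
    ext x
    rw [trunc_grad hρ hs hψ hneg]
    by_cases hx : x ∈ ball x₀ ρ
    · simp only [indicator_of_mem hx]
      rw [norm_smul, Real.norm_of_nonneg (by positivity)]
    · simp only [indicator_of_notMem hx]
      simp
  rwa [e1, e2] at h

lemma intOn_ball {f : Euc n → ℝ} (hf : Continuous f) (x₀ : Euc n) (ρ : ℝ) :
    IntegrableOn f (ball x₀ ρ) :=
  (hf.continuousOn.integrableOn_compact (isCompact_closedBall x₀ ρ)).mono_set ball_subset_closedBall

lemma Sol.hα (S : Sol n p C₁ C₂ α A b q g u) : 0 < α := by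
  have := S.hp
  have := S.hα₁
  linarith

lemma sphere_nonempty' (hn : 2 ≤ n) {r : ℝ} (hr : 0 ≤ r) : (sphere (0 : Euc n) r).Nonempty := by
  have : Nontrivial (Euc n) := by
    have : Nonempty (Fin n) := ⟨⟨0, by omega⟩⟩
    infer_instance
  exact NormedSpace.sphere_nonempty.2 hr

lemma le_sphMax (hu : Continuous u) {x : Euc n} : u x ≤ sphMax u ‖x‖ := by
  refine le_csSup ((isCompact_sphere _ _).image hu).bddAbove ⟨x, ?_, rfl⟩
  simp

lemma exists_sphMax (hn : 2 ≤ n) (hu : Continuous u) {r : ℝ} (hr : 0 ≤ r) :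
    ∃ x : Euc n, ‖x‖ = r ∧ u x = sphMax u r := by
  obtain ⟨x, hx, hx'⟩ := ((isCompact_sphere (0 : Euc n) r).image hu).sSup_mem
    ((sphere_nonempty' hn hr).image u)
  exact ⟨x, by simpa using hx, hx'⟩

set_option maxHeartbeats 2000000 in
lemma Sol.maxprin (S : Sol n p C₁ C₂ α A b q g u) {r : ℝ} (hr : 0 < r) {x : Euc n}
    (hx : ‖x‖ ≤ r) : u x ≤ sphMax u r := by
  by_contra hcon
  push Not at hcon
  set M := sphMax u r with hM
  have hp := S.hp
  have hC₁ := S.hC₁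
  have hα₁ := S.hα₁
  have huc := S.hu.continuous
  have hgc := continuous_grad S.hu
  obtain ⟨xs, hxs, hmax⟩ := (isCompact_closedBall (0 : Euc n) r).exists_isMaxOn
    ⟨0, by simpa using hr.le⟩ huc.continuousOn
  set U := u xs with hU
  have hMU : M < U := hcon.trans_le (hmax (by simpa using hx))
  have hmax' : ∀ y ∈ closedBall (0 : Euc n) r, u y ≤ U := fun y hy => hmax hy
  obtain ⟨CS, hCS, hSob⟩ := sobolev_cons n S.hn
  obtain ⟨B0, hB0⟩ := S.hbl _ (isCompact_closedBall (0 : Euc n) r)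
  obtain ⟨L0, hL0⟩ := (isCompact_closedBall (0 : Euc n) r).exists_bound_of_continuousOn
    hgc.continuousOn
  have hL00 : 0 ≤ L0 := (norm_nonneg _).trans (hL0 xs hxs)
  have hB00 : 0 ≤ B0 := (S.hb0 xs).trans (hB0 xs hxs)
  set B1 := B0 * L0 ^ (α - p + 1) with hB1
  have hB10 : 0 ≤ B1 := by positivity
  set C3 := B1 * (B1 / C₁) ^ (p - 1) with hC3
  have hC30 : 0 ≤ C3 := by positivity
  -- key inequality for each level
  set E : ℝ → Set (Euc n) := fun k => ball (0 : Euc n) r ∩ {x | gradient u x ≠ 0 ∧ k < u x} with hE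
  have hEm : ∀ k, MeasurableSet (E k) := by
    intro k
    refine measurableSet_ball.inter (MeasurableSet.inter ?_ ?_)
    · exact (hgc.measurable (measurableSet_singleton 0)).compl
    · exact huc.measurable measurableSet_Ioi
  set C4 := CS * ((p + 1) * (1 + C3 / C₁)) with hC4
  have hC40 : 0 < C4 := by positivity
  have key : ∀ k, M < k → k < U → 1 ≤ C4 * (volume.real (E k)) ^ (1 / (n : ℝ)) := by
    intro k hMk hkU
    by_contra hsmall
    push Not at hsmall
    set ψ : Euc n → ℝ := fun x => u x - k with hψdef
    have hψ : ContDiff ℝ 1 ψ := S.hu.sub contDiff_const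
    have hψg : ∀ x, gradient ψ x = gradient u x := by
      intro x
      simp only [gradient, hψdef, fderiv_sub_const]
    have hneg : ∀ x ∈ sphere (0 : Euc n) r, ψ x < 0 := by
      intro y hy
      have : u y ≤ M := le_csSup ((isCompact_sphere _ _).image huc).bddAbove ⟨y, hy, rfl⟩
      simp only [hψdef]
      linarith
    set v : Euc n → ℝ := fun x => max (ψ x) 0 with hv
    have hvc : Continuous v := hψ.continuous.max continuous_const
    have hv0 : ∀ x, 0 ≤ v x := fun x => le_max_right _ _
    set X : Euc n → ℝ := fun x => ‖gradient u x‖ with hX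
    have hXc : Continuous X := hgc.norm
    have hX0 : ∀ x, 0 ≤ X x := fun x => norm_nonneg _
    have hXp : Continuous (fun x => X x ^ p) := hXc.rpow_const (fun x => Or.inr (by linarith))
    have hvp : Continuous (fun x => v x ^ p) := hvc.rpow_const (fun x => Or.inr (by linarith))
    have hvp1 : Continuous (fun x => v x ^ (p + 1)) :=
      hvc.rpow_const (fun x => Or.inr (by linarith))
    have hEk : ∀ x ∈ ball (0 : Euc n) r, x ∉ E k → X x = 0 ∨ v x = 0 := by
      intro x hx hxE
      by_contra hh
      push Not at hh
      apply hxE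
      refine ⟨hx, norm_ne_zero_iff.1 hh.1, ?_⟩
      by_contra h'
      apply hh.2
      simp only [not_lt] at h'
      exact max_eq_right (by simp only [hψdef]; linarith)
    have hI2 : IntegrableOn (fun x => v x * X x ^ p) (ball (0 : Euc n) r) :=
      intOn_ball (hvc.mul hXp) _ _
    have hI2' : IntegrableOn (fun x => C₁ * (v x * X x ^ p)) (ball (0 : Euc n) r) := hI2.const_mul _
    have hI1 : IntegrableOn (fun x => (E k).indicator (fun x => v x ^ (p + 1)) x) (ball (0 : Euc n) r) :=
      (intOn_ball hvp1 _ _).indicator (hEm k)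
    have hIeq : ∫ x in ball (0 : Euc n) r, (E k).indicator (fun x => v x ^ (p + 1)) x =
        ∫ x in E k, v x ^ (p + 1) := by
      rw [setIntegral_indicator (hEm k), inter_eq_right.2 inter_subset_left]
    have hen := S.energy hr hψ hneg
    have h1 : ∫ x in ball (0 : Euc n) r, (C₁ * (v x * X x ^ p) -
        C3 * (E k).indicator (fun x => v x ^ (p + 1)) x) ≤ 0 := by
      refine le_trans (setIntegral_mono_on ?_ hen.1 measurableSet_ball ?_) hen.2
      · exact ((intOn_ball (hvc.mul hXp) _ _).const_mul _).sub (hI1.const_mul _)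
      · intro x hx
        have hxc := ball_subset_closedBall hx
        obtain ⟨a1, a2⟩ := S.hA.2 x (gradient u x)
        rw [hψg]
        rw [real_inner_comm]
        have a3 : 0 ≤ q x * g (u x) * (max (ψ x) 0) ^ 2 := by
          have := S.hq0 x
          have := S.hg0 (u x) (S.hu0 x)
          positivity
        have a4 : b x * ‖gradient u x‖ ^ α ≤ B1 * X x ^ (p - 1) := by
          have e1 : ‖gradient u x‖ ^ α = X x ^ (α - p + 1) * X x ^ (p - 1) := by
            rw [← Real.rpow_add_of_nonneg (hX0 x) (by linarith) (by linarith)]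
            congr 1
            ring
          rw [e1, hB1]
          have e2 : X x ^ (α - p + 1) ≤ L0 ^ (α - p + 1) :=
            Real.rpow_le_rpow (hX0 x) (hL0 x hxc) (by linarith)
          have e3 := hB0 x hxc
          have e4 : 0 ≤ X x ^ (p - 1) := Real.rpow_nonneg (hX0 x) _
          have e5 : 0 ≤ X x ^ (α - p + 1) := Real.rpow_nonneg (hX0 x) _
          calc b x * (X x ^ (α - p + 1) * X x ^ (p - 1))
              = (b x * X x ^ (α - p + 1)) * X x ^ (p - 1) := by ring
            _ ≤ (B0 * L0 ^ (α - p + 1)) * X x ^ (p - 1) := by gcongr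
        have a5 : B1 * X x ^ (p - 1) * v x ^ 2 ≤ C₁ * (v x * X x ^ p) +
            C3 * (E k).indicator (fun x => v x ^ (p + 1)) x := by
          have nn : 0 ≤ C₁ * (v x * X x ^ p) :=
            mul_nonneg hC₁.le (mul_nonneg (hv0 x) (Real.rpow_nonneg (hX0 x) _))
          by_cases hxE : x ∈ E k
          · rw [indicator_of_mem hxE]
            have y := young_aux (hX0 x) (hv0 x) hp hC₁ hB10
            rw [← rpow_mul_self (hv0 x) (by linarith : 0 < p)]
            have := mul_le_mul_of_nonneg_right y (hv0 x)
            nlinarith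
          · rw [indicator_of_notMem hxE, mul_zero, add_zero]
            rcases hEk x hx hxE with h | h
            · rw [h, Real.zero_rpow (by linarith)]
              rw [h] at nn
              simpa [Real.zero_rpow (by linarith : p ≠ 0)] using nn
            · rw [h]
              simp
        have a6 : C₁ * (v x * X x ^ p) ≤ v x * ⟪gradient u x, A x (gradient u x)⟫ := by
          have := mul_le_mul_of_nonneg_left a1 (hv0 x)
          calc _ = v x * (C₁ * X x ^ p) := by ring
            _ ≤ _ := this
        have a7 := mul_le_mul_of_nonneg_right a4 (sq_nonneg (v x))
        simp only [hv] at *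
        nlinarith
    rw [integral_sub hI2' (hI1.const_mul _),
      integral_const_mul, integral_const_mul, hIeq] at h1
    set J := ∫ x in E k, v x ^ (p + 1) with hJ
    set D := ∫ x in ball (0 : Euc n) r, v x * X x ^ p with hD
    have hJ0 : 0 ≤ J := integral_nonneg (fun x => Real.rpow_nonneg (hv0 x) _)
    -- Sobolev
    have hp1 : 1 < p + 1 := by linarith
    have hgradint : ∫ x in ball (0 : Euc n) r, (p + 1) * (max (ψ x) 0) ^ (p + 1 - 1) * ‖gradient ψ x‖
        ≤ (p + 1) * (1 + C3 / C₁) * J := by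
      have h2 : ∫ x in ball (0 : Euc n) r, (p + 1) * (max (ψ x) 0) ^ (p + 1 - 1) * ‖gradient ψ x‖
        ≤ ∫ x in ball (0 : Euc n) r, (p + 1) * ((E k).indicator (fun x => v x ^ (p + 1)) x +
          v x * X x ^ p) := by
        refine setIntegral_mono_on ?_ ?_ measurableSet_ball ?_
        · refine intOn_ball ?_ _ _
          rw [show p + 1 - 1 = p by ring]
          exact (continuous_const.mul hvp).mul (continuous_grad hψ).norm
        · exact (hI1.add (intOn_ball (hvc.mul hXp) _ _)).const_mul _
        · intro x hx
          rw [hψg, show p + 1 - 1 = p by ring, mul_assoc]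
          refine mul_le_mul_of_nonneg_left ?_ (by linarith)
          change v x ^ p * X x ≤ _
          have nn : 0 ≤ v x * X x ^ p := mul_nonneg (hv0 x) (Real.rpow_nonneg (hX0 x) _)
          by_cases hxE : x ∈ E k
          · rw [indicator_of_mem hxE]
            have y := mul_le_pow_add (hX0 x) (hv0 x) hp
            have := mul_le_mul_of_nonneg_right y (hv0 x)
            rw [← rpow_mul_self (hv0 x) (by linarith : 0 < p)]
            rw [← rpow_pred_mul (hv0 x) (by linarith : 0 < p)] at this ⊢
            nlinarith
          · rw [indicator_of_notMem hxE, zero_add]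
            rcases hEk x hx hxE with h | h
            · rw [h] at nn ⊢
              simpa using nn
            · rw [h, Real.zero_rpow (by linarith)]
              simp
      rw [integral_const_mul, integral_add hI1 hI2, hIeq] at h2
      refine h2.trans ?_
      have h3 : D ≤ C3 / C₁ * J := by
        rw [div_mul_eq_mul_div, le_div_iff₀ hC₁]
        linarith
      rw [mul_assoc]
      refine mul_le_mul_of_nonneg_left ?_ (by linarith)
      linarith
    have hs1 := trunc_sobolev hSob hr hp1 hψ hneg (hEm k) inter_subset_left
    have hs2 := trunc_sobolev hSob hr hp1 hψ hneg measurableSet_ball subset_rfl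
    have hJ00 : J = 0 := by
      have h3 : J ≤ C4 * volume.real (E k) ^ (1 / (n : ℝ)) * J := by
        refine hs1.trans ?_
        have : 0 ≤ CS * volume.real (E k) ^ (1 / (n : ℝ)) := by positivity
        refine (mul_le_mul_of_nonneg_left hgradint this).trans (le_of_eq ?_)
        rw [hC4]
        ring
      rcases hJ0.lt_or_eq with hJp | hJp
      · have := mul_lt_mul_of_pos_right hsmall hJp
        linarith
      · exact hJp.symm
    rw [hJ00, mul_zero] at hgradint
    have h5 : ∫ x in ball (0 : Euc n) r, (max (ψ x) 0) ^ (p + 1) ≤ 0 := by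
      refine hs2.trans ?_
      refine mul_nonpos_of_nonneg_of_nonpos (by positivity) hgradint
    have h6 := (trunc_contDiff hr hp1 hψ hneg).continuous.integral_pos_of_hasCompactSupport_nonneg_nonzero
      (μ := volume) (trunc_compact 0 r ψ (p + 1)) (trunc_nonneg 0 r ψ (p + 1)) (x := xs) (by
        have hxsb : xs ∈ ball (0 : Euc n) r := by
          rcases (mem_closedBall.1 hxs).lt_or_eq with h | h
          · exact h
          · exfalso
            have := hneg xs h
            simp only [hψdef] at this
            linarith
        simp only [trunc, indicator_of_mem hxsb]
        have : 0 < ψ xs := by simp only [hψdef]; linarith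
        have : 0 < max (ψ xs) 0 := lt_max_of_lt_left this
        positivity)
    simp only [trunc] at h6
    rw [integral_indicator measurableSet_ball] at h6
    linarith
  -- the measure tends to zero
  set k : ℕ → ℝ := fun j => U - (U - M) / ((j : ℝ) + 2) with hk
  have hk1 : ∀ j, M < k j := by
    intro j
    have : (U - M) / ((j : ℝ) + 2) < U - M := by
      rw [div_lt_iff₀ (by positivity)]
      have : (0 : ℝ) ≤ j := by positivity
      nlinarith
    simp only [hk]
    linarith
  have hk2 : ∀ j, k j < U := by
    intro j
    have : 0 < (U - M) / ((j : ℝ) + 2) := div_pos (by linarith) (by positivity)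
    simp only [hk]
    linarith
  have hkt : Tendsto k atTop (nhds U) := by
    have : Tendsto (fun j : ℕ => (U - M) / ((j : ℝ) + 2)) atTop (nhds 0) :=
      Tendsto.div_atTop tendsto_const_nhds
        (tendsto_atTop_add_const_right _ _ tendsto_natCast_atTop_atTop)
    simpa using (tendsto_const_nhds (x := U)).sub this
  have hkm : Monotone k := by
    intro i j hij
    have : (i : ℝ) ≤ j := by exact_mod_cast hij
    simp only [hk]
    have : (U - M) / ((j : ℝ) + 2) ≤ (U - M) / ((i : ℝ) + 2) :=
      div_le_div_of_nonneg_left (by linarith) (by positivity) (by linarith)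
    linarith
  have hEt : Tendsto (fun j => volume (E (k j))) atTop (nhds (volume (⋂ j, E (k j)))) := by
    refine tendsto_measure_iInter_atTop (fun j => (hEm _).nullMeasurableSet) ?_ ⟨0, ?_⟩
    · intro i j hij x hx
      exact ⟨hx.1, hx.2.1, (hkm hij).trans_lt hx.2.2⟩
    · exact ((measure_mono inter_subset_left).trans_lt (measure_ball_lt_top (x := 0) (r := r))).ne
  have hEe : (⋂ j, E (k j)) = ∅ := by
    rw [eq_empty_iff_forall_notMem]
    intro y hy
    rw [mem_iInter] at hy
    have h1 : U ≤ u y := le_of_tendsto' hkt (fun j => (hy j).2.2.le)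
    apply (hy 0).2.1
    have : IsLocalMax u y := by
      filter_upwards [isOpen_ball.mem_nhds (hy 0).1] with z hz
      exact (hmax' z (ball_subset_closedBall hz)).trans h1
    simp [gradient, this.fderiv_eq_zero]
  rw [hEe, measure_empty] at hEt
  have hEt' : Tendsto (fun j => volume.real (E (k j))) atTop (nhds 0) := by
    have := (ENNReal.tendsto_toReal ENNReal.zero_ne_top).comp hEt
    rw [ENNReal.toReal_zero] at this
    exact this
  have hn0 : 0 < 1 / (n : ℝ) := by
    have := S.hn
    have : 0 < n := by omega
    positivity
  have hEt2 : Tendsto (fun j => C4 * volume.real (E (k j)) ^ (1 / (n : ℝ))) atTop (nhds 0) := by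
    have := (hEt'.rpow_const (p := 1 / (n : ℝ)) (Or.inr hn0.le)).const_mul C4
    rwa [Real.zero_rpow hn0.ne', mul_zero] at this
  have := ge_of_tendsto' hEt2 (fun j => key (k j) (hk1 j) (hk2 j))
  linarith

end

/-! ### The local growth lemma -/

lemma interp_le {X T p α : ℝ} (hX : 0 ≤ X) (hT : 0 < T) (hα : 0 ≤ α) (hαp : α ≤ p) :
    T ^ (p - α) * X ^ α ≤ T ^ p + X ^ p := by
  rcases le_total X T with h | h
  · have h1 : X ^ α ≤ T ^ α := Real.rpow_le_rpow hX h hα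
    have h2 : T ^ (p - α) * T ^ α = T ^ p := by
      rw [← Real.rpow_add hT]
      congr 1
      ring
    have h3 : 0 ≤ X ^ p := by positivity
    have h4 : T ^ (p - α) * X ^ α ≤ T ^ (p - α) * T ^ α := by gcongr
    linarith
  · have hX' : 0 < X := hT.trans_le h
    have h1 : T ^ (p - α) ≤ X ^ (p - α) := Real.rpow_le_rpow hT.le h (by linarith)
    have h2 : X ^ (p - α) * X ^ α = X ^ p := by
      rw [← Real.rpow_add hX']
      congr 1
      ring
    have h3 : 0 ≤ T ^ p := by positivity
    have h4 : T ^ (p - α) * X ^ α ≤ X ^ (p - α) * X ^ α := by gcongr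
    linarith

lemma de_giorgi {N : ℕ} (hN : 0 < N) {D : ℝ} (hD : 0 < D) {Y : ℕ → ℝ} (hY : ∀ j, 0 ≤ Y j)
    (hstep : ∀ j, Y (j + 1) ≤ D * 4 ^ j * Y j ^ (1 + 1 / (N : ℝ)))
    (h0 : Y 0 ≤ (1 / (4 ^ N * D)) ^ N) : ∀ j, Y j ≤ (1 / (4 ^ N * D)) ^ N * (1 / 4 ^ N) ^ j := by
  intro j
  induction j with
  | zero => simpa using h0
  | succ j ih =>
    have hN' : (N : ℝ) ≠ 0 := by positivity
    set c : ℝ := 1 / (4 ^ N * D) with hc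
    have hc0 : 0 < c := by positivity
    have e1 : (c ^ N * (1 / 4 ^ N) ^ j : ℝ) = (c * (1 / 4) ^ j) ^ N := by
      rw [mul_pow, ← pow_mul, mul_comm j N, pow_mul, one_div_pow 4 N]
    refine (hstep j).trans ?_
    have h1 : Y j ^ (1 + 1 / (N : ℝ)) ≤ (c ^ N * (1 / 4 ^ N) ^ j) * (c * (1 / 4) ^ j) := by
      refine (Real.rpow_le_rpow (hY j) ih (by positivity)).trans (le_of_eq ?_)
      rw [Real.rpow_add (by positivity), Real.rpow_one]
      congr 1
      rw [e1, one_div (N : ℝ), Real.pow_rpow_inv_natCast (by positivity) hN.ne']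
    refine (mul_le_mul_of_nonneg_left h1 (by positivity)).trans (le_of_eq ?_)
    rw [pow_succ, hc]
    have h4 : (4 : ℝ) ^ j * (1 / 4) ^ j = 1 := by
      rw [← mul_pow]
      norm_num
    calc _ = (1 / (4 ^ N * D)) ^ N * (1 / 4 ^ N) ^ j * (1 / 4 ^ N) * ((4 : ℝ) ^ j * (1 / 4) ^ j) := by
            field_simp
      _ = _ := by
        rw [h4]
        ring

section
variable {n : ℕ} {p C₁ C₂ α : ℝ} {A : Euc n → Euc n → Euc n} {b q : Euc n → ℝ}
    {g : ℝ → ℝ} {u : Euc n → ℝ}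

def psiK (u : Euc n → ℝ) (x₀ : Euc n) (c : ℝ) (x : Euc n) : ℝ := u x - c * ‖x - x₀‖ ^ 2

lemma psiK_contDiff (hu : ContDiff ℝ 1 u) (x₀ : Euc n) (c : ℝ) : ContDiff ℝ 1 (psiK u x₀ c) :=
  hu.sub (contDiff_const.mul ((contDiff_id.sub contDiff_const).norm_sq ℝ))

lemma psiK_grad (hu : ContDiff ℝ 1 u) (x₀ : Euc n) (c l : ℝ) (x : Euc n) :
    gradient (fun x => psiK u x₀ c x - l) x = gradient u x - (2 * c) • (x - x₀) := by
  have h1 : HasGradientAt u (gradient u x) x := hasGradientAt_of_C1 hu x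
  have h2 : HasFDerivAt (fun x : Euc n => ‖x - x₀‖ ^ 2) (2 • (innerSL ℝ (x - x₀))) x := by
    have := (hasStrictFDerivAt_norm_sq (x - x₀)).hasFDerivAt.comp x
      ((hasFDerivAt_id x).sub_const x₀)
    simpa [Function.comp_def] using this
  apply HasGradientAt.gradient
  rw [hasGradientAt_iff_hasFDerivAt] at h1 ⊢
  have h3 := (h1.sub (h2.const_mul c)).sub_const l
  refine h3.congr_fderiv ?_
  ext y
  simp
  ring

/-- energy estimates at level `l` -/
lemma Sol.levelK (S : Sol n p C₁ C₂ α A b q g u) {x₀ : Euc n} {ρ m U B a l C₄ : ℝ}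
    (hρ : 0 < ρ) (hm : 0 < m) (ha : 0 ≤ a)
    (hC₄ : C₄ = 16 * C₂ * (16 * C₂ / (C₁ / 2)) ^ (p - 1) + C₁ / 2)
    (hU : ∀ x ∈ closedBall x₀ ρ, u x ≤ U)
    (hB : ∀ᵐ x, x ∈ ball x₀ ρ → b x ≤ B)
    (hB0 : 0 ≤ B)
    (hq : ∀ᵐ x, x ∈ ball x₀ ρ → U - 2 * m < u x → a ≤ q x * g (u x))
    (hε : B * m ^ (α - p + 1) * ρ ^ (p - α) ≤ C₁ / 4)
    (hl : U - 2 * m ≤ l) :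
    a * ∫ x in ball x₀ ρ, (max (psiK u x₀ (4 * m / ρ ^ 2) x - l) 0) ^ 2 ≤
      C₄ * (m / ρ) ^ p * ∫ x in ball x₀ ρ, max (psiK u x₀ (4 * m / ρ ^ 2) x - l) 0 ∧
    ∫ x in ball x₀ ρ, (2 : ℝ) * (max (psiK u x₀ (4 * m / ρ ^ 2) x - l) 0) ^ ((2 : ℝ) - 1) *
      ‖gradient (fun x => psiK u x₀ (4 * m / ρ ^ 2) x - l) x‖ ≤
      (18 + 2 * C₄ / C₁) * (m / ρ) *
        ∫ x in ball x₀ ρ, max (psiK u x₀ (4 * m / ρ ^ 2) x - l) 0 := by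
  have hp := S.hp
  have hC₁ := S.hC₁
  have hC₂ := S.hC₂
  have hα₁ := S.hα₁
  have hα₂ := S.hα₂
  have hα := S.hα
  have huc := S.hu.continuous
  have hgc := continuous_grad S.hu
  set c : ℝ := 4 * m / ρ ^ 2 with hc
  set T : ℝ := m / ρ with hT
  have hT0 : 0 < T := by positivity
  set ψ : Euc n → ℝ := fun x => psiK u x₀ c x - l with hψdef
  have hψ : ContDiff ℝ 1 ψ := (psiK_contDiff S.hu x₀ c).sub contDiff_const
  have hneg : ∀ x ∈ sphere x₀ ρ, ψ x < 0 := by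
    intro x hx
    have h1 := hU x (sphere_subset_closedBall hx)
    rw [mem_sphere, dist_eq_norm] at hx
    have h2 : c * ρ ^ 2 = 4 * m := by
      rw [hc]
      field_simp
    simp only [hψdef, psiK, hx, h2]
    linarith
  have hψg : ∀ x, gradient ψ x = gradient u x - (2 * c) • (x - x₀) := psiK_grad S.hu x₀ c l
  have hκ : ∀ x ∈ ball x₀ ρ, ‖(2 * c) • (x - x₀)‖ ≤ 8 * T := by
    intro x hx
    rw [mem_ball, dist_eq_norm] at hx
    rw [norm_smul, Real.norm_of_nonneg (by positivity)]
    have h2 : 2 * c * ρ = 8 * T := by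
      rw [hc, hT]
      field_simp
      ring
    rw [← h2]
    gcongr
  set v : Euc n → ℝ := fun x => max (ψ x) 0 with hv
  have hvc : Continuous v := hψ.continuous.max continuous_const
  have hv0 : ∀ x, 0 ≤ v x := fun x => le_max_right _ _
  have hv2 : ∀ x ∈ ball x₀ ρ, v x ≤ 2 * m := by
    intro x hx
    have h1 := hU x (ball_subset_closedBall hx)
    refine max_le ?_ (by positivity)
    have : 0 ≤ c * ‖x - x₀‖ ^ 2 := by positivity
    simp only [hψdef, psiK]
    linarith
  set X : Euc n → ℝ := fun x => ‖gradient u x‖ with hX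
  have hXc : Continuous X := hgc.norm
  have hX0 : ∀ x, 0 ≤ X x := fun x => norm_nonneg _
  have hXp : Continuous (fun x => X x ^ p) := hXc.rpow_const (fun x => Or.inr (by linarith))
  have hI1 : IntegrableOn (fun x => a * v x ^ 2) (ball x₀ ρ) :=
    intOn_ball (continuous_const.mul (hvc.pow 2)) _ _
  have hI2 : IntegrableOn (fun x => C₁ * (v x * X x ^ p)) (ball x₀ ρ) :=
    intOn_ball (continuous_const.mul (hvc.mul hXp)) _ _
  have hI3 : IntegrableOn (fun x => C₄ * T ^ p * v x) (ball x₀ ρ) :=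
    intOn_ball (continuous_const.mul hvc) _ _
  have hI12 : IntegrableOn (fun x => a * v x ^ 2 + C₁ * (v x * X x ^ p)) (ball x₀ ρ) := hI1.add hI2
  have hen := S.energy hρ hψ hneg
  have hmT : B * m ≤ C₁ / 4 * T ^ (p - α) := by
    have e1 : m = m ^ (α - p + 1) * m ^ (p - α) := by
      rw [← Real.rpow_add hm]
      conv_lhs => rw [← Real.rpow_one m]
      congr 1
      ring
    have e2 : m ^ (p - α) = T ^ (p - α) * ρ ^ (p - α) := by
      rw [← Real.mul_rpow hT0.le hρ.le]
      congr 1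
      rw [hT]
      field_simp
    have e3 : 0 ≤ T ^ (p - α) := by positivity
    calc B * m = B * (m ^ (α - p + 1) * (T ^ (p - α) * ρ ^ (p - α))) := by rw [← e2, ← e1]
      _ = (B * m ^ (α - p + 1) * ρ ^ (p - α)) * T ^ (p - α) := by ring
      _ ≤ _ := mul_le_mul_of_nonneg_right hε e3
  have h1 : ∫ x in ball x₀ ρ, (a * v x ^ 2 + C₁ * (v x * X x ^ p) - C₄ * T ^ p * v x) ≤ 0 := by
    refine le_trans (setIntegral_mono_on_ae (hI12.sub hI3) hen.1 measurableSet_ball ?_) hen.2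
    filter_upwards [hB, hq] with x hBx hqx hx
    obtain ⟨a1, a2⟩ := S.hA.2 x (gradient u x)
    rw [hψg, inner_sub_right, real_inner_comm (gradient u x)]
    change C₁ * X x ^ p ≤ _ at a1
    change ‖_‖ ≤ C₂ * X x ^ (p - 1) at a2
    change _ ≤ q x * g (u x) * v x ^ 2 + 2 * v x * _ - b x * X x ^ α * v x ^ 2
    set I1 := ⟪gradient u x, A x (gradient u x)⟫
    have a3 : a * v x ^ 2 ≤ q x * g (u x) * v x ^ 2 := by
      by_cases h : 0 < ψ x
      · have : U - 2 * m < u x := by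
          have : 0 ≤ c * ‖x - x₀‖ ^ 2 := by positivity
          simp only [hψdef, psiK] at h
          linarith
        exact mul_le_mul_of_nonneg_right (hqx hx this) (sq_nonneg _)
      · have : v x = 0 := max_eq_right (not_lt.1 h)
        rw [this]
        simp
    have a4 : ⟪A x (gradient u x), (2 * c) • (x - x₀)⟫ ≤ C₂ * X x ^ (p - 1) * (8 * T) :=
      (real_inner_le_norm _ _).trans
        (mul_le_mul a2 (hκ x hx) (norm_nonneg _)
          (mul_nonneg hC₂.le (Real.rpow_nonneg (hX0 x) _)))
    have a5 := young_aux (hX0 x) hT0.le hp (half_pos hC₁) (by positivity : 0 ≤ 16 * C₂)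
    have a6 : b x * X x ^ α * v x ≤ C₁ / 2 * (T ^ p + X x ^ p) := by
      have hXa : 0 ≤ X x ^ α := Real.rpow_nonneg (hX0 x) _
      calc b x * X x ^ α * v x ≤ B * X x ^ α * (2 * m) := by
            gcongr
            · exact hBx hx
            · exact hv2 x hx
        _ = 2 * (B * m) * X x ^ α := by ring
        _ ≤ 2 * (C₁ / 4 * T ^ (p - α)) * X x ^ α := by gcongr
        _ = C₁ / 2 * (T ^ (p - α) * X x ^ α) := by ring
        _ ≤ _ := by
          have := interp_le (hX0 x) hT0 hα.le hα₂
          gcongr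
    have a7 : b x * X x ^ α * v x ^ 2 ≤ v x * (C₁ / 2 * (T ^ p + X x ^ p)) := by
      have := mul_le_mul_of_nonneg_left a6 (hv0 x)
      nlinarith
    have a8 := mul_le_mul_of_nonneg_left a1 (hv0 x)
    have a9 := mul_le_mul_of_nonneg_left a4 (hv0 x)
    have a10 := mul_le_mul_of_nonneg_left a5 (hv0 x)
    rw [hC₄]
    set K0 := 16 * C₂ * (16 * C₂ / (C₁ / 2)) ^ (p - 1)
    linarith
  rw [integral_sub hI12 hI3, integral_add hI1 hI2, integral_const_mul, integral_const_mul,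
    integral_const_mul] at h1
  set V2 := ∫ x in ball x₀ ρ, v x ^ 2
  set V1 := ∫ x in ball x₀ ρ, v x
  set D := ∫ x in ball x₀ ρ, v x * X x ^ p with hD
  have hV2 : 0 ≤ V2 := integral_nonneg fun x => sq_nonneg _
  have hD0 : 0 ≤ D := integral_nonneg fun x => mul_nonneg (hv0 x) (Real.rpow_nonneg (hX0 x) _)
  constructor
  · have := mul_nonneg hC₁.le hD0
    linarith
  · have hTp : 0 < T ^ (p - 1) := by positivity
    have hDle : D ≤ C₄ / C₁ * T ^ p * V1 := by
      rw [div_mul_eq_mul_div, div_mul_eq_mul_div, le_div_iff₀ hC₁]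
      have := mul_nonneg ha hV2
      linarith
    have h2 : ∫ x in ball x₀ ρ, T ^ (p - 1) * ((2 : ℝ) * (v x) ^ ((2 : ℝ) - 1) * ‖gradient ψ x‖) ≤
        ∫ x in ball x₀ ρ, (18 * T ^ p * v x + 2 * (v x * X x ^ p)) := by
      refine setIntegral_mono_on (intOn_ball ?_ _ _) (intOn_ball ?_ _ _) measurableSet_ball ?_
      · rw [show (2 : ℝ) - 1 = 1 by norm_num]
        simp only [Real.rpow_one]
        exact continuous_const.mul ((continuous_const.mul hvc).mul (continuous_grad hψ).norm)
      · exact (continuous_const.mul hvc).add (continuous_const.mul (hvc.mul hXp))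
      · intro x hx
        rw [show (2 : ℝ) - 1 = 1 by norm_num, Real.rpow_one, hψg]
        have b1 : ‖gradient u x - (2 * c) • (x - x₀)‖ ≤ X x + 8 * T :=
          (norm_sub_le _ _).trans (add_le_add le_rfl (hκ x hx))
        have b2 := mul_le_pow_add (hX0 x) hT0.le hp
        have b3 := rpow_pred_mul hT0.le (by linarith : 0 < p)
        have b4 : 0 ≤ T ^ (p - 1) * (2 * v x) := mul_nonneg hTp.le (by linarith [hv0 x])
        calc T ^ (p - 1) * (2 * v x * ‖gradient u x - (2 * c) • (x - x₀)‖)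
            = T ^ (p - 1) * (2 * v x) * ‖gradient u x - (2 * c) • (x - x₀)‖ := by ring
          _ ≤ T ^ (p - 1) * (2 * v x) * (X x + 8 * T) := mul_le_mul_of_nonneg_left b1 b4
          _ = 2 * v x * (T ^ (p - 1) * X x + 8 * (T ^ (p - 1) * T)) := by ring
          _ ≤ 2 * v x * (T ^ p + X x ^ p + 8 * T ^ p) := by
            rw [b3]
            exact mul_le_mul_of_nonneg_left (by linarith) (by linarith [hv0 x])
          _ = _ := by ring
    have hJ1 : IntegrableOn (fun x => 18 * T ^ p * v x) (ball x₀ ρ) :=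
      intOn_ball (continuous_const.mul hvc) _ _
    have hJ2 : IntegrableOn (fun x => 2 * (v x * X x ^ p)) (ball x₀ ρ) :=
      intOn_ball (continuous_const.mul (hvc.mul hXp)) _ _
    rw [integral_const_mul, integral_add hJ1 hJ2, integral_const_mul, integral_const_mul] at h2
    have h3 : T ^ (p - 1) * ∫ x in ball x₀ ρ, ((2 : ℝ) * (v x) ^ ((2 : ℝ) - 1) * ‖gradient ψ x‖) ≤
        T ^ (p - 1) * ((18 + 2 * C₄ / C₁) * T * V1) := by
      refine h2.trans ?_
      have b3 := rpow_pred_mul hT0.le (by linarith : 0 < p)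
      calc 18 * T ^ p * V1 + 2 * D ≤ 18 * T ^ p * V1 + 2 * (C₄ / C₁ * T ^ p * V1) := by gcongr
        _ = _ := by
          rw [← b3]
          ring
    exact le_of_mul_le_mul_left h3 hTp


lemma keyK (n : ℕ) (hn : 2 ≤ n) (p C₁ C₂ : ℝ) (hp : 1 < p) (hC₁ : 0 < C₁) (hC₂ : 0 < C₂) :
    ∃ CK : ℝ, 0 < CK ∧ ∀ {α : ℝ} {A : Euc n → Euc n → Euc n} {b q : Euc n → ℝ}
      {g : ℝ → ℝ} {u : Euc n → ℝ}, Sol n p C₁ C₂ α A b q g u →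
      ∀ {x₀ : Euc n} {ρ m U B a : ℝ}, 0 < ρ → 0 < m → 0 ≤ a → 
      (∀ x ∈ closedBall x₀ ρ, u x ≤ U) → U - m ≤ u x₀ → 
      (∀ᵐ x, x ∈ ball x₀ ρ → b x ≤ B) → 0 ≤ B → 
      (∀ᵐ x, x ∈ ball x₀ ρ → U - 2 * m < u x → a ≤ q x * g (u x)) →
      B * m ^ (α - p + 1) * ρ ^ (p - α) ≤ C₁ / 4 → a * ρ ^ p ≤ CK * m ^ (p - 1) := by
  obtain ⟨CS, hCS, hSob⟩ := sobolev_cons n hn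
  have hn0 : 0 < n := by omega
  have hnR : (0 : ℝ) < n := by exact_mod_cast hn0
  obtain ⟨C₄, hC₄⟩ : ∃ C₄, C₄ = 16 * C₂ * (16 * C₂ / (C₁ / 2)) ^ (p - 1) + C₁ / 2 := ⟨_, rfl⟩
  have hC₄0 : 0 < C₄ := by
    rw [hC₄]
    positivity
  set C₅ := 18 + 2 * C₄ / C₁ with hC₅
  have hC₅0 : 0 < C₅ := by positivity
  set C₆ := 2 * CS * C₅ with hC₆
  have hC₆0 : 0 < C₆ := by positivity
  set ω := volume.real (ball (0 : Euc n) 1) with hω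
  have hω0 : 0 < ω := 
    ENNReal.toReal_pos (measure_ball_pos _ _ one_pos).ne' measure_ball_lt_top.ne
  set c := 1 / (4 ^ n * (64 * C₆)) with hc
  have hc0 : 0 < c := by positivity
  refine ⟨32 * C₄ * ω / c ^ n, by positivity, ?_⟩
  intro α A b q g u S x₀ ρ m U B a hρ hm ha hU hx₀ hB hB0 hq hε
  have huc := S.hu.continuous
  set k := U - 2 * m with hk
  set κ : ℝ := 4 * m / ρ ^ 2 with hκ
  set Ψ := psiK u x₀ κ with hΨ
  have hΨc : Continuous Ψ := (psiK_contDiff S.hu x₀ κ).continuous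
  set E : ℝ → Set (Euc n) := fun l => ball x₀ ρ ∩ {x | l < Ψ x} with hE
  have hEo : ∀ l, IsOpen (E l) := fun l => isOpen_ball.inter (isOpen_lt continuous_const hΨc)
  have hEm : ∀ l, MeasurableSet (E l) := fun l => (hEo l).measurableSet
  have hEb : ∀ l, E l ⊆ ball x₀ ρ := fun l => inter_subset_left
  have hEf : ∀ l, volume (E l) ≠ ⊤ := fun l =>
    ((measure_mono (hEb l)).trans_lt measure_ball_lt_top).ne
  set V : ℝ → ℝ := fun l => volume.real (E l) with hV
  have hV0 : ∀ l, 0 ≤ V l := fun l => measureReal_nonneg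
  have hVanti : ∀ l l', l ≤ l' → V l' ≤ V l := by
    intro l l' h
    exact measureReal_mono (fun x hx => ⟨hx.1, h.trans_lt hx.2⟩) (hEf l)
  have hlev := fun l (hl : k ≤ l) => S.levelK hρ hm ha hC₄ hU hB hB0 hq hε hl
  rw [← hκ, ← hΨ] at hlev
  have hv1 : ∀ l, k ≤ l → ∫ x in ball x₀ ρ, max (Ψ x - l) 0 ≤ 2 * m * V l := by
    intro l hl
    have h1 : ∫ x in ball x₀ ρ, max (Ψ x - l) 0 ≤
        ∫ x in ball x₀ ρ, (E l).indicator (fun _ => 2 * m) x := by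
      refine setIntegral_mono_on (intOn_ball ((hΨc.sub continuous_const).max continuous_const) _ _)
        ?_ measurableSet_ball ?_
      · exact (intOn_ball continuous_const _ _).indicator (hEm l)
      · intro x hx
        by_cases hxE : l < Ψ x
        · rw [indicator_of_mem (show x ∈ E l from ⟨hx, hxE⟩)]
          refine max_le ?_ (by positivity)
          have h1 := hU x (ball_subset_closedBall hx)
          have : 0 ≤ κ * ‖x - x₀‖ ^ 2 := by positivity
          simp only [hΨ, psiK]
          linarith
        · rw [max_eq_right (by linarith)]
          exact indicator_nonneg (fun _ _ => by positivity) _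
    refine h1.trans (le_of_eq ?_)
    rw [setIntegral_indicator (hEm l), inter_eq_right.2 (hEb l), setIntegral_const, smul_eq_mul,
      mul_comm]
  have hsq : ∀ l l', l ≤ l' → ∀ F, MeasurableSet F → E l' ⊆ F → F ⊆ ball x₀ ρ → 
      (l' - l) ^ 2 * V l' ≤ ∫ x in F, (max (Ψ x - l) 0) ^ 2 := by
    intro l l' hl F hF hEF hFb
    have hi : IntegrableOn (fun x => (max (Ψ x - l) 0) ^ 2) (ball x₀ ρ) :=
      intOn_ball (((hΨc.sub continuous_const).max continuous_const).pow 2) _ _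
    have h1 : ∫ x in E l', (max (Ψ x - l) 0) ^ 2 ≤ ∫ x in F, (max (Ψ x - l) 0) ^ 2 :=
      setIntegral_mono_set (hi.mono_set hFb) (Eventually.of_forall fun x => sq_nonneg _)
        hEF.eventuallyLE
    refine le_trans ?_ h1
    have h2 : ∫ x in E l', (l' - l) ^ 2 ≤ ∫ x in E l', (max (Ψ x - l) 0) ^ 2 := by
      refine setIntegral_mono_on ?_ (hi.mono_set (hEb l')) (hEm l') ?_
      · exact integrableOn_const (hEf l')
      · intro x hx
        have : l' < Ψ x := hx.2
        have h3 : l' - l ≤ max (Ψ x - l) 0 := le_max_of_le_left (by linarith)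
        exact pow_le_pow_left₀ (by linarith) h3 2
    rw [setIntegral_const, smul_eq_mul] at h2
    rw [mul_comm]
    exact h2
  have hneg : ∀ l, k ≤ l → ∀ x ∈ sphere x₀ ρ, Ψ x - l < 0 := by
    intro l hl x hx
    have h1 := hU x (sphere_subset_closedBall hx)
    rw [mem_sphere, dist_eq_norm] at hx
    have h2 : κ * ρ ^ 2 = 4 * m := by
      rw [hκ]
      field_simp
    simp only [hΨ, psiK, hx, h2]
    linarith
  have hiter : ∀ l l', k ≤ l → l ≤ l' →
      (l' - l) ^ 2 * V l' ≤ C₆ * (m ^ 2 / ρ) * V l ^ (1 + 1 / (n : ℝ)) := by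
    intro l l' hl hll
    have h1 := hsq l l' hll (E l') (hEm l') subset_rfl (hEb l')
    have h2 := trunc_sobolev hSob hρ one_lt_two
      ((psiK_contDiff S.hu x₀ κ).sub (contDiff_const (c := l))) (hneg l hl) (hEm l') (hEb l')
    simp only [Real.rpow_two] at h2
    have h3 : 0 ≤ V l ^ (1 / (n : ℝ)) := Real.rpow_nonneg (hV0 l) _
    have h4 : V l' ^ (1 / (n : ℝ)) ≤ V l ^ (1 / (n : ℝ)) :=
      Real.rpow_le_rpow (hV0 l') (hVanti l l' hll) (by positivity)
    have h5 : V l ^ (1 + 1 / (n : ℝ)) = V l * V l ^ (1 / (n : ℝ)) := by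
      rw [Real.rpow_add' (hV0 l) (by positivity), Real.rpow_one]
    refine (h1.trans h2).trans ?_
    have h6 := (hlev l hl).2.trans
      (mul_le_mul_of_nonneg_left (hv1 l hl) (by positivity))
    have h7 : 0 ≤ C₅ * (m / ρ) * (2 * m * V l) := by
      have := hV0 l
      positivity
    calc _ ≤ CS * V l' ^ (1 / (n : ℝ)) * (C₅ * (m / ρ) * (2 * m * V l)) := by
          refine mul_le_mul_of_nonneg_left h6 ?_
          exact mul_nonneg hCS.le (Real.rpow_nonneg (hV0 l') _)
      _ ≤ CS * V l ^ (1 / (n : ℝ)) * (C₅ * (m / ρ) * (2 * m * V l)) := by gcongr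
      _ = _ := by
        rw [h5, hC₆]
        ring
  -- the density bound
  have hdens : (c * ρ) ^ n ≤ V (k + m / 4) := by
    by_contra hcon
    push Not at hcon
    set lv : ℕ → ℝ := fun j => k + m / 2 - m / 4 * (1 / 2) ^ j with hlv
    have hlvk : ∀ j, k ≤ lv j := by
      intro j
      have : (1 / 2 : ℝ) ^ j ≤ 1 := pow_le_one₀ (by norm_num) (by norm_num)
      simp only [hlv]
      nlinarith
    have hcD : c * ρ = 1 / (4 ^ n * (64 * C₆ / ρ)) := by
      rw [hc]
      field_simp
    have hdg := de_giorgi hn0 (D := 64 * C₆ / ρ) (by positivity) (Y := fun j => V (lv j))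
      (fun j => hV0 _) (by
        intro j
        have hd : lv (j + 1) - lv j = m / 8 * (1 / 2) ^ j := by
          simp only [hlv, pow_succ]
          ring
        have hp2 : (0 : ℝ) < (1 / 2) ^ j := by positivity
        have h1 := hiter (lv j) (lv (j + 1)) (hlvk j) (by
          have : 0 < m / 8 * (1 / 2) ^ j := by positivity
          linarith)
        rw [hd] at h1
        have h2 : (m / 8 * (1 / 2) ^ j) ^ 2 = m ^ 2 / (64 * 4 ^ j) := by
          rw [mul_pow, ← pow_mul, mul_comm j 2, pow_mul]
          rw [show ((1 / 2 : ℝ) ^ 2) = 1 / 4 by norm_num, one_div_pow]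
          field_simp
          norm_num
        rw [h2, div_mul_eq_mul_div, div_le_iff₀ (by positivity)] at h1
        have h3 : m ^ 2 * V (lv (j + 1)) ≤
            m ^ 2 * (64 * C₆ / ρ * 4 ^ j * V (lv j) ^ (1 + 1 / (n : ℝ))) := by
          refine h1.trans (le_of_eq ?_)
          ring
        exact le_of_mul_le_mul_left h3 (by positivity)) (by
        rw [← hcD]
        refine le_of_eq_of_le ?_ hcon.le
        congr 1
        simp only [hlv]
        ring)
    have hlim : Tendsto (fun j : ℕ => (1 / (4 ^ n * (64 * C₆ / ρ))) ^ n * (1 / 4 ^ n : ℝ) ^ j)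
        atTop (nhds 0) := by
      have : Tendsto (fun j : ℕ => (1 / 4 ^ n : ℝ) ^ j) atTop (nhds 0) := by
        refine tendsto_pow_atTop_nhds_zero_of_lt_one (by positivity) ?_
        rw [div_lt_one (by positivity)]
        exact one_lt_pow₀ (by norm_num) hn0.ne'
      simpa using this.const_mul ((1 / (4 ^ n * (64 * C₆ / ρ))) ^ n)
    have h1 : V (k + m / 2) ≤ 0 := by
      refine ge_of_tendsto' hlim (fun j => le_trans (hVanti _ _ ?_) (hdg j))
      have : 0 < m / 4 * (1 / 2 : ℝ) ^ j := by positivity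
      simp only [hlv]
      linarith
    have h2 : 0 < V (k + m / 2) := by
      refine ENNReal.toReal_pos ?_ (hEf _)
      refine ((hEo _).measure_pos volume ⟨x₀, mem_ball_self hρ, ?_⟩).ne'
      change k + m / 2 < Ψ x₀
      simp only [hΨ, psiK, sub_self, norm_zero]
      norm_num
      linarith
    linarith
  -- conclusion
  have h1 := hsq k (k + m / 4) (by linarith) (ball x₀ ρ) measurableSet_ball (hEb _) subset_rfl
  have h2 := (hlev k le_rfl).1
  have h3 := hv1 k le_rfl
  have h4 : V k ≤ ω * ρ ^ n := by
    refine (measureReal_mono (hEb k) measure_ball_lt_top.ne).trans (le_of_eq ?_)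
    rw [Measure.real, Measure.addHaar_ball_of_pos _ _ hρ, ENNReal.toReal_mul,
      ENNReal.toReal_ofReal (by positivity)]
    simp [hω, mul_comm, Measure.real]
  have hTp : 0 < (m / ρ) ^ p := by positivity
  have h5 : a * ((m / 4) ^ 2 * (c * ρ) ^ n) ≤ C₄ * (m / ρ) ^ p * (2 * m * (ω * ρ ^ n)) := by
    calc a * ((m / 4) ^ 2 * (c * ρ) ^ n) ≤ a * ((m / 4) ^ 2 * V (k + m / 4)) := by gcongr
      _ ≤ a * ∫ x in ball x₀ ρ, (max (Ψ x - k) 0) ^ 2 := by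
        refine mul_le_mul_of_nonneg_left ?_ ha
        rw [show k + m / 4 - k = m / 4 by ring] at h1
        exact h1
      _ ≤ _ := h2
      _ ≤ C₄ * (m / ρ) ^ p * (2 * m * V k) := by gcongr
      _ ≤ _ := by gcongr
  have h6 : (m / ρ) ^ p = m ^ (p - 1) * m / ρ ^ p := by
    rw [Real.div_rpow hm.le hρ.le, rpow_pred_mul hm.le (by linarith)]
  rw [h6, mul_pow] at h5
  have hρp : 0 < ρ ^ p := by positivity
  have hρn : 0 < ρ ^ n := by positivity
  have hcn : 0 < c ^ n := by positivity
  rw [div_mul_eq_mul_div, le_div_iff₀ hcn]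
  have h7 : (m ^ 2 * ρ ^ n / 16 / ρ ^ p) * (a * ρ ^ p * c ^ n) ≤
      (m ^ 2 * ρ ^ n / 16 / ρ ^ p) * (32 * C₄ * ω * m ^ (p - 1)) := by
    calc _ = a * ((m / 4) ^ 2 * (c ^ n * ρ ^ n)) := by
          field_simp
          ring
      _ ≤ _ := h5
      _ = _ := by
        field_simp
        ring
  exact le_of_mul_le_mul_left h7 (by positivity)

end

/-! ### Growth of the spherical maximum -/
section
variable {n : ℕ} {p C₁ C₂ α : ℝ} {A : Euc n → Euc n → Euc n} {b q : Euc n → ℝ}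
    {g : ℝ → ℝ} {u : Euc n → ℝ}

lemma Sol.mono (S : Sol n p C₁ C₂ α A b q g u) {r R : ℝ} (hr : 0 < r) (h : r ≤ R) :
    sphMax u r ≤ sphMax u R := by
  obtain ⟨x, hx, hx'⟩ := exists_sphMax S.hn S.hu.continuous hr.le
  rw [← hx']
  exact S.maxprin (hr.trans_le h) (hx.le.trans h)

lemma sphMax_continuousOn (hu : Continuous u) : ContinuousOn (sphMax u) (Ioi 0) := by
  have h1 : Continuous (fun r : ℝ => sSup ((fun y : Euc n => u (r • y)) '' sphere (0 : Euc n) 1)) := by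
    refine IsCompact.continuous_sSup (isCompact_sphere _ _) ?_
    exact hu.comp (continuous_fst.smul continuous_snd)
  refine h1.continuousOn.congr ?_
  intro r hr
  have hr : 0 < r := hr
  simp only [sphMax]
  congr 1
  ext t
  constructor
  · rintro ⟨x, hx, rfl⟩
    refine ⟨r⁻¹ • x, ?_, ?_⟩
    · rw [mem_sphere_zero_iff_norm] at hx ⊢
      rw [norm_smul, hx, norm_inv, Real.norm_of_nonneg hr.le]
      field_simp
    · simp [smul_smul, hr.ne']
  · rintro ⟨x, hx, rfl⟩
    refine ⟨r • x, ?_, rfl⟩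
    rw [mem_sphere_zero_iff_norm] at hx ⊢
    rw [norm_smul, hx, Real.norm_of_nonneg hr.le, mul_one]

lemma subLemma (n : ℕ) (hn : 2 ≤ n) (p C₁ C₂ : ℝ) (hp : 1 < p) (hC₁ : 0 < C₁) (hC₂ : 0 < C₂) :
    ∃ CK : ℝ, 0 < CK ∧ ∀ {α : ℝ} {A : Euc n → Euc n → Euc n} {b q : Euc n → ℝ}
      {g : ℝ → ℝ} {u : Euc n → ℝ}, Sol n p C₁ C₂ α A b q g u →
      ∀ {s ρ m B a : ℝ}, 0 < s → 0 < ρ → 0 < m → 0 ≤ a → 0 ≤ B →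
      sphMax u (s + ρ) - sphMax u s ≤ m →
      (∀ᵐ x : Euc n, s - ρ < ‖x‖ → ‖x‖ < s + ρ → b x ≤ B) →
      (∀ᵐ x : Euc n, s - ρ < ‖x‖ → ‖x‖ < s + ρ → sphMax u s - 2 * m < u x → a ≤ q x * g (u x)) →
      a * ρ ^ p ≤ CK * (m ^ (p - 1) + B * m ^ α * ρ ^ (p - α)) := by
  obtain ⟨CK, hCK, hK⟩ := keyK n hn p C₁ C₂ hp hC₁ hC₂
  refine ⟨CK * (1 + 4 / C₁), by positivity, ?_⟩
  intro α A b q g u S s ρ m B a hs hρ hm ha hB0 hosc hB hq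
  have huc := S.hu.continuous
  set M := sphMax u with hM
  set X := B * m ^ (α - p + 1) * ρ ^ (p - α) with hX
  have hX0 : 0 ≤ X := by positivity
  set N : ℕ := ⌊X / (C₁ / 4)⌋₊ + 1 with hN
  have hN1 : X / (C₁ / 4) ≤ N := by
    rw [hN]
    push_cast
    exact (Nat.lt_floor_add_one _).le
  have hN2 : (N : ℝ) ≤ 1 + X * (4 / C₁) := by
    rw [hN]
    push_cast
    have := Nat.floor_le (show 0 ≤ X / (C₁ / 4) by positivity)
    have e : X / (C₁ / 4) = X * (4 / C₁) := by field_simp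
    linarith
  have hN0 : (0 : ℝ) < N := by
    rw [hN]
    positivity
  -- pigeonhole
  obtain ⟨i, hi, hi'⟩ : ∃ i ∈ Finset.range N,
      M (s + ((i + 1 : ℕ) : ℝ) * (ρ / N)) - M (s + (i : ℝ) * (ρ / N)) ≤ m / N := by
    refine Finset.exists_le_of_sum_le (by simp [hN]) ?_
    have h1 := Finset.sum_range_sub (fun i : ℕ => M (s + (i : ℝ) * (ρ / N))) N
    rw [h1]
    simp only [Finset.sum_const, Finset.card_range, nsmul_eq_mul]
    rw [mul_div_cancel₀ _ hN0.ne', mul_div_cancel₀ _ hN0.ne']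
    simpa using hosc
  rw [Finset.mem_range] at hi
  set ρ' := ρ / N with hρ'
  have hρ'0 : 0 < ρ' := by positivity
  set si := s + (i : ℝ) * ρ' with hsi
  have hi0 : (0 : ℝ) ≤ (i : ℝ) * ρ' := by positivity
  have hsi1 : s + ((i + 1 : ℕ) : ℝ) * ρ' = si + ρ' := by
    rw [hsi]
    push_cast
    ring
  have hle : si + ρ' ≤ s + ρ := by
    rw [← hsi1]
    have h1 : ((i + 1 : ℕ) : ℝ) ≤ N := by exact_mod_cast hi
    have h2 : ((i + 1 : ℕ) : ℝ) * ρ' ≤ N * ρ' := by gcongr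
    have h3 : N * ρ' = ρ := by
      rw [hρ']
      field_simp
    linarith
  have hρρ : ρ' ≤ ρ := by linarith
  have hsi0 : 0 < si := by linarith
  rw [hsi1] at hi'
  obtain ⟨x₀, hx₀, hx₀'⟩ := exists_sphMax hn huc hsi0.le
  have hMs : M s ≤ M (si + ρ') := S.mono hs (by linarith)
  have hball : ∀ x ∈ ball x₀ ρ', s - ρ < ‖x‖ ∧ ‖x‖ < s + ρ := by
    intro x hx
    rw [mem_ball, dist_eq_norm] at hx
    have h1 := norm_sub_norm_le x x₀
    have h2 := norm_sub_norm_le x₀ x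
    rw [norm_sub_rev] at h2
    constructor <;> linarith
  have hmN : m / N ≤ m := by
    have : (1 : ℝ) ≤ N := by
      rw [hN]
      push_cast
      have : (0 : ℝ) ≤ ⌊X / (C₁ / 4)⌋₊ := by positivity
      linarith
    exact div_le_self hm.le this
  have key := hK S (x₀ := x₀) (ρ := ρ') (m := m / N) (U := M (si + ρ')) (B := B) (a := a) hρ'0
    (by positivity) ha
    (by
      intro x hx
      rw [mem_closedBall, dist_eq_norm] at hx
      have h1 := norm_sub_norm_le x x₀
      exact S.maxprin (by linarith) (by linarith))
    (by rw [hx₀']; linarith)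
    (by
      filter_upwards [hB] with x hx hxb
      exact hx (hball x hxb).1 (hball x hxb).2) hB0
    (by
      filter_upwards [hq] with x hx hxb hxu
      exact hx (hball x hxb).1 (hball x hxb).2 (by linarith))
    (by
      have h1 : B * (m / N) ^ (α - p + 1) * ρ' ^ (p - α) = X / N := by
        rw [Real.div_rpow hm.le hN0.le, hρ', Real.div_rpow hρ.le hN0.le, hX]
        have : (N : ℝ) = (N : ℝ) ^ (α - p + 1) * (N : ℝ) ^ (p - α) := by
          rw [← Real.rpow_add hN0, show α - p + 1 + (p - α) = 1 by ring, Real.rpow_one]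
        conv_rhs => rw [this]
        field_simp
      rw [h1, div_le_iff₀ hN0]
      rw [div_le_iff₀ (by positivity)] at hN1
      linarith)
  rw [hρ', Real.div_rpow hρ.le hN0.le, Real.div_rpow hm.le hN0.le] at key
  have hNp : (N : ℝ) ^ (p - 1) * N = (N : ℝ) ^ p := rpow_pred_mul hN0.le (by linarith)
  have hNp0 : 0 < (N : ℝ) ^ (p - 1) := by positivity
  rw [← hNp] at key
  have h2 : a * ρ ^ p ≤ CK * m ^ (p - 1) * N := by
    have h3 : (a * ρ ^ p) / ((N : ℝ) ^ (p - 1) * N) ≤ (CK * m ^ (p - 1) * N) / ((N : ℝ) ^ (p - 1) * N) := by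
      calc _ = a * (ρ ^ p / ((N : ℝ) ^ (p - 1) * N)) := by ring
        _ ≤ _ := key
        _ = _ := by field_simp
    exact (div_le_div_iff_of_pos_right (by positivity)).1 h3
  have h4 : m ^ (p - 1) * X = B * m ^ α * ρ ^ (p - α) := by
    have : m ^ α = m ^ (p - 1) * m ^ (α - p + 1) := by
      rw [← Real.rpow_add hm]
      congr 1
      ring
    rw [hX, this]
    ring
  have hmp : 0 < m ^ (p - 1) := by positivity
  calc a * ρ ^ p ≤ CK * m ^ (p - 1) * N := h2
    _ ≤ CK * m ^ (p - 1) * (1 + X * (4 / C₁)) := by gcongr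
    _ = CK * (m ^ (p - 1) + (4 / C₁) * (m ^ (p - 1) * X)) := by ring
    _ ≤ CK * ((1 + 4 / C₁) * m ^ (p - 1) + (1 + 4 / C₁) * (m ^ (p - 1) * X)) := by
      have h5 : 0 < 4 / C₁ := by positivity
      have h6 : 0 ≤ m ^ (p - 1) * X := by positivity
      gcongr
      · nlinarith
      · linarith
    _ = _ := by
      rw [h4]
      ring
end

/-! ### Chain lemma -/

lemma chain_lemma {h : ℝ → ℝ} {a b lam : ℝ} {Q : ℝ → ℝ → Prop} (hlam : 1 < lam) (hab : a ≤ b)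
    (hc : ContinuousOn h (Icc a b)) (hm : MonotoneOn h (Icc a b)) (h0 : 0 < h a)
    (htrans : ∀ s s' s'', a ≤ s → s ≤ s' → s' ≤ s'' → s'' ≤ b → Q s s' → Q s' s'' → Q s s'')
    (hbase : ∀ s s', a ≤ s → s ≤ s' → s' ≤ b → lam * h s ≤ h s' → h s' ≤ lam ^ 2 * h s → Q s s')
    (hend : lam * h a ≤ h b) : Q a b := by
  have key : ∀ L : ℕ, ∀ s, a ≤ s → s ≤ b → lam * h s ≤ h b → h b ≤ lam ^ (L + 2) * h s → Q s b := by
    intro L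
    induction L with
    | zero =>
      intro s hs hsb h1 h2
      exact hbase s b hs hsb le_rfl h1 (by simpa using h2)
    | succ L ih =>
      intro s hs hsb h1 h2
      have hs0 : 0 < h s := h0.trans_le (hm ⟨le_rfl, hab⟩ ⟨hs, hsb⟩ hs)
      rcases le_or_gt (h b) (lam ^ 2 * h s) with h3 | h3
      · exact hbase s b hs hsb le_rfl h1 h3
      · have hcs : ContinuousOn h (Icc s b) := hc.mono (Icc_subset_Icc_left hs)
        obtain ⟨s', ⟨hs1, hs2⟩, hs3⟩ := intermediate_value_Icc hsb hcs
          (show lam * h s ∈ Icc (h s) (h b) from ⟨by nlinarith, h1⟩)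
        refine htrans s s' b hs hs1 hs2 le_rfl
          (hbase s s' hs hs1 hs2 hs3.ge (by
            rw [hs3, sq, mul_assoc]
            exact le_mul_of_one_le_left (by positivity) hlam.le)) ?_
        refine ih s' (hs.trans hs1) hs2 ?_ ?_
        · rw [hs3]
          nlinarith
        · rw [hs3]
          refine h2.trans (le_of_eq ?_)
          ring
  obtain ⟨L, hL⟩ := pow_unbounded_of_one_lt (h b / h a) hlam
  refine key L a le_rfl hab hend ?_
  rw [div_lt_iff₀ h0] at hL
  refine hL.le.trans ?_
  have : lam ^ L ≤ lam ^ (L + 2) := pow_le_pow_right₀ hlam.le (by omega)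
  gcongr

/-! ### The functions `g_θ` and `f_σ` -/
section
variable {n : ℕ} {p C₁ C₂ α : ℝ} {A : Euc n → Euc n → Euc n} {b q : Euc n → ℝ}
    {g : ℝ → ℝ} {u : Euc n → ℝ}

lemma ginf_bdd (hg0 : ∀ t ∈ Ici (0 : ℝ), 0 ≤ g t) {θ t : ℝ} (hθ : 1 < θ) (ht : 0 < t) :
    BddBelow (g '' Ioo (t / θ) (θ * t)) := by
  refine ⟨0, ?_⟩
  rintro _ ⟨s, hs, rfl⟩
  have : 0 < t / θ := by positivity
  exact hg0 s (this.le.trans hs.1.le)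

lemma ginf_mem {θ t : ℝ} (hθ : 1 < θ) (ht : 0 < t) : t ∈ Ioo (t / θ) (θ * t) :=
  ⟨div_lt_self ht hθ, by nlinarith⟩

lemma ginf_le (hg0 : ∀ t ∈ Ici (0 : ℝ), 0 ≤ g t) {θ t s : ℝ} (hθ : 1 < θ) (ht : 0 < t)
    (hs : s ∈ Ioo (t / θ) (θ * t)) : ginf g θ t ≤ g s :=
  csInf_le (ginf_bdd hg0 hθ ht) ⟨s, hs, rfl⟩

lemma le_ginf {θ t c : ℝ} (hθ : 1 < θ) (ht : 0 < t)
    (h : ∀ s ∈ Ioo (t / θ) (θ * t), c ≤ g s) : c ≤ ginf g θ t := by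
  refine le_csInf ⟨_, t, ginf_mem hθ ht, rfl⟩ ?_
  rintro _ ⟨s, hs, rfl⟩
  exact h s hs

/-- monotonicity of `g_θ` with respect to the interval -/
lemma ginf_le_ginf (hg0 : ∀ t ∈ Ici (0 : ℝ), 0 ≤ g t) {θ θ1 t s : ℝ} (hθ : 1 < θ) (hθ1 : 1 < θ1)
    (ht : 0 < t) (hs : 0 < s) (h1 : s / θ ≤ t / θ1) (h2 : θ1 * t ≤ θ * s) :
    ginf g θ s ≤ ginf g θ1 t :=
  le_ginf hθ1 ht fun y hy => ginf_le hg0 hθ hs ⟨h1.trans_lt hy.1, hy.2.trans_le h2⟩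

/-- two-sided bounds on compact intervals -/
lemma ginf_bounds (hg : ContinuousOn g (Ici 0)) (hg0 : ∀ t ∈ Ici (0 : ℝ), 0 ≤ g t)
    (hgp : ∀ t : ℝ, 0 < t → 0 < g t) {θ M₁ M₂ : ℝ} (hθ : 1 < θ) (hM₁ : 0 < M₁) (hM : M₁ ≤ M₂) :
    ∃ c K : ℝ, 0 < c ∧ ∀ t ∈ Icc M₁ M₂, c ≤ ginf g θ t ∧ ginf g θ t ≤ K := by
  have hsub : Icc (M₁ / θ) (θ * M₂) ⊆ Ici 0 := fun x hx =>
    (show (0 : ℝ) ≤ M₁ / θ by positivity).trans hx.1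
  have hle : ∀ t ∈ Icc M₁ M₂, Ioo (t / θ) (θ * t) ⊆ Icc (M₁ / θ) (θ * M₂) := by
    intro t ht y hy
    constructor
    · refine le_trans ?_ hy.1.le
      have := ht.1
      gcongr
    · refine hy.2.le.trans ?_
      have := ht.2
      gcongr
  have hM₁m : M₁ ∈ Icc (M₁ / θ) (θ * M₂) :=
    hle M₁ ⟨le_rfl, hM⟩ (ginf_mem hθ hM₁)
  obtain ⟨x, hx, hx'⟩ := isCompact_Icc.exists_isMinOn ⟨M₁, hM₁m⟩ (hg.mono hsub)
  obtain ⟨y, hy, hy'⟩ := isCompact_Icc.exists_isMaxOn ⟨M₁, hM₁m⟩ (hg.mono hsub)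
  have hx0 : 0 < x := (show 0 < M₁ / θ by positivity).trans_le hx.1
  refine ⟨g x, g y, hgp x hx0, fun t ht => ?_⟩
  have ht0 : 0 < t := hM₁.trans_le ht.1
  constructor
  · exact le_ginf hθ ht0 fun s hs => hx' (hle t ht hs)
  · exact (ginf_le hg0 hθ ht0 (ginf_mem hθ ht0)).trans (hy' (hle t ht (ginf_mem hθ ht0)))

lemma ginf_measurable (hg0 : ∀ t ∈ Ici (0 : ℝ), 0 ≤ g t) {θ : ℝ} (hθ : 1 < θ) :
    Measurable ((Ioi (0 : ℝ)).indicator (ginf g θ)) := by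
  refine measurable_of_Iio fun c => ?_
  have e : (Ioi (0 : ℝ)).indicator (ginf g θ) ⁻¹' Iio c =
      (Ioi 0 ∩ ⋃ s ∈ {s : ℝ | g s < c}, {t : ℝ | t / θ < s ∧ s < θ * t}) ∪
        (Iic 0 ∩ {_t : ℝ | 0 < c}) := by
    ext t
    simp only [mem_preimage, mem_Iio, mem_union, mem_inter_iff, mem_Ioi, mem_Iic]
    by_cases ht : 0 < t
    · rw [indicator_of_mem (show t ∈ Ioi (0 : ℝ) from ht)]
      have : ¬ t ≤ 0 := not_le.2 ht
      simp only [ht, this, true_and, false_and, or_false]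
      rw [ginf, csInf_lt_iff (ginf_bdd hg0 hθ ht) ⟨_, t, ginf_mem hθ ht, rfl⟩]
      constructor
      · rintro ⟨_, ⟨s, hs, rfl⟩, h⟩
        exact mem_biUnion (show s ∈ {s : ℝ | g s < c} from h) hs
      · intro h
        obtain ⟨s, hs, hs'⟩ := mem_iUnion₂.1 h
        exact ⟨g s, ⟨s, hs', rfl⟩, hs⟩
    · rw [indicator_of_notMem (show t ∉ Ioi (0 : ℝ) from ht)]
      have : t ≤ 0 := not_lt.1 ht
      simp [ht, this]
  rw [e]
  refine MeasurableSet.union ?_ ?_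
  · refine (measurableSet_Ioi).inter (IsOpen.measurableSet ?_)
    refine isOpen_biUnion fun s _ => ?_
    exact (isOpen_lt (continuous_id.div_const θ) continuous_const).inter
      (isOpen_lt continuous_const (continuous_const.mul continuous_id))
  · exact measurableSet_Iic.inter (MeasurableSet.const _)

lemma Ann_open (r₁ r₂ : ℝ) : IsOpen (Ann n r₁ r₂) :=
  (isOpen_lt continuous_const continuous_norm).inter (isOpen_lt continuous_norm continuous_const)

/-- all facts used about `f_σ` -/
lemma Sol.F_facts (S : Sol n p C₁ C₂ α A b q g u) {σ ξ : ℝ} (hσ : 1 < σ) (hξ : 0 < ξ) :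
    ∃ q0 B : ℝ, 0 ≤ q0 ∧ 0 ≤ B ∧
      (∀ᵐ x : Euc n, x ∈ Ann n (ξ / σ) (σ * ξ) → q0 ≤ q x ∧ b x ≤ B) ∧
      0 ≤ (ξ * fdef q b p α σ ξ) ^ (1 / (p - 1)) ∧
      ((ξ * fdef q b p α σ ξ) ^ (1 / (p - 1))) ^ (p - 1) ≤ ξ * q0 ∧
      ((ξ * fdef q b p α σ ξ) ^ (1 / (p - 1))) ^ α * B ≤ q0 := by
  have hp := S.hp
  have hα := S.hα
  have hα₁ := S.hα₁
  have hp1 : 0 < p - 1 := by linarith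
  set μ := volume.restrict (Ann n (ξ / σ) (σ * ξ)) with hμ
  have hmeas : MeasurableSet (Ann n (ξ / σ) (σ * ξ)) := (Ann_open _ _).measurableSet
  have hmem : ∀ᵐ x ∂μ, x ∈ Ann n (ξ / σ) (σ * ξ) := ae_restrict_mem hmeas
  have hne : (ae μ).NeBot := by
    rw [ae_neBot, hμ, Ne, Measure.restrict_eq_zero]
    obtain ⟨x, hx⟩ := sphere_nonempty' S.hn hξ.le
    rw [mem_sphere_zero_iff_norm] at hx
    refine ((Ann_open _ _).measure_pos volume ⟨x, ?_⟩).ne'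
    refine ⟨?_, ?_⟩
    · rw [hx]
      exact div_lt_self hξ hσ
    · rw [hx]
      nlinarith
  have hsub : Ann n (ξ / σ) (σ * ξ) ⊆ closedBall 0 (σ * ξ) := by
    intro x hx
    rw [mem_closedBall_zero_iff]
    exact hx.2.le
  obtain ⟨Kq, hKq⟩ := S.hql _ (isCompact_closedBall (0 : Euc n) (σ * ξ))
  obtain ⟨Kb, hKb⟩ := S.hbl _ (isCompact_closedBall (0 : Euc n) (σ * ξ))
  have hqb : IsBoundedUnder (· ≥ ·) (ae μ) q := isBoundedUnder_of ⟨0, S.hq0⟩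
  have hqb' : IsBoundedUnder (· ≤ ·) (ae μ) q :=
    ⟨Kq, by
      rw [eventually_map]
      filter_upwards [hmem] with x hx using hKq x (hsub hx)⟩
  set β := (p - 1) / α with hβ
  have hβ0 : 0 < β := by positivity
  have hbb : IsBoundedUnder (· ≥ ·) (ae μ) (fun x => b x ^ β) :=
    isBoundedUnder_of ⟨0, fun x => Real.rpow_nonneg (S.hb0 x) _⟩
  have hbb' : IsBoundedUnder (· ≤ ·) (ae μ) (fun x => b x ^ β) :=
    ⟨Kb ^ β, by
      rw [eventually_map]
      filter_upwards [hmem] with x hx using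
        Real.rpow_le_rpow (S.hb0 x) (hKb x (hsub hx)) hβ0.le⟩
  set q0 := qinf q σ ξ with hq0
  set E := essSup (fun x => b x ^ β) μ with hE
  have h1 : ∀ᵐ x ∂μ, q0 ≤ q x := ae_essInf_le hqb
  have h2 : ∀ᵐ x ∂μ, b x ^ β ≤ E := ae_le_essSup hbb'
  have hq00 : 0 ≤ q0 := le_essInf_of_ae_le 0 (Eventually.of_forall S.hq0) hqb'.isCoboundedUnder_ge
  have hE0 : 0 ≤ E := by
    obtain ⟨x, hx⟩ := h2.exists
    exact (Real.rpow_nonneg (S.hb0 x) _).trans hx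
  have hfd : fdef q b p α σ ξ = q0 / (1 + ξ * q0 ^ ((α - p + 1) / α) * E) := rfl
  set den := 1 + ξ * q0 ^ ((α - p + 1) / α) * E with hden
  have hden1 : 1 ≤ den := by
    have : 0 ≤ ξ * q0 ^ ((α - p + 1) / α) * E := by positivity
    linarith
  set f := fdef q b p α σ ξ with hf
  have hf0 : 0 ≤ f := by
    rw [hfd]
    positivity
  have hfq : f ≤ q0 := by
    rw [hfd]
    exact div_le_self hq00 hden1
  refine ⟨q0, E ^ (1 / β), hq00, by positivity, ?_, by positivity, ?_, ?_⟩
  · have h3 : ∀ᵐ x ∂μ, q0 ≤ q x ∧ b x ≤ E ^ (1 / β) := by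
      filter_upwards [h1, h2] with x hx1 hx2
      refine ⟨hx1, ?_⟩
      have := Real.rpow_le_rpow (Real.rpow_nonneg (S.hb0 x) _) hx2 (show 0 ≤ 1 / β by positivity)
      rwa [← Real.rpow_mul (S.hb0 x), mul_one_div_cancel hβ0.ne', Real.rpow_one] at this
    exact (ae_restrict_iff' hmeas).1 h3
  · rw [← Real.rpow_mul (by positivity), one_div_mul_cancel hp1.ne', Real.rpow_one]
    gcongr
  · have e1 : ((ξ * f) ^ (1 / (p - 1))) ^ α = (ξ * f) ^ (1 / β) := by
      rw [← Real.rpow_mul (by positivity)]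
      congr 1
      rw [hβ]
      field_simp
    rw [e1, ← Real.mul_rpow (by positivity) hE0]
    rcases hq00.lt_or_eq with hqp | hqp
    · have h4 : ξ * f * E ≤ q0 ^ β := by
        have e2 : q0 = q0 ^ β * q0 ^ ((α - p + 1) / α) := by
          rw [← Real.rpow_add hqp]
          conv_lhs => rw [← Real.rpow_one q0]
          congr 1
          rw [hβ]
          field_simp
          ring
        have e3 : 0 < q0 ^ β := by positivity
        have e4 : ξ * f * E = (ξ * q0 * E) / den := by
          rw [hfd]
          ring
        rw [e4, div_le_iff₀ (by linarith)]
        calc ξ * q0 * E = q0 ^ β * (ξ * q0 ^ ((α - p + 1) / α) * E) := by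
              conv_lhs => rw [e2]
              ring
          _ ≤ q0 ^ β * den := by
            gcongr
            linarith
      have := Real.rpow_le_rpow (by positivity) h4 (show 0 ≤ 1 / β by positivity)
      rwa [← Real.rpow_mul hq00, mul_one_div_cancel hβ0.ne', Real.rpow_one] at this
    · have : f = 0 := le_antisymm (hqp ▸ hfq) hf0
      rw [this, ← hqp]
      simp [Real.zero_rpow (show β⁻¹ ≠ 0 by positivity)]
end

/-! ### The pointwise alternative -/

lemma ptLemma (n : ℕ) (hn : 2 ≤ n) (p C₁ C₂ α : ℝ) (hp : 1 < p) (hC₁ : 0 < C₁) (hC₂ : 0 < C₂)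
    (hα₁ : p - 1 ≤ α) :
    ∃ C : ℝ, 0 < C ∧ ∀ {A : Euc n → Euc n → Euc n} {b q : Euc n → ℝ}
      {g : ℝ → ℝ} {u : Euc n → ℝ}, Sol n p C₁ C₂ α A b q g u →
      ∀ {σ ξ s s' m₁ G : ℝ}, 1 < σ → 0 < ξ → 0 < s → s < s' → ξ / σ ≤ 2 * s - s' → s' ≤ σ * ξ →
      sphMax u s' - sphMax u s < m₁ → 0 < G →
      (∀ y, 0 ≤ y → sphMax u s - 2 * m₁ < y → y ≤ sphMax u s' → G ≤ g y) →
      (s' - s) ^ p * ((ξ * fdef q b p α σ ξ) ^ (1 / (p - 1))) ^ (p - 1) * G ≤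
        C * ξ * (sphMax u s' - sphMax u s) ^ (p - 1) ∨
      (s' - s) * (ξ * fdef q b p α σ ξ) ^ (1 / (p - 1)) ≤
        C * (sphMax u s' - sphMax u s) * G ^ (-(1 / α)) := by
  obtain ⟨CK, hCK, hK⟩ := subLemma n hn p C₁ C₂ hp hC₁ hC₂
  have hα : 0 < α := by linarith
  refine ⟨max (2 * CK) ((2 * CK) ^ (1 / α)), lt_max_of_lt_left (by positivity), ?_⟩
  intro A b q g u S σ ξ s s' m₁ G hσ hξ hs hss h1 h2 hm hG hGg
  obtain ⟨q0, B, hq0, hB0, hae, hF0, hF1, hF2⟩ := S.F_facts hσ hξ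
  set F := (ξ * fdef q b p α σ ξ) ^ (1 / (p - 1)) with hF
  set ρ := s' - s with hρ
  have hρ0 : 0 < ρ := by linarith
  have hsρ : s + ρ = s' := by rw [hρ]; ring
  set m := sphMax u s' - sphMax u s with hmdef
  have hm0 : 0 ≤ m := by
    have := S.mono hs hss.le
    linarith
  have key : q0 * G * ρ ^ p ≤ CK * (m ^ (p - 1) + B * m ^ α * ρ ^ (p - α)) := by
    have hcont : Continuous (fun y : ℝ => CK * (y ^ (p - 1) + B * y ^ α * ρ ^ (p - α))) := by
      have c1 : Continuous (fun y : ℝ => y ^ (p - 1)) :=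
        continuous_id.rpow_const (fun _ => Or.inr (by linarith))
      have c2 : Continuous (fun y : ℝ => y ^ α) :=
        continuous_id.rpow_const (fun _ => Or.inr hα.le)
      fun_prop
    have hlim : Tendsto (fun y : ℝ => CK * (y ^ (p - 1) + B * y ^ α * ρ ^ (p - α)))
        (nhdsWithin m (Ioi m)) (nhds (CK * (m ^ (p - 1) + B * m ^ α * ρ ^ (p - α)))) :=
      (hcont.tendsto m).mono_left nhdsWithin_le_nhds
    refine ge_of_tendsto hlim ?_
    filter_upwards [Ioo_mem_nhdsGT hm] with y hy
    refine hK S (s := s) (ρ := ρ) (m := y) (B := B) hs hρ0 (hm0.trans_lt hy.1) (by positivity) hB0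
      ?_ ?_ ?_
    · rw [hsρ]
      exact hy.1.le
    · filter_upwards [hae] with x hx hx1 hx2
      refine (hx ⟨?_, ?_⟩).2
      · linarith
      · linarith
    · filter_upwards [hae] with x hx hx1 hx2 hx3
      have h3 := (hx ⟨by linarith, by linarith⟩).1
      have h4 : G ≤ g (u x) := by
        refine hGg _ (S.hu0 x) ?_ ?_
        · linarith [hy.2]
        · exact S.maxprin (by linarith) (by linarith)
      exact mul_le_mul h3 h4 hG.le (S.hq0 x)
  have hmp : 0 ≤ m ^ (p - 1) := by positivity
  rcases le_total (B * m ^ α * ρ ^ (p - α)) (m ^ (p - 1)) with hc | hc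
  · left
    calc ρ ^ p * F ^ (p - 1) * G ≤ ρ ^ p * (ξ * q0) * G := by gcongr
      _ = ξ * (q0 * G * ρ ^ p) := by ring
      _ ≤ ξ * (CK * (m ^ (p - 1) + m ^ (p - 1))) := by
        refine mul_le_mul_of_nonneg_left (key.trans ?_) hξ.le
        gcongr
      _ = 2 * CK * ξ * m ^ (p - 1) := by ring
      _ ≤ _ := by
        gcongr
        exact le_max_left _ _
  · right
    have hGα : 0 < G ^ (-(1 / α)) := by positivity
    suffices h : ρ * F ≤ (2 * CK) ^ (1 / α) * m * G ^ (-(1 / α)) by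
      refine h.trans ?_
      gcongr
      exact le_max_right _ _
    have hρp : ρ ^ p = ρ ^ α * ρ ^ (p - α) := by
      rw [← Real.rpow_add hρ0]
      congr 1
      ring
    have hρpa : 0 < ρ ^ (p - α) := by positivity
    have k1 : q0 * G * ρ ^ α ≤ 2 * CK * B * m ^ α := by
      have : q0 * G * ρ ^ α * ρ ^ (p - α) ≤ 2 * CK * B * m ^ α * ρ ^ (p - α) := by
        calc q0 * G * ρ ^ α * ρ ^ (p - α) = q0 * G * ρ ^ p := by
              rw [hρp]
              ring
          _ ≤ CK * (B * m ^ α * ρ ^ (p - α) + B * m ^ α * ρ ^ (p - α)) := by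
            exact key.trans (by gcongr)
          _ = _ := by ring
      exact le_of_mul_le_mul_right this hρpa
    rcases hB0.lt_or_eq with hB | hB
    · have k2 : F ^ α * G * ρ ^ α ≤ 2 * CK * m ^ α := by
        have : B * (F ^ α * G * ρ ^ α) ≤ B * (2 * CK * m ^ α) := by
          calc B * (F ^ α * G * ρ ^ α) = (F ^ α * B) * G * ρ ^ α := by ring
            _ ≤ q0 * G * ρ ^ α := by gcongr
            _ ≤ _ := k1
            _ = _ := by ring
        exact le_of_mul_le_mul_left this hB
      have k3 := Real.rpow_le_rpow (by positivity) k2 (show 0 ≤ 1 / α by positivity)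
      have hinv : α * (1 / α) = 1 := by field_simp
      rw [Real.mul_rpow (by positivity) (by positivity), Real.mul_rpow (by positivity) (by positivity),
        Real.mul_rpow (by positivity) (by positivity), ← Real.rpow_mul hF0, ← Real.rpow_mul hρ0.le,
        ← Real.rpow_mul hm0, hinv, Real.rpow_one, Real.rpow_one, Real.rpow_one] at k3
      rw [Real.rpow_neg hG.le, ← div_eq_mul_inv, le_div_iff₀ (by positivity)]
      linarith
    · rw [← hB] at k1
      have hq00 : q0 = 0 := by
        have : 0 < G * ρ ^ α := by positivity
        have h5 : q0 * (G * ρ ^ α) ≤ 0 := by linarith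
        exact le_antisymm (nonpos_of_mul_nonpos_left h5 this) hq0
      rw [hq00, mul_zero] at hF1
      have : F = 0 := by
        by_contra hne
        have : 0 < F := lt_of_le_of_ne hF0 (Ne.symm hne)
        have : 0 < F ^ (p - 1) := by positivity
        linarith
      rw [this, mul_zero]
      positivity

/-! ### The one-dimensional argument -/

lemma int_bound {x y c K : ℝ} {W : ℝ → ℝ} (hxy : x ≤ y) 
    (hW : IntervalIntegrable W volume x y) (h : ∀ t ∈ Icc x y, c ≤ K * (y - x) * W t) :
    c ≤ K * ∫ t in x..y, W t := by
  rcases hxy.lt_or_eq with h1 | h1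
  · have hm : 0 < y - x := by linarith
    have h2 : ∫ _t in x..y, c ≤ ∫ t in x..y, K * (y - x) * W t :=
      intervalIntegral.integral_mono_on hxy intervalIntegrable_const (hW.const_mul _) h
    rw [intervalIntegral.integral_const, intervalIntegral.integral_const_mul, smul_eq_mul] at h2
    have h3 : (y - x) * c ≤ (y - x) * (K * ∫ t in x..y, W t) := by
      refine h2.trans (le_of_eq ?_)
      ring
    exact le_of_mul_le_mul_left h3 hm
  · have := h x ⟨le_rfl, hxy⟩
    rw [← h1] at this ⊢
    simpa using this

structure Dat (p σ δ Cp Cg : ℝ) (M F w1 w2 G : ℝ → ℝ) (r1 r2 M1 M2 I : ℝ) : Prop where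
  hp : 1 < p
  hσ : 1 < σ
  hδ : 0 < δ
  hCp : 0 < Cp
  hCg : 0 < Cg
  hr1 : 0 < r1
  hr : r1 ≤ r2
  hM1 : 0 < M1
  hc : ContinuousOn M (Icc r1 r2)
  hm : MonotoneOn M (Icc r1 r2)
  hMa : M1 ≤ M r1
  hMb : M r2 ≤ M2
  hF : ∀ ξ, 0 < ξ → 0 ≤ F ξ
  hw1 : ∀ t ∈ Icc M1 M2, 0 ≤ w1 t
  hw2 : ∀ t ∈ Icc M1 M2, 0 ≤ w2 t
  hw1i : IntegrableOn w1 (Ioc M1 M2)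
  hw2i : IntegrableOn w2 (Ioc M1 M2)
  hI : I = ∫ t in Ioc M1 M2, w1 t
  hG : ∀ t ∈ Icc M1 M2, 0 < G t
  hG1 : ∀ t ∈ Icc M1 M2, (t * G t) ^ (-(1 / p)) ≤ w1 t
  hG2 : ∀ t ∈ Icc M1 M2, G t ^ (-(1 / (p - 1))) ≤ Cg * I ^ (1 / (p - 1)) * w1 t
  hpt : ∀ s s' ξ t, r1 ≤ s → s < s' → s' ≤ r2 → 0 < ξ → ξ / σ ≤ 2 * s - s' → s' ≤ σ * ξ →
    M s' ≤ (1 + δ) * M s → t ∈ Icc (M s) (M s') →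
    (s' - s) ^ p * F ξ ^ (p - 1) * G t ≤ Cp * ξ * (M s' - M s) ^ (p - 1) ∨
    (s' - s) * F ξ ≤ Cp * (M s' - M s) * w2 t

section
variable {p σ δ Cp Cg : ℝ} {M F w1 w2 G : ℝ → ℝ} {r1 r2 M1 M2 I : ℝ}

lemma Dat.mem (D : Dat p σ δ Cp Cg M F w1 w2 G r1 r2 M1 M2 I) {s : ℝ} (h1 : r1 ≤ s) (h2 : s ≤ r2) :
    M s ∈ Icc M1 M2 :=
  ⟨D.hMa.trans (D.hm ⟨le_rfl, D.hr⟩ ⟨h1, h2⟩ h1), (D.hm ⟨h1, h2⟩ ⟨D.hr, le_rfl⟩ h2).trans D.hMb⟩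

lemma Dat.ii (D : Dat p σ δ Cp Cg M F w1 w2 G r1 r2 M1 M2 I) {W : ℝ → ℝ}
    (hW : IntegrableOn W (Ioc M1 M2)) {s s' : ℝ}
    (h1 : r1 ≤ s) (h2 : s ≤ s') (h3 : s' ≤ r2) : IntervalIntegrable W volume (M s) (M s') := by
  have hss : M s ≤ M s' := D.hm ⟨h1, h2.trans h3⟩ ⟨h1.trans h2, h3⟩ h2
  rw [intervalIntegrable_iff_integrableOn_Ioc_of_le hss]
  exact hW.mono_set (Ioc_subset_Ioc (D.mem h1 (h2.trans h3)).1 (D.mem (h1.trans h2) h3).2)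

lemma Dat.I0 (D : Dat p σ δ Cp Cg M F w1 w2 G r1 r2 M1 M2 I) : 0 ≤ I := by
  rw [D.hI]
  exact setIntegral_nonneg measurableSet_Ioc fun t ht => D.hw1 t ⟨ht.1.le, ht.2⟩

/-- the small increment case -/
lemma Dat.type2 (D : Dat p σ δ Cp Cg M F w1 w2 G r1 r2 M1 M2 I) {r R ξ κ : ℝ} (hκ : 0 < κ)
    (h1 : r1 ≤ r) (h2 : r < R) (h3 : R ≤ r2) (hξ : 0 < ξ) (ha1 : ξ / σ ≤ 2 * r - R)
    (ha2 : R ≤ σ * ξ) (hM : M R ≤ (1 + δ) * M r) (hκξ : κ * ξ ≤ R - r) :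
    (R - r) * F ξ ≤ ((Cp / κ) ^ (1 / (p - 1)) * Cg + Cp) *
      ∫ t in (M r)..(M R), (I ^ (1 / (p - 1)) * w1 t + w2 t) := by
  have hp := D.hp
  have hp1 : 0 < p - 1 := by linarith
  have hCp := D.hCp
  have hCg := D.hCg
  have hF := D.hF ξ hξ
  have hI0 := D.I0
  have hrR : M r ≤ M R := D.hm ⟨h1, h2.le.trans h3⟩ ⟨h1.trans h2.le, h3⟩ h2.le
  refine int_bound hrR (D.ii ((D.hw1i.const_mul _).add D.hw2i) h1 h2.le h3) ?_
  intro t ht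
  have htM : t ∈ Icc M1 M2 := Icc_subset_Icc (D.mem h1 (h2.le.trans h3)).1
    (D.mem (h1.trans h2.le) h3).2 ht
  have hm0 : 0 ≤ M R - M r := by linarith
  have hρ : 0 < R - r := by linarith
  have hw1 := D.hw1 t htM
  have hw2 := D.hw2 t htM
  have hG := D.hG t htM
  have hII : 0 ≤ I ^ (1 / (p - 1)) := by positivity
  set m := M R - M r
  set ρ := R - r
  have hX : 0 ≤ (Cp / κ) ^ (1 / (p - 1)) * Cg := by positivity
  rcases D.hpt r R ξ t h1 h2 h3 hξ ha1 ha2 hM ht with h | h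
  · change ρ ^ p * F ξ ^ (p - 1) * G t ≤ Cp * ξ * m ^ (p - 1) at h
    have e1 : ρ ^ p = ρ ^ (p - 1) * ρ := (rpow_pred_mul hρ.le (by linarith)).symm
    have k1 : (ρ * F ξ) ^ (p - 1) * G t ≤ Cp / κ * m ^ (p - 1) := by
      have : ρ * ((ρ * F ξ) ^ (p - 1) * G t) ≤ ρ * (Cp / κ * m ^ (p - 1)) := by
        calc ρ * ((ρ * F ξ) ^ (p - 1) * G t) = ρ ^ p * F ξ ^ (p - 1) * G t := by
              rw [Real.mul_rpow hρ.le hF, e1]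
              ring
          _ ≤ _ := h
          _ = (κ * ξ) * (Cp / κ * m ^ (p - 1)) := by field_simp
          _ ≤ ρ * (Cp / κ * m ^ (p - 1)) := by gcongr
      exact le_of_mul_le_mul_left this hρ
    obtain ⟨z, hz⟩ : ∃ z, z = ρ * F ξ := ⟨_, rfl⟩
    have hz0 : 0 ≤ z := by
      rw [hz]
      positivity
    rw [← hz] at k1 ⊢
    have k2 := Real.rpow_le_rpow (by positivity) k1 (show 0 ≤ 1 / (p - 1) by positivity)
    have hinv : (p - 1) * (1 / (p - 1)) = 1 := by field_simp
    rw [Real.mul_rpow (by positivity) hG.le, Real.mul_rpow (by positivity) (by positivity),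
      ← Real.rpow_mul (by positivity), ← Real.rpow_mul hm0, hinv, Real.rpow_one,
      Real.rpow_one] at k2
    have k3 : ρ * F ξ ≤ (Cp / κ) ^ (1 / (p - 1)) * m * G t ^ (-(1 / (p - 1))) := by
      rw [← hz, Real.rpow_neg hG.le, ← div_eq_mul_inv, le_div_iff₀ (by positivity)]
      exact k2
    rw [← hz] at k3
    calc z ≤ _ := k3
      _ ≤ (Cp / κ) ^ (1 / (p - 1)) * m * (Cg * I ^ (1 / (p - 1)) * w1 t) := by
        have := D.hG2 t htM
        gcongr
      _ = ((Cp / κ) ^ (1 / (p - 1)) * Cg) * m * (I ^ (1 / (p - 1)) * w1 t) := by ring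
      _ ≤ _ := by
        gcongr
        · linarith
        · linarith
  · calc ρ * F ξ ≤ _ := h
      _ ≤ _ := by
        gcongr
        · linarith
        · have : 0 ≤ I ^ (1 / (p - 1)) * w1 t := by positivity
          linarith

/-- the large increment case -/
lemma Dat.type1 (D : Dat p σ δ Cp Cg M F w1 w2 G r1 r2 M1 M2 I) {r R ξ κ lam K1 : ℝ} (hκ : 0 < κ)
    (hlam : 1 < lam) (hlam2 : lam ^ 2 = 1 + δ)
    (hK1 : K1 = (Cp / ((lam - 1) / lam ^ 2)) ^ (1 / p) + Cp)
    (h1 : r1 ≤ r) (h2 : r < R) (h3 : R ≤ r2) (hξ : 0 < ξ) (ha1 : ξ / σ ≤ 2 * r - R)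
    (ha2 : R ≤ σ * ξ) (hM : lam * M r ≤ M R) (hκξ : κ * ξ ≤ R - r) (hRξ : R - r ≤ ξ) :
    (R - r) * F ξ ≤ (2 * K1 / κ + (2 * K1 / κ) ^ (p / (p - 1))) *
      ∫ t in (M r)..(M R), (I ^ (1 / (p - 1)) * w1 t + w2 t) := by
  have hp := D.hp
  have hp1 : 0 < p - 1 := by linarith
  have hp0 : 0 < p := by linarith
  have hCp := D.hCp
  have hF := D.hF ξ hξ
  have hI0 := D.I0
  have hν : 0 < (lam - 1) / lam ^ 2 := div_pos (by linarith) (by positivity)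
  set ν := (lam - 1) / lam ^ 2 with hνdef
  have hrR : M r ≤ M R := D.hm ⟨h1, h2.le.trans h3⟩ ⟨h1.trans h2.le, h3⟩ h2.le
  set y := ξ * F ξ with hy
  have hy0 : 0 ≤ y := by positivity
  have hyp : 0 ≤ y ^ (1 / p) := by positivity
  have hZ : IntegrableOn (fun t => y ^ (1 / p) * w1 t + w2 t) (Ioc M1 M2) :=
    (D.hw1i.const_mul _).add D.hw2i
  have hchain : (R - r) * F ξ ≤ K1 * ∫ t in (M r)..(M R), (y ^ (1 / p) * w1 t + w2 t) := by
    refine chain_lemma (h := M) (lam := lam) (a := r) (b := R)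
      (Q := fun s s' => (s' - s) * F ξ ≤ K1 * ∫ t in (M s)..(M s'), (y ^ (1 / p) * w1 t + w2 t))
      hlam h2.le (D.hc.mono (Icc_subset_Icc h1 h3)) (D.hm.mono (Icc_subset_Icc h1 h3))
      (D.hM1.trans_le (D.mem h1 (h2.le.trans h3)).1) ?_ ?_ hM
    · intro s s' s'' g1 g2 g3 g4 q1 q2
      rw [← intervalIntegral.integral_add_adjacent_intervals
        (D.ii hZ (h1.trans g1) g2 (g3.trans (g4.trans h3)))
        (D.ii hZ (h1.trans (g1.trans g2)) g3 (g4.trans h3)), mul_add]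
      linarith
    · intro s s' g1 g2 g3 g4 g5
      have gs : r1 ≤ s := h1.trans g1
      have gs' : s' ≤ r2 := g3.trans h3
      have hMs : 0 < M s := D.hM1.trans_le (D.mem gs (g2.trans gs')).1
      have hMss : M s < M s' := by nlinarith
      have hss : s < s' := by
        rcases g2.lt_or_eq with h | h
        · exact h
        · rw [h] at hMss
          exact absurd hMss (lt_irrefl _)
      refine int_bound hMss.le (D.ii hZ gs g2 gs') ?_
      intro t ht
      have htM : t ∈ Icc M1 M2 := Icc_subset_Icc (D.mem gs (g2.trans gs')).1
        (D.mem (gs.trans g2) gs').2 ht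
      have ht0 : 0 < t := D.hM1.trans_le htM.1
      have hw1 := D.hw1 t htM
      have hw2 := D.hw2 t htM
      have hG := D.hG t htM
      have hm0 : 0 < M s' - M s := by linarith
      have hρ : 0 < s' - s := by linarith
      have hνt : ν * t ≤ M s' - M s := by
        have e1 : t ≤ lam ^ 2 * M s := ht.2.trans g5
        have e2 : ν * lam ^ 2 = lam - 1 := by
          rw [hνdef]
          field_simp
        calc ν * t ≤ ν * (lam ^ 2 * M s) := by gcongr
          _ = (lam - 1) * M s := by rw [← e2]; ring
          _ ≤ _ := by linarith
      rw [hK1]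
      have hX : 0 ≤ (Cp / ν) ^ (1 / p) := by positivity
      rcases D.hpt s s' ξ t gs hss gs' hξ (by linarith) (by linarith) (by rw [← hlam2]; exact g5) ht
        with h | h
      · set m := M s' - M s
        set ρ := s' - s
        have k1 : (ρ * F ξ) ^ p * (t * G t) ≤ Cp / ν * y * m ^ p := by
          have e1 : F ξ ^ p = F ξ ^ (p - 1) * F ξ := (rpow_pred_mul hF hp0).symm
          have e2 : m ^ p = m ^ (p - 1) * m := (rpow_pred_mul hm0.le hp0).symm
          calc (ρ * F ξ) ^ p * (t * G t) = (ρ ^ p * F ξ ^ (p - 1) * G t) * (F ξ * t) := by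
                rw [Real.mul_rpow hρ.le hF, e1]
                ring
            _ ≤ (Cp * ξ * m ^ (p - 1)) * (F ξ * t) := by gcongr
            _ = Cp / ν * y * m ^ (p - 1) * (ν * t) := by
              rw [hy]
              field_simp
            _ ≤ Cp / ν * y * m ^ (p - 1) * m := by gcongr
            _ = _ := by
              rw [e2]
              ring
        obtain ⟨z, hz⟩ : ∃ z, z = ρ * F ξ := ⟨_, rfl⟩
        obtain ⟨v, hv⟩ : ∃ v, v = t * G t := ⟨_, rfl⟩
        have hz0 : 0 ≤ z := by
          rw [hz]
          positivity
        have hv0 : 0 < v := by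
          rw [hv]
          positivity
        have hG1 := D.hG1 t htM
        rw [← hv] at hG1
        rw [← hz, ← hv] at k1
        rw [← hz]
        have k2 := Real.rpow_le_rpow (by positivity) k1 (show 0 ≤ 1 / p by positivity)
        have hinv : p * (1 / p) = 1 := by field_simp
        rw [Real.mul_rpow (by positivity) (by positivity),
          Real.mul_rpow (by positivity) (by positivity),
          Real.mul_rpow (by positivity) (by positivity),
          ← Real.rpow_mul (by positivity), ← Real.rpow_mul hm0.le, hinv, Real.rpow_one,
          Real.rpow_one] at k2
        have k3 : z ≤ (Cp / ν) ^ (1 / p) * y ^ (1 / p) * m * v ^ (-(1 / p)) := by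
          rw [Real.rpow_neg (by positivity), ← div_eq_mul_inv, le_div_iff₀ (by positivity)]
          exact k2
        calc z ≤ _ := k3
          _ ≤ (Cp / ν) ^ (1 / p) * y ^ (1 / p) * m * w1 t := by
            gcongr
          _ = (Cp / ν) ^ (1 / p) * m * (y ^ (1 / p) * w1 t) := by ring
          _ ≤ _ := by
            gcongr
            · linarith
            · linarith
      · calc (s' - s) * F ξ ≤ _ := h
          _ ≤ _ := by
            gcongr
            · linarith
            · have : 0 ≤ y ^ (1 / p) * w1 t := by positivity
              linarith
  have hw1i := D.ii D.hw1i h1 h2.le h3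
  have hw2i := D.ii D.hw2i h1 h2.le h3
  rw [intervalIntegral.integral_add (hw1i.const_mul _) hw2i, intervalIntegral.integral_const_mul]
    at hchain
  rw [intervalIntegral.integral_add (hw1i.const_mul _) hw2i, intervalIntegral.integral_const_mul]
  have hsub : ∀ t ∈ Icc (M r) (M R), t ∈ Icc M1 M2 := fun t ht =>
    Icc_subset_Icc (D.mem h1 (h2.le.trans h3)).1 (D.mem (h1.trans h2.le) h3).2 ht
  have hIj0 : 0 ≤ ∫ t in (M r)..(M R), w1 t :=
    intervalIntegral.integral_nonneg hrR fun t ht => D.hw1 t (hsub t ht)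
  have hJj0 : 0 ≤ ∫ t in (M r)..(M R), w2 t :=
    intervalIntegral.integral_nonneg hrR fun t ht => D.hw2 t (hsub t ht)
  have hIjI : ∫ t in (M r)..(M R), w1 t ≤ I := by
    rw [intervalIntegral.integral_of_le hrR, D.hI]
    refine setIntegral_mono_set D.hw1i ?_ (Ioc_subset_Ioc (D.mem h1 (h2.le.trans h3)).1
      (D.mem (h1.trans h2.le) h3).2).eventuallyLE
    filter_upwards [ae_restrict_mem measurableSet_Ioc] with t ht using D.hw1 t ⟨ht.1.le, ht.2⟩
  set Ij := ∫ t in (M r)..(M R), w1 t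
  set Jj := ∫ t in (M r)..(M R), w2 t
  have hK10 : 0 < K1 := by
    rw [hK1]
    positivity
  set D0 := 2 * K1 / κ with hD0
  have hD00 : 0 < D0 := by positivity
  have hle : (R - r) * F ξ ≤ y := by
    rw [hy]
    gcongr
  refine hle.trans ?_
  have hymain : κ * y ≤ K1 * (y ^ (1 / p) * Ij + Jj) := by
    refine le_trans ?_ hchain
    rw [hy, ← mul_assoc]
    gcongr
  have hII : 0 ≤ I ^ (1 / (p - 1)) := by positivity
  have hDp : 0 ≤ D0 ^ (p / (p - 1)) := by positivity
  rcases le_total (y ^ (1 / p) * Ij) Jj with hc | hc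
  · have : y ≤ D0 * Jj := by
      rw [hD0, div_mul_eq_mul_div, le_div_iff₀ hκ]
      nlinarith
    refine this.trans ?_
    have : 0 ≤ I ^ (1 / (p - 1)) * Ij := by positivity
    gcongr
    · linarith
    · linarith
  · have hyI : y ≤ D0 * (y ^ (1 / p) * Ij) := by
      rw [hD0, div_mul_eq_mul_div, le_div_iff₀ hκ]
      nlinarith
    have hfin : y ≤ D0 ^ (p / (p - 1)) * (I ^ (1 / (p - 1)) * Ij) := by
      rcases hy0.lt_or_eq with hyp0 | hyp0
      · have e1 : y = y ^ ((p - 1) / p) * y ^ (1 / p) := by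
          rw [← Real.rpow_add hyp0]
          conv_lhs => rw [← Real.rpow_one y]
          congr 1
          field_simp
          ring
        have hyp' : 0 < y ^ (1 / p) := by positivity
        have k1 : y ^ ((p - 1) / p) ≤ D0 * Ij := by
          have : y ^ ((p - 1) / p) * y ^ (1 / p) ≤ (D0 * Ij) * y ^ (1 / p) := by
            rw [← e1]
            linarith
          exact le_of_mul_le_mul_right this hyp'
        have k2 := Real.rpow_le_rpow (by positivity) k1 (show 0 ≤ p / (p - 1) by positivity)
        rw [← Real.rpow_mul hy0, show (p - 1) / p * (p / (p - 1)) = 1 by field_simp,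
          Real.rpow_one, Real.mul_rpow hD00.le hIj0] at k2
        refine k2.trans ?_
        have e2 : Ij ^ (p / (p - 1)) = Ij ^ (1 / (p - 1)) * Ij := by
          rw [← Real.rpow_add_one' hIj0 (by positivity)]
          congr 1
          field_simp
          ring
        rw [e2]
        gcongr
      · rw [← hyp0]
        positivity
    refine hfin.trans ?_
    gcongr
    · linarith
    · linarith

end

/-! ### The outer chain -/

set_option maxHeartbeats 1000000 in
lemma Dat.final_exists (p σ δ Cp Cg : ℝ) (hp : 1 < p) (hσ : 1 < σ) (hδ : 0 < δ) (hCp : 0 < Cp)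
    (hCg : 0 < Cg) : ∃ C : ℝ, 0 < C ∧ ∀ {M F w1 w2 G : ℝ → ℝ} {r1 r2 M1 M2 I : ℝ},
      Dat p σ δ Cp Cg M F w1 w2 G r1 r2 M1 M2 I → σ * r1 ≤ r2 →
      ∫ ξ in Ioc r1 r2, F ξ ≤ C * (I ^ (1 / (p - 1)) * I + ∫ t in Ioc M1 M2, w2 t) := by
  have hp1 : 0 < p - 1 := by linarith
  obtain ⟨τ1, hτ1⟩ : ∃ τ1, τ1 = 2 * σ / (1 + σ) := ⟨_, rfl⟩
  have htau_a : 1 < τ1 := by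
    rw [hτ1, lt_div_iff₀ (by linarith)]
    linarith
  have htau_b : τ1 < 2 := by
    rw [hτ1, div_lt_iff₀ (by linarith)]
    linarith
  have htau_c : τ1 ≤ σ := by
    rw [hτ1, div_le_iff₀ (by linarith)]
    nlinarith
  have htau_d : τ1 / σ = 2 - τ1 := by
    rw [hτ1]
    field_simp
    ring
  obtain ⟨τ0, hτ0, htau_sq⟩ : ∃ τ0, 1 < τ0 ∧ τ0 ^ 2 = τ1 :=
    ⟨√τ1, by rw [Real.lt_sqrt (by norm_num)]; simpa using htau_a, Real.sq_sqrt (by linarith)⟩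
  have hτ0σ : τ0 ≤ σ := by nlinarith
  obtain ⟨lam, hlam, hlam2⟩ : ∃ lam, 1 < lam ∧ lam ^ 2 = 1 + δ :=
    ⟨√(1 + δ), by rw [Real.lt_sqrt (by norm_num)]; simpa using hδ, Real.sq_sqrt (by linarith)⟩
  obtain ⟨κ, hκ⟩ : ∃ κ, κ = 1 - 1 / τ0 := ⟨_, rfl⟩
  have hκ0 : 0 < κ := by
    rw [hκ, sub_pos, div_lt_one (by linarith)]
    exact hτ0
  obtain ⟨K1, hK1⟩ : ∃ K1, K1 = (Cp / ((lam - 1) / lam ^ 2)) ^ (1 / p) + Cp := ⟨_, rfl⟩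
  have hK10 : 0 < K1 := by
    rw [hK1]
    have : 0 < (lam - 1) / lam ^ 2 := div_pos (by linarith) (by positivity)
    positivity
  obtain ⟨Ca, hCa⟩ : ∃ Ca, Ca = (Cp / κ) ^ (1 / (p - 1)) * Cg + Cp := ⟨_, rfl⟩
  obtain ⟨Cb, hCb⟩ : ∃ Cb, Cb = 2 * K1 / κ + (2 * K1 / κ) ^ (p / (p - 1)) := ⟨_, rfl⟩
  have hCa0 : 0 < Ca := by
    rw [hCa]
    positivity
  have hCb0 : 0 < Cb := by
    rw [hCb]
    positivity
  refine ⟨max Ca Cb, lt_max_of_lt_left hCa0, ?_⟩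
  intro M F w1 w2 G r1 r2 M1 M2 I D hσr
  have hI0 := D.I0
  have hII : 0 ≤ I ^ (1 / (p - 1)) := by positivity
  have hr1 := D.hr1
  have hMM : M1 ≤ M2 := D.hMa.trans ((D.mem le_rfl D.hr).2)
  have hWi : IntegrableOn (fun t => I ^ (1 / (p - 1)) * w1 t + w2 t) (Ioc M1 M2) :=
    (D.hw1i.const_mul _).add D.hw2i
  have hW0 : ∀ t ∈ Icc M1 M2, 0 ≤ I ^ (1 / (p - 1)) * w1 t + w2 t := fun t ht =>
    add_nonneg (mul_nonneg hII (D.hw1 t ht)) (D.hw2 t ht)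
  have hWtot : I ^ (1 / (p - 1)) * I + ∫ t in Ioc M1 M2, w2 t =
      ∫ t in Ioc M1 M2, (I ^ (1 / (p - 1)) * w1 t + w2 t) := by
    rw [integral_add (D.hw1i.const_mul _) D.hw2i, integral_const_mul, ← D.hI]
  rw [hWtot]
  obtain ⟨W, hW⟩ : ∃ W : ℝ → ℝ, W = fun t => I ^ (1 / (p - 1)) * w1 t + w2 t := ⟨_, rfl⟩
  have hWi' : IntegrableOn W (Ioc M1 M2) := hW ▸ hWi
  have hW0' : ∀ t ∈ Icc M1 M2, 0 ≤ W t := by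
    rw [hW]
    exact hW0
  have hWint : 0 ≤ ∫ t in Ioc M1 M2, W t :=
    setIntegral_nonneg measurableSet_Ioc fun t ht => hW0' t ⟨ht.1.le, ht.2⟩
  have hCm : 0 < max Ca Cb := lt_max_of_lt_left hCa0
  change _ ≤ max Ca Cb * ∫ t in Ioc M1 M2, (fun t => I ^ (1 / (p - 1)) * w1 t + w2 t) t
  rw [← hW]
  by_cases hFi : IntegrableOn F (Ioc r1 r2)
  swap
  · rw [integral_undef hFi]
    positivity
  have hFii : ∀ s s', r1 ≤ s → s ≤ s' → s' ≤ r2 → IntervalIntegrable F volume s s' := by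
    intro s s' g1 g2 g3
    rw [intervalIntegrable_iff_integrableOn_Ioc_of_le g2]
    exact hFi.mono_set (Ioc_subset_Ioc g1 g3)
  have hmain : ∫ ξ in r1..r2, F ξ ≤ max Ca Cb * ∫ t in (M r1)..(M r2), W t := by
    refine chain_lemma (h := fun x => x) (lam := τ0) (a := r1) (b := r2)
      (Q := fun s s' => ∫ ξ in s..s', F ξ ≤ max Ca Cb * ∫ t in (M s)..(M s'), W t)
      hτ0 D.hr continuousOn_id (fun x _ y _ h => h) hr1 ?_ ?_
      ((mul_le_mul_of_nonneg_right hτ0σ hr1.le).trans hσr)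
    · intro s s' s'' g1 g2 g3 g4 q1 q2
      rw [← intervalIntegral.integral_add_adjacent_intervals
        (D.ii hWi' g1 g2 (g3.trans g4))
        (D.ii hWi' (g1.trans g2) g3 g4), mul_add,
        ← intervalIntegral.integral_add_adjacent_intervals
        (hFii s s' g1 g2 (g3.trans g4)) (hFii s' s'' (g1.trans g2) g3 g4)]
      linarith
    · intro r R g1 g2 g3 g4 g5
      rw [htau_sq] at g5
      have hr0 : 0 < r := by linarith
      have hrR : r < R := (lt_mul_of_one_lt_left hr0 hτ0).trans_le g4
      have hMr : 0 < M r := D.hM1.trans_le (D.mem g1 (g2.trans g3)).1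
      have hMrR : M r ≤ M R := D.hm ⟨g1, g2.trans g3⟩ ⟨g1.trans g2, g3⟩ g2
      have hWr : 0 ≤ ∫ t in (M r)..(M R), W t :=
        intervalIntegral.integral_nonneg hMrR fun t ht => hW0' t
          ⟨(D.mem g1 (g2.trans g3)).1.trans ht.1, ht.2.trans (D.mem (g1.trans g2) g3).2⟩
      obtain ⟨X, hX⟩ : ∃ X, X = max Ca Cb * ∫ t in (M r)..(M R), W t := ⟨_, rfl⟩
      have hpt : ∀ ξ ∈ Ioo r R, F ξ ≤ X / (R - r) := by
        intro ξ hξ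
        have hξ0 : 0 < ξ := hr0.trans hξ.1
        rw [le_div_iff₀ (by linarith), mul_comm]
        have ha0 : κ * ξ ≤ R - r := by
          have : κ * R ≤ R - r := by
            have h1 : r ≤ R / τ0 := by
              rw [le_div_iff₀ (by linarith)]
              linarith
            rw [hκ]
            have h2 : (1 - 1 / τ0) * R = R - R / τ0 := by ring
            linarith
          have : κ * ξ ≤ κ * R := mul_le_mul_of_nonneg_left hξ.2.le hκ0.le
          linarith
        have ha1 : ξ / σ ≤ 2 * r - R := by
          have h1 : ξ / σ ≤ (τ1 * r) / σ := by
            gcongr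
            linarith [hξ.2]
          have h2 : τ1 * r / σ = (2 - τ1) * r := by
            rw [← htau_d]
            ring
          linarith
        have ha2 : R ≤ σ * ξ := by
          have h1 : τ1 * r ≤ σ * r := by gcongr
          have h2 : σ * r ≤ σ * ξ := by
            have := hξ.1.le
            gcongr
          linarith
        have ha3 : R - r ≤ ξ := by
          have h1 := hξ.1
          have h2 : τ1 * r ≤ 2 * r := mul_le_mul_of_nonneg_right htau_b.le hr0.le
          linarith
        rcases le_total (M R) (lam * M r) with hc | hc
        · have hc' : M R ≤ (1 + δ) * M r := by
            have h1 : lam ≤ 1 + δ := by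
              rw [← hlam2, sq]
              exact le_mul_of_one_le_left (by linarith) hlam.le
            exact hc.trans (mul_le_mul_of_nonneg_right h1 hMr.le)
          have := D.type2 hκ0 g1 hrR g3 hξ0 ha1 ha2 hc' ha0
          rw [← hCa] at this
          rw [hX, hW]
          refine this.trans ?_
          rw [hW] at hWr
          exact mul_le_mul_of_nonneg_right (le_max_left _ _) hWr
        · have := D.type1 hκ0 hlam hlam2 hK1 g1 hrR g3 hξ0 ha1 ha2 hc ha0 ha3
          rw [← hCb] at this
          rw [hX, hW]
          refine this.trans ?_
          rw [hW] at hWr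
          exact mul_le_mul_of_nonneg_right (le_max_right _ _) hWr
      rw [← hX]
      have := intervalIntegral.integral_mono_on_of_le_Ioo g2 (hFii r R g1 g2 g3)
        (intervalIntegrable_const (c := X / (R - r))) hpt
      refine this.trans (le_of_eq ?_)
      have : R - r ≠ 0 := by linarith
      rw [intervalIntegral.integral_const, smul_eq_mul]
      field_simp
  rw [intervalIntegral.integral_of_le D.hr] at hmain
  refine hmain.trans (mul_le_mul_of_nonneg_left ?_ hCm.le)
  rw [intervalIntegral.integral_of_le (D.hm ⟨le_rfl, D.hr⟩ ⟨D.hr, le_rfl⟩ D.hr)]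
  refine setIntegral_mono_set hWi' ?_ (Ioc_subset_Ioc D.hMa D.hMb).eventuallyLE
  filter_upwards [ae_restrict_mem measurableSet_Ioc] with t ht using hW0' t ⟨ht.1.le, ht.2⟩

/-! ### Final assembly -/

lemma w_integrable {g : ℝ → ℝ} (hg : ContinuousOn g (Ici 0)) (hg0 : ∀ t ∈ Ici (0 : ℝ), 0 ≤ g t)
    (hgp : ∀ t : ℝ, 0 < t → 0 < g t) {θ M₁ M₂ e : ℝ} (hθ : 1 < θ) (hM₁ : 0 < M₁) (hM : M₁ ≤ M₂)
    (he : 0 < e) {k : ℝ → ℝ} (hk : Measurable k) (hk1 : ∀ t ∈ Icc M₁ M₂, min 1 M₁ ≤ k t) :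
    IntegrableOn (fun t => (ginf g θ t * k t) ^ (-e)) (Ioc M₁ M₂) := by
  obtain ⟨c, K, hc, hb⟩ := ginf_bounds hg hg0 hgp hθ hM₁ hM
  have hmin : 0 < min 1 M₁ := lt_min one_pos hM₁
  have hmeas : Measurable fun t => ((Ioi (0 : ℝ)).indicator (ginf g θ) t * k t) ^ (-e) :=
    ((ginf_measurable hg0 hθ).mul hk).pow_const _
  have hbd : ∀ t ∈ Icc M₁ M₂, 0 ≤ (ginf g θ t * k t) ^ (-e) ∧
      (ginf g θ t * k t) ^ (-e) ≤ (c * min 1 M₁) ^ (-e) := by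
    intro t ht
    have h1 := (hb t ht).1
    have h2 := hk1 t ht
    have h3 : c * min 1 M₁ ≤ ginf g θ t * k t := mul_le_mul h1 h2 hmin.le (hc.le.trans h1)
    have h4 : 0 < c * min 1 M₁ := by positivity
    exact ⟨Real.rpow_nonneg (h4.le.trans h3) _,
      Real.rpow_le_rpow_of_nonpos h4 h3 (by linarith)⟩
  have heq : EqOn (fun t => ((Ioi (0 : ℝ)).indicator (ginf g θ) t * k t) ^ (-e))
      (fun t => (ginf g θ t * k t) ^ (-e)) (Ioc M₁ M₂) := by
    intro t ht
    have : t ∈ Ioi (0 : ℝ) := hM₁.trans ht.1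
    simp only [indicator_of_mem this]
  rw [← integrableOn_congr_fun heq measurableSet_Ioc]
  refine Measure.integrableOn_of_bounded (M := (c * min 1 M₁) ^ (-e)) measure_Ioc_lt_top.ne
    hmeas.aestronglyMeasurable ?_
  filter_upwards [ae_restrict_mem measurableSet_Ioc] with t ht
  have hee := heq ht
  simp only at hee
  rw [hee, Real.norm_eq_abs, abs_of_nonneg (hbd t ⟨ht.1.le, ht.2⟩).1]
  exact (hbd t ⟨ht.1.le, ht.2⟩).2

/-- comparison of the mean value with the whole integral -/
lemma hG2_lemma {g : ℝ → ℝ} (hg : ContinuousOn g (Ici 0)) (hg0 : ∀ t ∈ Ici (0 : ℝ), 0 ≤ g t)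
    (hgp : ∀ t : ℝ, 0 < t → 0 < g t) {θ θ1 M₁ M₂ p I : ℝ} (hθ1 : 1 < θ1) (hθθ : θ1 * θ1 = θ)
    (hM₁ : 0 < M₁) (hM : M₁ ≤ M₂) (hθM : θ * M₁ ≤ M₂) (hp : 1 < p)
    (hwi : IntegrableOn (fun t => (ginf g θ t * t) ^ (-(1 / p))) (Ioc M₁ M₂))
    (hI : I = ∫ t in Ioc M₁ M₂, (ginf g θ t * t) ^ (-(1 / p)))
    {t : ℝ} (ht : t ∈ Icc M₁ M₂) :
    ginf g θ1 t ^ (-(1 / (p - 1))) ≤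
      ((1 - 1 / θ1) * θ1 ^ (-(1 / p))) ^ (-(1 / (p - 1))) * I ^ (1 / (p - 1)) *
        (ginf g θ t * t) ^ (-(1 / p)) := by
  have hp1 : 0 < p - 1 := by linarith
  have hp0 : 0 < p := by linarith
  have hθ : 1 < θ := by nlinarith
  have ht0 : 0 < t := hM₁.trans_le ht.1
  obtain ⟨c, K, hc, hb⟩ := ginf_bounds hg hg0 hgp hθ hM₁ hM
  have hcomp : ∀ s, t / θ1 ≤ s → s ≤ θ1 * t → ginf g θ s ≤ ginf g θ1 t := by
    intro s h1 h2
    have hs : 0 < s := lt_of_lt_of_le (by positivity) h1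
    refine ginf_le_ginf hg0 hθ hθ1 ht0 hs ?_ ?_
    · rw [← hθθ, div_le_div_iff₀ (by positivity) (by positivity)]
      nlinarith
    · rw [div_le_iff₀ (by positivity)] at h1
      rw [← hθθ]
      nlinarith
  have htt : ginf g θ t ≤ ginf g θ1 t := hcomp t (div_le_self ht0.le hθ1.le) (by nlinarith)
  obtain ⟨G, hGdef⟩ : ∃ G, G = ginf g θ1 t := ⟨_, rfl⟩
  have hgt := (hb t ht).1
  have hG : 0 < G := by
    rw [hGdef]
    linarith
  rw [← hGdef] at htt hcomp ⊢
  have hw : (G * t) ^ (-(1 / p)) ≤ (ginf g θ t * t) ^ (-(1 / p)) :=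
    Real.rpow_le_rpow_of_nonpos (mul_pos (by linarith) ht0)
      (mul_le_mul_of_nonneg_right htt ht0.le) (by
        have : 0 < 1 / p := by positivity
        linarith)
  have hneg : -(1 / p) ≤ 0 := by
    have : 0 < 1 / p := by positivity
    linarith
  have hη : 0 < 1 - 1 / θ1 := by
    rw [sub_pos, div_lt_one (by linarith)]
    exact hθ1
  have hIlow : (1 - 1 / θ1) * t * (θ1 * (G * t)) ^ (-(1 / p)) ≤ I := by
    have hgen : ∀ x y, M₁ ≤ x → x ≤ y → y ≤ M₂ → t / θ1 ≤ x → y ≤ θ1 * t →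
        (1 - 1 / θ1) * t ≤ y - x → (1 - 1 / θ1) * t * (θ1 * (G * t)) ^ (-(1 / p)) ≤ I := by
      intro x y h1 h2 h3 h4 h5 h6
      have hpos : 0 ≤ (θ1 * (G * t)) ^ (-(1 / p)) := by positivity
      have k1 : ∫ s in Ioc x y, (ginf g θ s * s) ^ (-(1 / p)) ≤ I := by
        rw [hI]
        refine setIntegral_mono_set hwi ?_ (Ioc_subset_Ioc h1 h3).eventuallyLE
        filter_upwards [ae_restrict_mem measurableSet_Ioc] with s hs
        have := (hb s ⟨hs.1.le, hs.2⟩).1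
        exact Real.rpow_nonneg (mul_nonneg (by linarith) (by linarith [hs.1])) _
      have k2 : ∫ _s in Ioc x y, (θ1 * (G * t)) ^ (-(1 / p)) ≤
          ∫ s in Ioc x y, (ginf g θ s * s) ^ (-(1 / p)) := by
        refine setIntegral_mono_on (integrableOn_const measure_Ioc_lt_top.ne)
          (hwi.mono_set (Ioc_subset_Ioc h1 h3)) measurableSet_Ioc ?_
        intro s hs
        have hs0 : 0 < s := by linarith [hs.1]
        have hgs := (hb s ⟨h1.trans hs.1.le, hs.2.trans h3⟩).1
        refine Real.rpow_le_rpow_of_nonpos (mul_pos (by linarith) hs0) ?_ hneg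
        calc ginf g θ s * s ≤ G * (θ1 * t) :=
              mul_le_mul (hcomp s (h4.trans hs.1.le) (hs.2.trans h5)) (hs.2.trans h5) hs0.le hG.le
          _ = _ := by ring
      rw [setIntegral_const, smul_eq_mul, Real.volume_real_Ioc_of_le h2] at k2
      have := mul_le_mul_of_nonneg_right h6 hpos
      linarith
    have hinv : t / θ1 * θ1 = t := by field_simp
    rcases le_total (θ1 * M₁) t with h | h
    · refine hgen (t / θ1) t ?_ (div_le_self ht0.le hθ1.le) ht.2 le_rfl (by nlinarith) ?_
      · rw [le_div_iff₀ (by linarith)]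
        linarith
      · have : (1 - 1 / θ1) * t = t - t / θ1 := by ring
        linarith
    · refine hgen t (θ1 * t) ht.1 (by nlinarith) ?_ (div_le_self ht0.le hθ1.le) le_rfl ?_
      · rw [← hθθ] at hθM
        nlinarith
      · have e1 : (1 - 1 / θ1) * t = t - t / θ1 := by ring
        have e2 : θ1 * t - t = θ1 * (t - t / θ1) := by
          field_simp
        have e3 : 0 ≤ t - t / θ1 := by
          have := div_le_self ht0.le hθ1.le
          linarith
        rw [e1, e2]
        nlinarith
  have hD : 0 < (1 - 1 / θ1) * θ1 ^ (-(1 / p)) := by positivity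
  rw [Real.mul_rpow (by linarith) (by positivity)] at hIlow
  obtain ⟨D, hDdef⟩ : ∃ D, D = (1 - 1 / θ1) * θ1 ^ (-(1 / p)) := ⟨_, rfl⟩
  have hI2 : D * (t * (G * t) ^ (-(1 / p))) ≤ I := by
    rw [hDdef]
    refine le_trans (le_of_eq ?_) hIlow
    ring
  rw [← hDdef] at hD ⊢
  have hI3 := Real.rpow_le_rpow (by positivity) hI2 (show 0 ≤ 1 / (p - 1) by positivity)
  have hmul := mul_le_mul hI3 hw (by positivity) (Real.rpow_nonneg (by
    refine le_trans ?_ hI2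
    positivity) _)
  have e : (D * (t * (G * t) ^ (-(1 / p)))) ^ (1 / (p - 1)) * (G * t) ^ (-(1 / p)) =
      D ^ (1 / (p - 1)) * G ^ (-(1 / (p - 1))) := by
    rw [Real.mul_rpow hD.le (by positivity), mul_assoc]
    congr 1
    rw [Real.mul_rpow ht0.le (by positivity), ← Real.rpow_mul (by positivity),
      Real.mul_rpow hG.le ht0.le, Real.mul_rpow hG.le ht0.le]
    have e1 : t ^ (1 / (p - 1)) * (G ^ (-(1 / p) * (1 / (p - 1))) * t ^ (-(1 / p) * (1 / (p - 1)))) *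
        (G ^ (-(1 / p)) * t ^ (-(1 / p))) =
        (G ^ (-(1 / p) * (1 / (p - 1))) * G ^ (-(1 / p))) *
        (t ^ (1 / (p - 1)) * t ^ (-(1 / p) * (1 / (p - 1))) * t ^ (-(1 / p))) := by ring
    rw [e1, ← Real.rpow_add hG, ← Real.rpow_add ht0, ← Real.rpow_add ht0]
    have e2 : 1 / (p - 1) + -(1 / p) * (1 / (p - 1)) + -(1 / p) = 0 := by
      field_simp
      ring
    have e3 : -(1 / p) * (1 / (p - 1)) + -(1 / p) = -(1 / (p - 1)) := by
      field_simp
      ring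
    rw [e2, e3, Real.rpow_zero, mul_one]
  rw [e] at hmul
  rw [Real.rpow_neg hD.le, mul_assoc, inv_mul_eq_div, le_div_iff₀ (by positivity), mul_comm]
  exact hmul

/-- Lemma 3.5: the key estimate
`(∫_{M₁}^{M₂} (g_θ(t) t)^{-1/p} dt)^{p/(p-1)} + ∫_{M₁}^{M₂} g_θ(t)^{-1/α} dt
  ≥ C ∫_{r₁}^{r₂} (ξ f_σ(ξ))^{1/(p-1)} dξ`. -/
theorem stmt_8 (n : ℕ) (hn : 2 ≤ n) (p C₁ C₂ α : ℝ) (hp : 1 < p)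
    (hC₁ : 0 < C₁) (hC₂ : 0 < C₂) (hα₁ : p - 1 ≤ α) (hα₂ : α ≤ p)
    (θ σ : ℝ) (hθ : 1 < θ) (hσ : 1 < σ) :
    ∃ C : ℝ, 0 < C ∧
      ∀ (A : Euc n → Euc n → Euc n), StructCond A p C₁ C₂ →
      ∀ (b : Euc n → ℝ), Measurable b → (∀ x, 0 ≤ b x) → LocBdd b →
      ∀ (q : Euc n → ℝ), Measurable q → (∀ x, 0 ≤ q x) → LocBdd q →
      ∀ (g : ℝ → ℝ), ContinuousOn g (Set.Ici 0) → (∀ t ∈ Set.Ici (0 : ℝ), 0 ≤ g t) →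
        (∀ t : ℝ, 0 < t → 0 < g t) →
      ∀ u : Euc n → ℝ, ContDiff ℝ 1 u → (∀ x, 0 ≤ u x) →
        IsWeakSol A b α (fun x => q x * g (u x)) Set.univ u →
      ∀ r₁ r₂ M₁ M₂ : ℝ, 0 < r₁ → r₁ < r₂ → 0 < M₁ → M₁ < M₂ →
        σ * r₁ ≤ r₂ → θ * M₁ ≤ M₂ →
        M₁ ≤ sphMax u r₁ → sphMax u r₁ ≤ sphMax u r₂ → sphMax u r₂ ≤ M₂ →
        C * ∫ ξ in Set.Ioc r₁ r₂, (ξ * fdef q b p α σ ξ) ^ (1 / (p - 1)) ≤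
          (∫ t in Set.Ioc M₁ M₂, (ginf g θ t * t) ^ (-(1 / p))) ^ (p / (p - 1)) +
            ∫ t in Set.Ioc M₁ M₂, ginf g θ t ^ (-(1 / α)) := by
  have hp1 : 0 < p - 1 := by linarith
  have hp0 : 0 < p := by linarith
  have hα : 0 < α := by linarith
  obtain ⟨Cp, hCp, hpt⟩ := ptLemma n hn p C₁ C₂ α hp hC₁ hC₂ hα₁
  obtain ⟨θ1, hθ1, hθθ⟩ : ∃ θ1, 1 < θ1 ∧ θ1 * θ1 = θ :=
    ⟨√θ, by rw [Real.lt_sqrt (by norm_num)]; simpa using hθ, Real.mul_self_sqrt (by linarith)⟩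
  obtain ⟨δ, hδ⟩ : ∃ δ, δ = (θ1 - 1) / (4 * θ1 + 1) := ⟨_, rfl⟩
  have hδ0 : 0 < δ := by
    rw [hδ]
    exact div_pos (by linarith) (by linarith)
  have hδ1 : (1 + δ) / θ1 = 1 - 4 * δ := by
    rw [hδ]
    field_simp
    ring
  have hδ2 : 1 + δ < θ1 := by
    have h1 : δ < θ1 - 1 := by
      rw [hδ]
      exact div_lt_self (by linarith) (by linarith)
    linarith
  have hη : 0 < 1 - 1 / θ1 := by
    rw [sub_pos, div_lt_one (by linarith)]
    exact hθ1
  have hCg : 0 < ((1 - 1 / θ1) * θ1 ^ (-(1 / p))) ^ (-(1 / (p - 1))) := by positivity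
  obtain ⟨C, hC, hfin⟩ := Dat.final_exists p σ δ Cp _ hp hσ hδ0 hCp hCg
  refine ⟨1 / C, by positivity, ?_⟩
  intro A hA b hb hb0 hbl q hq hq0 hql g hg hg0 hgp u hu hu0 hw r₁ r₂ M₁ M₂ hr₁ hr hM₁ hM hσr hθM
    hMa hMM hMb
  have S : Sol n p C₁ C₂ α A b q g u :=
    ⟨hn, hp, hC₁, hC₂, hα₁, hα₂, hA, hb, hb0, hbl, hq, hq0, hql, hg, hg0, hgp, hu, hu0, hw⟩
  obtain ⟨c, K, hc, hbd⟩ := ginf_bounds hg hg0 hgp hθ hM₁ hM.le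
  obtain ⟨c1, K1, hc1, hbd1⟩ := ginf_bounds hg hg0 hgp hθ1 hM₁ hM.le
  have hw1i : IntegrableOn (fun t => (ginf g θ t * t) ^ (-(1 / p))) (Ioc M₁ M₂) :=
    w_integrable hg hg0 hgp hθ hM₁ hM.le (by positivity) measurable_id
      (fun t ht => (min_le_right _ _).trans ht.1)
  have hw2i : IntegrableOn (fun t => ginf g θ t ^ (-(1 / α))) (Ioc M₁ M₂) := by
    have := w_integrable (k := fun _ => 1) (e := 1 / α) hg hg0 hgp hθ hM₁ hM.le (by positivity)
      measurable_const (fun t ht => min_le_left _ _)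
    simpa only [mul_one] using this
  have hgg : ∀ t ∈ Icc M₁ M₂, ginf g θ t ≤ ginf g θ1 t := by
    intro t ht
    have ht0 : 0 < t := hM₁.trans_le ht.1
    have hle : θ1 ≤ θ := by nlinarith
    exact ginf_le_ginf hg0 hθ hθ1 ht0 ht0 (by gcongr) (by gcongr)
  have hnegp : -(1 / p) ≤ 0 := by
    have : 0 < 1 / p := by positivity
    linarith
  have hnega : -(1 / α) ≤ 0 := by
    have : 0 < 1 / α := by positivity
    linarith
  have D : Dat p σ δ Cp (((1 - 1 / θ1) * θ1 ^ (-(1 / p))) ^ (-(1 / (p - 1)))) (sphMax u)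
      (fun ξ => (ξ * fdef q b p α σ ξ) ^ (1 / (p - 1)))
      (fun t => (ginf g θ t * t) ^ (-(1 / p))) (fun t => ginf g θ t ^ (-(1 / α)))
      (ginf g θ1) r₁ r₂ M₁ M₂ (∫ t in Ioc M₁ M₂, (ginf g θ t * t) ^ (-(1 / p))) := by
    refine ⟨hp, hσ, hδ0, hCp, hCg, hr₁, hr.le, hM₁,
      (sphMax_continuousOn hu.continuous).mono fun x hx => hr₁.trans_le hx.1,
      fun x hx y hy hxy => S.mono (hr₁.trans_le hx.1) hxy, hMa, hMb, ?_, ?_, ?_, hw1i, hw2i, rfl,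
      fun t ht => hc1.trans_le (hbd1 t ht).1, ?_, ?_, ?_⟩
    · intro ξ hξ
      obtain ⟨q0, B, _, _, _, h, _⟩ := S.F_facts hσ hξ
      exact h
    · intro t ht
      exact Real.rpow_nonneg (mul_nonneg (hc.le.trans (hbd t ht).1) (hM₁.le.trans ht.1)) _
    · intro t ht
      exact Real.rpow_nonneg (hc.le.trans (hbd t ht).1) _
    · intro t ht
      have ht0 : 0 < t := hM₁.trans_le ht.1
      rw [mul_comm t]
      exact Real.rpow_le_rpow_of_nonpos (mul_pos (hc.trans_le (hbd t ht).1) ht0)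
        (mul_le_mul_of_nonneg_right (hgg t ht) ht0.le) hnegp
    · intro t ht
      exact hG2_lemma hg hg0 hgp hθ1 hθθ hM₁ hM.le hθM hp hw1i rfl ht
    · intro s s' ξ t h1 h2 h3 hξ h4 h5 h6 ht
      have hs0 : 0 < s := hr₁.trans_le h1
      have hMs1 : M₁ ≤ sphMax u s := hMa.trans (S.mono hr₁ h1)
      have hMs2 : sphMax u s' ≤ M₂ := (S.mono (hs0.trans h2) h3).trans hMb
      have htM : t ∈ Icc M₁ M₂ := ⟨hMs1.trans ht.1, ht.2.trans hMs2⟩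
      have hMs : 0 < sphMax u s := hM₁.trans_le hMs1
      have ht0 : 0 < t := hMs.trans_le ht.1
      have hδM : 0 < δ * sphMax u s := by positivity
      have hmono : sphMax u s ≤ sphMax u s' := S.mono hs0 h2.le
      have hG0 : 0 < ginf g θ1 t := hc1.trans_le (hbd1 t htM).1
      rcases hpt S (m₁ := sphMax u s' - sphMax u s + δ * sphMax u s) (G := ginf g θ1 t)
        hσ hξ hs0 h2 h4 h5 (by linarith) hG0 (by
          intro y hy0 hy1 hy2
          refine ginf_le hg0 hθ1 ht0 ⟨?_, ?_⟩
          · have k1 : t / θ1 ≤ (1 + δ) * sphMax u s / θ1 := by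
              gcongr
              exact ht.2.trans h6
            have k2 : (1 + δ) * sphMax u s / θ1 = (1 - 4 * δ) * sphMax u s := by
              rw [← hδ1]
              ring
            linarith
          · have k1 : (1 + δ) * sphMax u s < θ1 * sphMax u s := by gcongr
            have k2 : θ1 * sphMax u s ≤ θ1 * t := by
              gcongr
              exact ht.1
            linarith) with h | h
      · exact Or.inl h
      · refine Or.inr (h.trans ?_)
        refine mul_le_mul_of_nonneg_left ?_ (mul_nonneg hCp.le (by linarith))
        exact Real.rpow_le_rpow_of_nonpos (hc.trans_le (hbd t htM).1) (hgg t htM) hnega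
  have hmain := hfin D hσr
  have hI0 := D.I0
  have e : (∫ t in Ioc M₁ M₂, (ginf g θ t * t) ^ (-(1 / p))) ^ (1 / (p - 1)) *
      (∫ t in Ioc M₁ M₂, (ginf g θ t * t) ^ (-(1 / p))) =
      (∫ t in Ioc M₁ M₂, (ginf g θ t * t) ^ (-(1 / p))) ^ (p / (p - 1)) := by
    rw [← Real.rpow_add_one' hI0 (by positivity)]
    congr 1
    field_simp
    ring
  rw [e] at hmain
  rw [one_div, inv_mul_eq_div, div_le_iff₀ hC, mul_comm]
  exact hmain
end
end

section
/- (Maximum principle.) Let ω ⊂ ℝⁿ be a nonempty bounded open set and let v : cl(ω) → [0,∞) be a continuous function which is C¹ on ω, satisfies ∫_ω |Dv(x)|^p dx < ∞, and is a solution of div A(x,Dv) + b(x)|Dv|^α ≥ 0 in ω. Then max_{x∈cl(ω)} v(x) = max_{x∈∂ω} v(x). -/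
open MeasureTheory Metric Set Filter
open scoped RealInnerProductSpace ENNReal

noncomputable section

theorem posPow_hasDerivAt {r : ℝ} (hr : 1 < r) (t : ℝ) :
    HasDerivAt (fun t : ℝ => (max t 0) ^ r) (r * (max t 0) ^ (r - 1)) t := by
  rcases lt_trichotomy t 0 with h | h | h
  · have : (fun t : ℝ => (max t 0) ^ r) =ᶠ[nhds t] fun _ => 0 := by
      filter_upwards [Iio_mem_nhds h] with s hs
      rw [max_eq_right (le_of_lt hs), Real.zero_rpow (by linarith)]
    rw [max_eq_right h.le, Real.zero_rpow (by linarith), mul_zero]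
    exact (hasDerivAt_const t (0:ℝ)).congr_of_eventuallyEq this
  · subst h
    have h1 : HasDerivAt (fun t : ℝ => |t| ^ r) 0 0 := by
      simpa using (hasDerivAt_abs_rpow (0:ℝ) hr)
    rw [max_self, Real.zero_rpow (by linarith), mul_zero]
    rw [hasDerivAt_iff_isLittleO] at h1 ⊢
    refine Asymptotics.IsBigO.trans_isLittleO ?_ h1
    refine Asymptotics.IsBigO.of_bound 1 (Filter.Eventually.of_forall fun x => ?_)
    have h0 : (0:ℝ) ^ r = 0 := Real.zero_rpow (by linarith)
    simp only [max_self, abs_zero, h0, sub_zero, smul_zero, one_mul]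
    rw [Real.norm_of_nonneg (by positivity), Real.norm_of_nonneg (by positivity)]
    exact Real.rpow_le_rpow (le_max_right _ _) (max_le (le_abs_self _) (abs_nonneg _)) (by linarith)
  · have : (fun t : ℝ => (max t 0) ^ r) =ᶠ[nhds t] fun t => t ^ r := by
      filter_upwards [Ioi_mem_nhds h] with s hs
      rw [max_eq_left (le_of_lt hs)]
    rw [max_eq_left h.le]
    exact (Real.hasDerivAt_rpow_const (Or.inl h.ne')).congr_of_eventuallyEq this

theorem posPow_contDiff {r : ℝ} (hr : 1 < r) : ContDiff ℝ 1 (fun t : ℝ => (max t 0) ^ r) := by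
  rw [contDiff_one_iff_deriv]
  refine ⟨fun t => (posPow_hasDerivAt hr t).differentiableAt, ?_⟩
  have : deriv (fun t : ℝ => (max t 0) ^ r) = fun t => r * (max t 0) ^ (r - 1) :=
    funext fun t => (posPow_hasDerivAt hr t).deriv
  rw [this]
  refine continuous_const.mul ((continuous_id.max continuous_const).rpow_const fun x => Or.inr (by linarith))

open scoped Convolution Topology in
theorem exists_mollify {n : ℕ} (φ : Euc n → ℝ) (hφ : ContDiff ℝ 1 φ) (hc : HasCompactSupport φ)
    (h0 : ∀ x, 0 ≤ φ x) {δ : ℝ} (hδ : 0 < δ) :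
    ∃ (ψ : ℕ → Euc n → ℝ) (C : ℝ), (∀ i, ContDiff ℝ (⊤ : ℕ∞) (ψ i)) ∧
      (∀ i, tsupport (ψ i) ⊆ cthickening δ (tsupport φ)) ∧ (∀ i x, 0 ≤ ψ i x) ∧
      (∀ i x, ‖ψ i x‖ ≤ C) ∧ (∀ i x, ‖gradient (ψ i) x‖ ≤ C) ∧
      (∀ x, Tendsto (fun i => ψ i x) atTop (𝓝 (φ x))) ∧
      (∀ x, Tendsto (fun i => gradient (ψ i) x) atTop (𝓝 (gradient φ x))) := by
  have hφc := hφ.continuous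
  have hdc : Continuous (fderiv ℝ φ) := hφ.continuous_fderiv one_ne_zero
  have hcd : HasCompactSupport (fderiv ℝ φ) := hc.fderiv ℝ
  obtain ⟨C1, hC1⟩ := hc.exists_bound_of_continuous hφc
  obtain ⟨C2, hC2⟩ := hcd.exists_bound_of_continuous hdc
  let ρ : ℕ → ContDiffBump (0 : Euc n) := fun i =>
    ⟨δ / (i + 1) / 2, δ / (i + 1), by positivity, by
      have : 0 < δ / ((i:ℝ) + 1) := by positivity
      linarith⟩
  have hρle : ∀ i, (ρ i).rOut ≤ δ := fun i => by
    show δ / ((i:ℝ) + 1) ≤ δ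
    apply div_le_self hδ.le
    have : (0:ℝ) ≤ i := by positivity
    linarith
  have hρ : Tendsto (fun i => (ρ i).rOut) atTop (𝓝 0) := by
    show Tendsto (fun i : ℕ => δ / ((i:ℝ) + 1)) atTop (𝓝 0)
    have := (tendsto_one_div_add_atTop_nhds_zero_nat (𝕜 := ℝ)).const_mul δ
    simpa [div_eq_mul_inv] using this
  have hD : ∀ i x, fderiv ℝ ((ρ i).normed volume ⋆[ContinuousLinearMap.lsmul ℝ ℝ, volume] φ) x =
      ((ρ i).normed volume ⋆[ContinuousLinearMap.lsmul ℝ ℝ, volume] (fderiv ℝ φ)) x := by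
    intro i x
    have := (hc.hasFDerivAt_convolution_right (ContinuousLinearMap.lsmul ℝ ℝ)
      (((ρ i).continuous_normed (μ := volume)).locallyIntegrable (μ := volume)) hφ x).fderiv
    rw [this]
    congr 1
  have hbd : ∀ (F : Type) [NormedAddCommGroup F] [NormedSpace ℝ F] [CompleteSpace F] (g : Euc n → F)
      (C : ℝ), Continuous g → ∀ x i, (∀ y ∈ ball x (ρ i).rOut, ‖g y‖ ≤ C) →
      ‖((ρ i).normed volume ⋆[ContinuousLinearMap.lsmul ℝ ℝ, volume] g) x‖ ≤ C := by
    intro F _ _ _ g C hg x i h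
    have hC : 0 ≤ C := (norm_nonneg _).trans (h x (mem_ball_self (ρ i).rOut_pos))
    have := dist_convolution_le (μ := volume) (x₀ := x) (z₀ := (0:F)) (g := g) (R := (ρ i).rOut) hC
      (ρ i).support_normed_eq.subset (ρ i).nonneg_normed
      (ρ i).integral_normed hg.aestronglyMeasurable (by simpa [dist_zero_right] using h)
    simpa [dist_zero_right] using this
  refine ⟨fun i => (ρ i).normed volume ⋆[ContinuousLinearMap.lsmul ℝ ℝ, volume] φ, max C1 C2,
    ?_, ?_, ?_, ?_, ?_, ?_, ?_⟩
  · intro i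
    exact (ρ i).hasCompactSupport_normed.contDiff_convolution_left _ (ρ i).contDiff_normed
      hφc.locallyIntegrable
  · intro i
    apply closure_minimal _ isClosed_cthickening
    intro x hx
    by_contra hxn
    apply hx
    rw [← norm_le_zero_iff]
    apply hbd _ _ _ hφc
    intro y hy
    rw [norm_le_zero_iff]
    by_contra hne
    apply hxn
    apply mem_cthickening_of_dist_le x y δ _ (subset_tsupport _ hne)
    rw [dist_comm]
    exact (mem_ball.1 hy).le.trans (hρle i)
  · intro i x
    beta_reduce
    rw [convolution_def]
    exact integral_nonneg fun y => mul_nonneg ((ρ i).nonneg_normed _) (h0 _)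
  · intro i x
    exact hbd _ _ _ hφc _ _ fun y _ => (hC1 y).trans (le_max_left _ _)
  · intro i x
    rw [gradient, LinearIsometryEquiv.norm_map, hD]
    exact hbd _ _ _ hdc _ _ fun y _ => (hC2 y).trans (le_max_right _ _)
  · intro x
    exact ContDiffBump.convolution_tendsto_right_of_continuous hρ hφc x
  · intro x
    simp only [gradient, hD]
    exact ((InnerProductSpace.toDual ℝ (Euc n)).symm.continuous.tendsto _).comp
      (ContDiffBump.convolution_tendsto_right_of_continuous hρ hdc x)

theorem measurable_gradient' {n : ℕ} (v : Euc n → ℝ) : Measurable (gradient v) :=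
  (InnerProductSpace.toDual ℝ (Euc n)).symm.continuous.measurable.comp (measurable_fderiv ℝ v)

theorem gradient_eq_zero_off {n : ℕ} (φ : Euc n → ℝ) {x : Euc n} (hx : x ∉ tsupport φ) :
    gradient φ x = 0 := by
  have : fderiv ℝ φ x = 0 := by
    by_contra h
    exact hx (support_fderiv_subset ℝ h)
  rw [gradient, this, map_zero]

theorem continuousOn_gradient {n : ℕ} {v : Euc n → ℝ} {ω : Set (Euc n)} (hω : IsOpen ω)
    (hv : ContDiffOn ℝ 1 v ω) : ContinuousOn (gradient v) ω :=
  (InnerProductSpace.toDual ℝ (Euc n)).symm.continuous.comp_continuousOn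
    (hv.continuousOn_fderiv_of_isOpen hω le_rfl)

theorem integrableOn_of_cpt {n : ℕ} {f : Euc n → ℝ} {ω K : Set (Euc n)} (hω : IsOpen ω) (hK : IsCompact K)
    (hf : AEStronglyMeasurable f (volume.restrict ω)) {C : ℝ} (hC : ∀ x ∈ K, ‖f x‖ ≤ C)
    (h0 : ∀ x ∈ ω, x ∉ K → f x = 0) : IntegrableOn f ω := by
  have hb : Integrable (K.indicator fun _ => C) (volume.restrict ω) :=
    ((integrable_indicator_iff hK.measurableSet).2
      (integrableOn_const hK.measure_lt_top.ne)).mono_measure Measure.restrict_le_self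
  refine hb.mono' hf ?_
  filter_upwards [ae_restrict_mem hω.measurableSet] with x hx
  by_cases h : x ∈ K
  · simpa [h] using hC x h
  · simp [h, h0 x hx h]

open scoped Topology in
theorem weak_C1 {n : ℕ} {p C₁ C₂ α : ℝ} (hp : 1 < p)
    (hC₂ : 0 < C₂) (hα₁ : p - 1 ≤ α) 
    {A : Euc n → Euc n → Euc n} (hA : StructCond A p C₁ C₂)
    {b : Euc n → ℝ} (hbm : Measurable b) (hb0 : ∀ x, 0 ≤ b x) (hbloc : LocBdd b)
    {ω : Set (Euc n)} (hω : IsOpen ω) 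
    {v : Euc n → ℝ} (hv1 : ContDiffOn ℝ 1 v ω)
    (hsol : IsWeakSol A b α (fun _ => 0) ω v)
    {φ : Euc n → ℝ} (hφ : ContDiff ℝ 1 φ) (hc : HasCompactSupport φ) (hs : tsupport φ ⊆ ω)
    (h0 : ∀ x, 0 ≤ φ x) :
    (∫ x in ω, ⟪A x (gradient v x), gradient φ x⟫) ≤ ∫ x in ω, b x * ‖gradient v x‖ ^ α * φ x := by
  obtain ⟨δ, hδ, hδs⟩ := hc.isCompact.exists_cthickening_subset_open hω hs
  obtain ⟨ψ, C, h1, h2, h3, h4, h5, h6, h7⟩ := exists_mollify φ hφ hc h0 hδ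
  have hK : IsCompact (cthickening δ (tsupport φ)) := hc.isCompact.cthickening
  set K := cthickening δ (tsupport φ) with hKdef
  have hgc := continuousOn_gradient hω hv1
  obtain ⟨L, hL⟩ := hK.exists_bound_of_continuousOn (hgc.mono hδs)
  obtain ⟨B, hB⟩ := hbloc K hK
  have hgm := measurable_gradient' v
  have hAm : Measurable fun x => A x (gradient v x) := hA.1.comp (measurable_id.prodMk hgm)
  have hC0 : 0 ≤ C := (norm_nonneg _).trans (h4 0 0)
  have hi : ∀ D : ℝ, Integrable (K.indicator fun _ => D) (volume.restrict ω) := fun D =>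
    ((integrable_indicator_iff hK.measurableSet).2
      (integrableOn_const hK.measure_lt_top.ne)).mono_measure Measure.restrict_le_self
  have T1 : Tendsto (fun i => ∫ x in ω, ⟪A x (gradient v x), gradient (ψ i) x⟫) atTop
      (𝓝 (∫ x in ω, ⟪A x (gradient v x), gradient φ x⟫)) := by
    refine tendsto_integral_of_dominated_convergence (K.indicator fun _ => C₂ * L ^ (p-1) * C)
      (fun i => (hAm.inner (measurable_gradient' _)).aestronglyMeasurable) (hi _) ?_ ?_
    · intro i
      refine Eventually.of_forall fun x => ?_
      by_cases hx : x ∈ K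
      · rw [indicator_of_mem hx]
        refine (norm_inner_le_norm _ _).trans ?_
        have hL0 : 0 ≤ L := (norm_nonneg _).trans (hL x hx)
        refine mul_le_mul (((hA.2 x _).2).trans ?_) (h5 i x) (norm_nonneg _) (by positivity)
        exact mul_le_mul_of_nonneg_left
          (Real.rpow_le_rpow (norm_nonneg _) (hL x hx) (by linarith)) hC₂.le
      · rw [gradient_eq_zero_off (ψ i) (fun h => hx (h2 i h))]
        simp [hx]
    · exact Eventually.of_forall fun x => tendsto_const_nhds.inner (h7 x)
  have T2 : Tendsto (fun i => ∫ x in ω, b x * ‖gradient v x‖ ^ α * ψ i x) atTop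
      (𝓝 (∫ x in ω, b x * ‖gradient v x‖ ^ α * φ x)) := by
    refine tendsto_integral_of_dominated_convergence (K.indicator fun _ => B * L ^ α * C)
      (fun i => ((hbm.mul (hgm.norm.pow_const _)).mul
        (h1 i).continuous.measurable).aestronglyMeasurable) (hi _) ?_ ?_
    · intro i
      refine Eventually.of_forall fun x => ?_
      by_cases hx : x ∈ K
      · rw [indicator_of_mem hx]
        have hL0 : 0 ≤ L := (norm_nonneg _).trans (hL x hx)
        have hB0 : 0 ≤ B := (hb0 x).trans (hB x hx)
        rw [norm_mul, Real.norm_of_nonneg (mul_nonneg (hb0 x) (by positivity))]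
        refine mul_le_mul (mul_le_mul (hB x hx) ?_ (by positivity) hB0) (h4 i x) (norm_nonneg _)
          (by positivity)
        exact (Real.rpow_le_rpow (norm_nonneg _) (hL x hx) (by linarith))
      · have : ψ i x = 0 := image_eq_zero_of_notMem_tsupport (fun h => hx (h2 i h))
        simp [hx, this]
    · exact Eventually.of_forall fun x => tendsto_const_nhds.mul (h6 x)
  refine le_of_tendsto_of_tendsto' T1 T2 fun i => ?_
  have := hsol (ψ i) (h1 i) (HasCompactSupport.of_support_subset_isCompact hK
    ((subset_tsupport _).trans (h2 i))) ((h2 i).trans hδs) (h3 i)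
  simp only [zero_mul, integral_zero] at this
  linarith

theorem trunc_props {n : ℕ} {ω K : Set (Euc n)} (hω : IsOpen ω) (hK : IsCompact K) (hKω : K ⊆ ω)
    {v : Euc n → ℝ} (hv1 : ContDiffOn ℝ 1 v ω) {k : ℝ} (hk : ∀ x ∈ ω, x ∉ K → v x ≤ k)
    {r : ℝ} (hr : 1 < r) :
    ContDiff ℝ 1 (ω.indicator fun x => (max (v x - k) 0) ^ r) ∧
    tsupport (ω.indicator fun x => (max (v x - k) 0) ^ r) ⊆ K ∧
    ∀ x ∈ ω, gradient (ω.indicator fun x => (max (v x - k) 0) ^ r) x =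
      (r * (max (v x - k) 0) ^ (r - 1)) • gradient v x := by
  have hzero : ∀ x, x ∉ K → ω.indicator (fun x => (max (v x - k) 0) ^ r) x = 0 := by
    intro x hx
    by_cases hxω : x ∈ ω
    · rw [indicator_of_mem hxω, max_eq_right (by linarith [hk x hxω hx]),
        Real.zero_rpow (by linarith)]
    · rw [indicator_of_notMem hxω]
  have hev : ∀ x ∈ ω, (ω.indicator fun x => (max (v x - k) 0) ^ r) =ᶠ[nhds x]
      fun x => (max (v x - k) 0) ^ r := by
    intro x hx
    filter_upwards [hω.mem_nhds hx] with y hy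
    rw [indicator_of_mem hy]
  refine ⟨?_, ?_, ?_⟩
  · rw [contDiff_iff_contDiffAt]
    intro x
    by_cases hx : x ∈ ω
    · refine ContDiffAt.congr_of_eventuallyEq ?_ (hev x hx)
      exact (posPow_contDiff hr).contDiffAt.comp x
        ((hv1.contDiffAt (hω.mem_nhds hx)).sub contDiffAt_const)
    · have : (ω.indicator fun x => (max (v x - k) 0) ^ r) =ᶠ[nhds x] fun _ => 0 := by
        filter_upwards [hK.isClosed.isOpen_compl.mem_nhds (fun h => hx (hKω h))] with y hy
        exact hzero y hy
      exact contDiffAt_const.congr_of_eventuallyEq this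
  · refine closure_minimal (fun x hx => ?_) hK.isClosed
    by_contra h
    exact hx (hzero x h)
  · intro x hx
    have hd : HasFDerivAt v (fderiv ℝ v x) x :=
      ((hv1.contDiffAt (hω.mem_nhds hx)).differentiableAt one_ne_zero).hasFDerivAt
    have h2 := (posPow_hasDerivAt hr (v x - k)).comp_hasFDerivAt x (hd.sub_const k)
    have h3 := (h2.congr_of_eventuallyEq (hev x hx)).fderiv
    rw [gradient, h3, gradient, map_smulₛₗ]
    simp

theorem young1 {p C₁ B t w : ℝ} (hp : 1 < p) (hC₁ : 0 < C₁) (hB : 0 ≤ B) (ht : 0 ≤ t) (hw : 0 ≤ w) :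
    B * t ^ (p - 1) * w ≤ C₁ * t ^ p + B * (B / C₁) ^ (p - 1) * w ^ p := by
  have e : ∀ s : ℝ, 0 ≤ s → s ^ p = s ^ (p - 1) * s := fun s hs => by
    conv_lhs => rw [show p = (p - 1) + 1 by ring]
    rw [Real.rpow_add_of_nonneg hs (by linarith) zero_le_one, Real.rpow_one]
  rcases le_total (B * w) (C₁ * t) with h | h
  · have : B * t ^ (p - 1) * w ≤ C₁ * t ^ p := by
      rw [e t ht]
      have := mul_le_mul_of_nonneg_left h (Real.rpow_nonneg ht (p - 1))
      linarith
    have h2 : 0 ≤ B * (B / C₁) ^ (p - 1) * w ^ p := by positivity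
    linarith
  · have h1 : t ≤ B / C₁ * w := by
      rw [div_mul_eq_mul_div, le_div_iff₀ hC₁]; linarith
    have h3 : t ^ (p - 1) ≤ (B / C₁) ^ (p - 1) * w ^ (p - 1) := by
      rw [← Real.mul_rpow (by positivity) hw]
      exact Real.rpow_le_rpow ht h1 (by linarith)
    have h2 : 0 ≤ C₁ * t ^ p := by positivity
    have h4 : B * t ^ (p - 1) * w ≤ B * ((B / C₁) ^ (p - 1) * w ^ (p - 1)) * w := by gcongr
    rw [e w hw]
    linarith

theorem young2 {p t w : ℝ} (hp : 1 < p) (ht : 0 ≤ t) (hw : 0 ≤ w) :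
    w ^ p * t ≤ w ^ (p + 1) + w * t ^ p := by
  have e : ∀ s : ℝ, 0 ≤ s → s ^ p = s ^ (p - 1) * s := fun s hs => by
    conv_lhs => rw [show p = (p - 1) + 1 by ring]
    rw [Real.rpow_add_of_nonneg hs (by linarith) zero_le_one, Real.rpow_one]
  rw [Real.rpow_add_of_nonneg hw (by linarith) zero_le_one, Real.rpow_one]
  rcases le_total t w with h | h
  · have : w ^ p * t ≤ w ^ p * w := by gcongr
    have h2 : 0 ≤ w * t ^ p := by positivity
    linarith
  · have h3 : w ^ (p - 1) ≤ t ^ (p - 1) := Real.rpow_le_rpow hw h (by linarith)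
    have h1 : w ^ p * t ≤ w * t ^ p := by
      rw [e w hw, e t ht]
      have := mul_le_mul_of_nonneg_right h3 (mul_nonneg hw ht)
      linarith
    have h2 : 0 ≤ w ^ p * w := by positivity
    linarith

theorem measurableSet_level {n : ℕ} {ω : Set (Euc n)} (hω : IsOpen ω)
    {v : Euc n → ℝ} (hv1 : ContDiffOn ℝ 1 v ω) (k : ℝ) :
    MeasurableSet {x | x ∈ ω ∧ k < v x ∧ gradient v x ≠ 0} := by
  have h1 : IsOpen (ω ∩ v ⁻¹' Ioi k) := hv1.continuousOn.isOpen_inter_preimage hω isOpen_Ioi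
  have h2 : MeasurableSet ((gradient v) ⁻¹' {0}ᶜ) :=
    measurable_gradient' v (measurableSet_singleton 0).compl
  have : {x | x ∈ ω ∧ k < v x ∧ gradient v x ≠ 0} =
      (ω ∩ v ⁻¹' Ioi k) ∩ ((gradient v) ⁻¹' {0}ᶜ) := by
    ext x
    exact ⟨fun h => ⟨⟨h.1, h.2.1⟩, h.2.2⟩, fun h => ⟨h.1.1, h.1.2, h.2⟩⟩
  rw [this]
  exact h1.measurableSet.inter h2

open scoped Topology in
theorem small_level {n : ℕ} {ω : Set (Euc n)} (hω : IsOpen ω) (hωbdd : Bornology.IsBounded ω)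
    {v : Euc n → ℝ} (hv1 : ContDiffOn ℝ 1 v ω) {x₀ : Euc n}
    (hmax : ∀ x ∈ ω, v x ≤ v x₀) {k₀ : ℝ} (hk₀ : k₀ < v x₀) {θ : ℝ} (hθ : 0 < θ)
    {c : ℝ≥0∞} (hc : c ≠ ∞) :
    ∃ k, k₀ ≤ k ∧ k < v x₀ ∧
      c * volume {x | x ∈ ω ∧ k < v x ∧ gradient v x ≠ 0} ^ θ < 1 := by
  set E : ℝ → Set (Euc n) := fun k => {x | x ∈ ω ∧ k < v x ∧ gradient v x ≠ 0} with hE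
  let κ : ℕ → ℝ := fun j => v x₀ - (v x₀ - k₀) / (j + 1)
  have hd : 0 < v x₀ - k₀ := by linarith
  have hκm : Monotone κ := by
    intro i j hij
    have : ((i:ℝ)) ≤ j := by exact_mod_cast hij
    have h2 : (v x₀ - k₀) / ((j:ℝ) + 1) ≤ (v x₀ - k₀) / ((i:ℝ) + 1) := by gcongr
    show v x₀ - (v x₀ - k₀) / (i + 1) ≤ v x₀ - (v x₀ - k₀) / (j + 1)
    linarith
  have hκt : Tendsto κ atTop (𝓝 (v x₀)) := by
    have := ((tendsto_one_div_add_atTop_nhds_zero_nat (𝕜 := ℝ)).const_mul (v x₀ - k₀)).const_sub (v x₀)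
    simpa [κ, div_eq_mul_inv] using this
  have hgc := continuousOn_gradient hω hv1
  have hmeas : ∀ k, MeasurableSet (E k) := fun k => measurableSet_level hω hv1 k
  have hempty : (⋂ j, E (κ j)) = ∅ := by
    rw [eq_empty_iff_forall_notMem]
    intro x hx
    rw [mem_iInter] at hx
    have hxω := (hx 0).1
    have hge : v x₀ ≤ v x := le_of_tendsto' hκt fun j => (hx j).2.1.le
    apply (hx 0).2.2
    have hloc : IsLocalMax v x := by
      filter_upwards [hω.mem_nhds hxω] with y hy
      exact (hmax y hy).trans hge
    rw [gradient, hloc.fderiv_eq_zero, map_zero]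
  have hT : Tendsto (volume ∘ fun j => E (κ j)) atTop (𝓝 (volume (⋂ j, E (κ j)))) := by
    refine tendsto_measure_iInter_atTop (fun j => (hmeas _).nullMeasurableSet) ?_ ⟨0, ?_⟩
    · intro i j hij x hx
      exact ⟨hx.1, (hκm hij).trans_lt hx.2.1, hx.2.2⟩
    · exact ((measure_mono fun x hx => hx.1).trans_lt hωbdd.measure_lt_top).ne
  rw [hempty, measure_empty] at hT
  have hT2 : Tendsto (fun j => c * volume (E (κ j)) ^ θ) atTop (𝓝 (c * 0 ^ θ)) :=
    ENNReal.Tendsto.const_mul ((ENNReal.continuous_rpow_const.tendsto 0).comp hT) (Or.inr hc)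
  rw [ENNReal.zero_rpow_of_pos hθ, mul_zero] at hT2
  obtain ⟨j, hj⟩ := (hT2.eventually (gt_mem_nhds one_pos)).exists
  refine ⟨κ j, ?_, ?_, hj⟩
  · have : (v x₀ - k₀) / ((j:ℝ) + 1) ≤ v x₀ - k₀ := by
      apply div_le_self hd.le
      have : (0:ℝ) ≤ j := by positivity
      linarith
    show k₀ ≤ v x₀ - (v x₀ - k₀) / (j + 1)
    linarith
  · have : 0 < (v x₀ - k₀) / ((j:ℝ) + 1) := by positivity
    show v x₀ - (v x₀ - k₀) / (j + 1) < v x₀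
    linarith

theorem core {n : ℕ} (hn : 2 ≤ n) {p C₁ C₂ α : ℝ} (hp : 1 < p)
    (hC₁ : 0 < C₁) (hC₂ : 0 < C₂) (hα₁ : p - 1 ≤ α)
    {A : Euc n → Euc n → Euc n} (hA : StructCond A p C₁ C₂)
    {b : Euc n → ℝ} (hbm : Measurable b) (hb0 : ∀ x, 0 ≤ b x) (hbloc : LocBdd b)
    {ω : Set (Euc n)} (hω : IsOpen ω) (hωbdd : Bornology.IsBounded ω)
    {v : Euc n → ℝ} (hvc : ContinuousOn v (closure ω)) (hv1 : ContDiffOn ℝ 1 v ω)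
    (hsol : IsWeakSol A b α (fun _ => 0) ω v) {x₀ : Euc n} (hx₀ : x₀ ∈ closure ω)
    (hmax : ∀ x ∈ closure ω, v x ≤ v x₀) {m : ℝ} (hm : ∀ x ∈ frontier ω, v x ≤ m)
    (hmx : m < v x₀) : False := by
  obtain ⟨k₀, hmk, hk₀⟩ := exists_between hmx
  have hsub : ∀ x ∈ closure ω, m < v x → x ∈ ω := by
    intro x hx h
    by_contra hxω
    have : x ∈ frontier ω := by
      rw [hω.frontier_eq]; exact ⟨hx, hxω⟩
    linarith [hm x this]
  have hx₀ω : x₀ ∈ ω := hsub x₀ hx₀ hmx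
  have hcl : IsCompact (closure ω) := hωbdd.isCompact_closure
  have hKc : ∀ k, IsCompact (closure ω ∩ v ⁻¹' Ici k) := fun k =>
    hcl.of_isClosed_subset (hvc.preimage_isClosed_of_isClosed isClosed_closure isClosed_Ici)
      inter_subset_left
  have hgc := continuousOn_gradient hω hv1
  have hgm := measurable_gradient' v
  have hK₀ω : closure ω ∩ v ⁻¹' Ici k₀ ⊆ ω := fun x hx => hsub x hx.1 (hmk.trans_le hx.2)
  obtain ⟨L, hL⟩ := (hKc k₀).exists_bound_of_continuousOn (hgc.mono hK₀ω)
  obtain ⟨B₀, hB₀⟩ := hbloc _ (hKc k₀)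
  have hL0 : 0 ≤ L := (norm_nonneg _).trans (hL x₀ ⟨hx₀, hk₀.le⟩)
  have hB₀0 : 0 ≤ B₀ := (hb0 x₀).trans (hB₀ x₀ ⟨hx₀, hk₀.le⟩)
  set B := B₀ * L ^ (α - (p - 1)) with hBdef
  have hB0 : 0 ≤ B := by positivity
  have hbB : ∀ x ∈ closure ω ∩ v ⁻¹' Ici k₀,
      b x * ‖gradient v x‖ ^ α ≤ B * ‖gradient v x‖ ^ (p - 1) := by
    intro x hx
    have e : ‖gradient v x‖ ^ α = ‖gradient v x‖ ^ (α - (p - 1)) * ‖gradient v x‖ ^ (p - 1) := by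
      rw [← Real.rpow_add_of_nonneg (norm_nonneg _) (by linarith) (by linarith)]
      congr 1; ring
    rw [e, ← mul_assoc]
    have h1 : ‖gradient v x‖ ^ (α - (p - 1)) ≤ L ^ (α - (p - 1)) :=
      Real.rpow_le_rpow (norm_nonneg _) (hL x hx) (by linarith)
    exact mul_le_mul_of_nonneg_right (mul_le_mul (hB₀ x hx) h1 (by positivity) hB₀0) (by positivity)
  set C' := B * (B / C₁) ^ (p - 1) with hC'def
  have hC'0 : 0 ≤ C' := by positivity
  have hn1 : (1 : NNReal) < n := by exact_mod_cast hn
  have hconj := NNReal.HolderConjugate.conjExponent hn1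
  set q : NNReal := NNReal.conjExponent n with hq
  have hq1 : (1 : NNReal) < q := hconj.symm.lt
  have hq1' : (1 : ℝ) < q := by exact_mod_cast hq1
  have hfr : Module.finrank ℝ (Euc n) = n := by simp
  set S : NNReal := eLpNormLESNormFDerivOneConst (volume : Measure (Euc n)) q with hS
  set θ : ℝ := 1 / (1 : ℝ≥0∞).toReal - 1 / (q : ℝ≥0∞).toReal with hθdef
  have hθ : 0 < θ := by
    have : 1 / (q : ℝ) < 1 := by rw [div_lt_one (by linarith)]; exact hq1'
    simp only [hθdef, ENNReal.toReal_one, ENNReal.coe_toReal]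
    linarith
  set c := (p + 1) * (1 + C' / C₁) with hc
  have hc0 : 0 ≤ c := by positivity
  obtain ⟨k, hk₀k, hkx, hsmall⟩ := small_level hω hωbdd hv1 (fun x hx => hmax x (subset_closure hx))
    hk₀ hθ (c := S * ENNReal.ofReal c) (ENNReal.mul_ne_top ENNReal.coe_ne_top ENNReal.ofReal_ne_top)
  have hEm := measurableSet_level hω hv1 k
  set E := {x | x ∈ ω ∧ k < v x ∧ gradient v x ≠ 0} with hE
  have hEω : E ⊆ ω := fun x hx => hx.1
  have hK := hKc k
  have hKK : closure ω ∩ v ⁻¹' Ici k ⊆ closure ω ∩ v ⁻¹' Ici k₀ :=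
    fun x hx => ⟨hx.1, hk₀k.trans hx.2⟩
  set K := closure ω ∩ v ⁻¹' Ici k with hKdef
  have hKω : K ⊆ ω := hKK.trans hK₀ω
  have hkK : ∀ x ∈ ω, x ∉ K → v x ≤ k := by
    intro x hx hxK
    by_contra h
    exact hxK ⟨subset_closure hx, (not_le.1 h).le⟩
  obtain ⟨hφ1, hφ2, hφ3⟩ := trunc_props hω hK hKω hv1 hkK (r := 2) one_lt_two
  obtain ⟨hu1, hu2, hu3⟩ := trunc_props hω hK hKω hv1 hkK (r := p + 1) (by linarith)
  set φ := ω.indicator (fun x => (max (v x - k) 0) ^ (2:ℝ)) with hφ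
  set u := ω.indicator (fun x => (max (v x - k) 0) ^ (p + 1)) with hu
  have hφc : HasCompactSupport φ :=
    HasCompactSupport.of_support_subset_isCompact hK ((subset_tsupport _).trans hφ2)
  have huc : HasCompactSupport u :=
    HasCompactSupport.of_support_subset_isCompact hK ((subset_tsupport _).trans hu2)
  have hφ0 : ∀ x, 0 ≤ φ x := fun x => indicator_nonneg (fun y _ => by positivity) x
  have hu0 : ∀ x, 0 ≤ u x := fun x => indicator_nonneg (fun y _ => by positivity) x
  have hw := weak_C1 hp hC₂ hα₁ hA hbm hb0 hbloc hω hv1 hsol hφ1 hφc (hφ2.trans hKω) hφ0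
  -- abbreviations
  set w : Euc n → ℝ := fun x => max (v x - k) 0 with hwdef
  have hw0 : ∀ x, 0 ≤ w x := fun x => le_max_right _ _
  have hwz : ∀ x ∈ ω, x ∉ K → w x = 0 := fun x hx hxK => max_eq_right (by linarith [hkK x hx hxK])
  have hwle : ∀ x ∈ K, w x ≤ v x₀ - k := fun x hx =>
    max_le (by linarith [hmax x hx.1]) (by linarith)
  have hwm : AEStronglyMeasurable w (volume.restrict ω) :=
    (ContinuousOn.sup (hv1.continuousOn.sub continuousOn_const)
      continuousOn_const).aestronglyMeasurable hω.measurableSet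
  set g : Euc n → ℝ := fun x => ‖gradient v x‖ with hgdef
  have hg0 : ∀ x, 0 ≤ g x := fun x => norm_nonneg _
  have hgmm : Measurable g := hgm.norm
  have hAm : Measurable fun x => A x (gradient v x) := hA.1.comp (measurable_id.prodMk hgm)
  -- integrability
  have iY : IntegrableOn (fun x => w x * g x ^ p) ω := by
    refine integrableOn_of_cpt hω hK (C := (v x₀ - k) * L ^ p)
      (hwm.mul (hgmm.pow_const _).aestronglyMeasurable) ?_ ?_
    · intro x hx
      rw [Real.norm_of_nonneg (mul_nonneg (hw0 x) (Real.rpow_nonneg (hg0 x) _))]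
      exact mul_le_mul (hwle x hx) (Real.rpow_le_rpow (hg0 x) (hL x (hKK hx)) (by linarith))
        (Real.rpow_nonneg (hg0 x) _) (by linarith)
    · intro x hx hxK
      simp [hwz x hx hxK]
  have iu : Integrable u := hu1.continuous.integrable_of_hasCompactSupport huc
  have iX : IntegrableOn (E.indicator u) ω := (iu.indicator hEm).integrableOn
  have iA : IntegrableOn (fun x => ⟪A x (gradient v x), gradient φ x⟫) ω := by
    refine integrableOn_of_cpt hω hK (C := C₂ * L ^ (p - 1) * (2 * (v x₀ - k) * L))
      (hAm.inner (measurable_gradient' _)).aestronglyMeasurable ?_ ?_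
    · intro x hx
      refine (norm_inner_le_norm _ _).trans ?_
      have h1 : ‖gradient φ x‖ ≤ 2 * (v x₀ - k) * L := by
        rw [hφ3 x (hKω hx), norm_smul, show (2:ℝ) - 1 = 1 by norm_num, Real.rpow_one,
          Real.norm_of_nonneg (mul_nonneg zero_le_two (hw0 x))]
        exact mul_le_mul (mul_le_mul_of_nonneg_left (hwle x hx) zero_le_two) (hL x (hKK hx))
          (norm_nonneg _) (by linarith)
      refine mul_le_mul (((hA.2 x _).2).trans ?_) h1 (norm_nonneg _) (by positivity)
      exact mul_le_mul_of_nonneg_left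
          (Real.rpow_le_rpow (norm_nonneg _) (hL x (hKK hx)) (by linarith)) hC₂.le
    · intro x hx hxK
      rw [gradient_eq_zero_off φ (fun h => hxK (hφ2 h)), inner_zero_right]
  set X := ∫ x in ω, E.indicator u x with hX
  set Y := ∫ x in ω, w x * g x ^ p with hY
  have hX0 : 0 ≤ X := integral_nonneg fun x => indicator_nonneg (fun y _ => hu0 y) x
  have hY0 : 0 ≤ Y := integral_nonneg fun x => mul_nonneg (hw0 x) (Real.rpow_nonneg (hg0 x) _)
  have hgE : ∀ x ∈ ω, x ∉ E → w x = 0 ∨ g x = 0 := by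
    intro x hx hxE
    by_contra! h
    apply hxE
    refine ⟨hx, ?_, fun h0 => h.2 (by simp [hgdef, h0])⟩
    by_contra hle
    exact h.1 (max_eq_right (by linarith))
  -- energy estimate
  have h1 : 2 * C₁ * Y ≤ ∫ x in ω, ⟪A x (gradient v x), gradient φ x⟫ := by
    rw [hY, ← integral_const_mul]
    refine setIntegral_mono_on (iY.const_mul _) iA hω.measurableSet ?_
    intro x hx
    rw [hφ3 x hx, inner_smul_right, real_inner_comm, show (2:ℝ) - 1 = 1 by norm_num, Real.rpow_one]
    have := mul_le_mul_of_nonneg_left (hA.2 x (gradient v x)).1 (mul_nonneg zero_le_two (hw0 x))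
    calc 2 * C₁ * (w x * g x ^ p) = 2 * w x * (C₁ * ‖gradient v x‖ ^ p) := by simp only [hgdef]; ring
      _ ≤ _ := this
  have h2 : ∫ x in ω, b x * ‖gradient v x‖ ^ α * φ x ≤ C₁ * Y + C' * X := by
    rw [hY, hX, ← integral_const_mul, ← integral_const_mul,
      ← integral_add (iY.const_mul _) (iX.const_mul _)]
    refine integral_mono_of_nonneg (Eventually.of_forall fun x => mul_nonneg (mul_nonneg (hb0 x)
      (by positivity)) (hφ0 x)) ((iY.const_mul _).add (iX.const_mul _)) ?_
    filter_upwards [ae_restrict_mem hω.measurableSet] with x hx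
    have hφx : φ x = w x * w x := by
      rw [hφ, indicator_of_mem hx, Real.rpow_two, sq]
    have hux : u x = w x * w x ^ p := by
      rw [hu, indicator_of_mem hx, Real.rpow_add_of_nonneg (hw0 x) (by linarith) zero_le_one,
        Real.rpow_one, mul_comm]
    by_cases hxE : x ∈ E
    · have hxK : x ∈ K := ⟨subset_closure hx, hxE.2.1.le⟩
      rw [indicator_of_mem hxE, hφx, hux]
      have y1 := young1 hp hC₁ hB0 (hg0 x) (hw0 x)
      have y2 := mul_le_mul_of_nonneg_right (hbB x (hKK hxK)) (mul_nonneg (hw0 x) (hw0 x))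
      have y3 := mul_le_mul_of_nonneg_left y1 (hw0 x)
      calc _ ≤ _ := y2
        _ = w x * (B * g x ^ (p - 1) * w x) := by simp only [hgdef]; ring
        _ ≤ _ := y3
        _ = _ := by rw [hC'def]; ring
    · rw [indicator_of_notMem hxE, hφx]
      have hl : b x * ‖gradient v x‖ ^ α * (w x * w x) = 0 := by
        rcases hgE x hx hxE with h | h
        · rw [h]; ring
        · simp only [hgdef] at h
          rw [h, Real.zero_rpow (by linarith)]; ring
      rw [hl]
      have := mul_nonneg (hw0 x) (Real.rpow_nonneg (hg0 x) p)
      have := mul_nonneg hC₁.le this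
      linarith
  have hYX : C₁ * Y ≤ C' * X := by linarith
  have hYX' : (p + 1) * (X + Y) ≤ c * X := by
    have : Y ≤ C' / C₁ * X := by
      rw [div_mul_eq_mul_div, le_div_iff₀ hC₁]; linarith
    have h3 : X + Y ≤ (1 + C' / C₁) * X := by linarith
    rw [hc, mul_assoc]
    exact mul_le_mul_of_nonneg_left h3 (by linarith)
  -- gradient estimate
  have hD : eLpNorm (fderiv ℝ u) 1 volume ≤ ENNReal.ofReal (c * X) := by
    have hpt : ∀ x ∈ ω, ‖fderiv ℝ u x‖ ≤ (p + 1) * (E.indicator u x + w x * g x ^ p) := by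
      intro x hx
      have e1 : ‖fderiv ℝ u x‖ = (p + 1) * (w x ^ p * g x) := by
        have : ‖gradient u x‖ = ‖fderiv ℝ u x‖ := by rw [gradient, LinearIsometryEquiv.norm_map]
        rw [← this, hu3 x hx, norm_smul, Real.norm_of_nonneg
          (mul_nonneg (by linarith) (Real.rpow_nonneg (hw0 x) _)), add_sub_cancel_right, mul_assoc]
      rw [e1]
      refine mul_le_mul_of_nonneg_left ?_ (by linarith)
      by_cases hxE : x ∈ E
      · rw [indicator_of_mem hxE, hu, indicator_of_mem hx]
        exact young2 hp (hg0 x) (hw0 x)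
      · rw [indicator_of_notMem hxE]
        have hl : w x ^ p * g x = 0 := by
          rcases hgE x hx hxE with h | h
          · rw [h, Real.zero_rpow (by linarith), zero_mul]
          · rw [h, mul_zero]
        rw [hl, zero_add]
        exact mul_nonneg (hw0 x) (Real.rpow_nonneg (hg0 x) _)
    have hoff : ∀ x, x ∉ ω → ‖fderiv ℝ u x‖ₑ = 0 := by
      intro x hx
      have : fderiv ℝ u x = 0 := by
        by_contra h
        exact hx (hKω (hu2 (support_fderiv_subset ℝ h)))
      rw [← ofReal_norm, this, norm_zero, ENNReal.ofReal_zero]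
    rw [eLpNorm_one_eq_lintegral_enorm]
    have e2 : ∫⁻ x, ‖fderiv ℝ u x‖ₑ = ∫⁻ x in ω, ‖fderiv ℝ u x‖ₑ := by
      rw [← lintegral_indicator hω.measurableSet]
      congr 1
      ext x
      by_cases hx : x ∈ ω
      · rw [indicator_of_mem hx]
      · rw [indicator_of_notMem hx, hoff x hx]
    rw [e2]
    have iXY : IntegrableOn (fun x => (p + 1) * (E.indicator u x + w x * g x ^ p)) ω :=
      (iX.add iY).const_mul _
    calc ∫⁻ x in ω, ‖fderiv ℝ u x‖ₑ
        ≤ ∫⁻ x in ω, ENNReal.ofReal ((p + 1) * (E.indicator u x + w x * g x ^ p)) := by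
          refine setLIntegral_mono' hω.measurableSet fun x hx => ?_
          rw [← ofReal_norm]
          exact ENNReal.ofReal_le_ofReal (hpt x hx)
      _ = ENNReal.ofReal (∫ x in ω, (p + 1) * (E.indicator u x + w x * g x ^ p)) := by
          rw [ofReal_integral_eq_lintegral_ofReal iXY]
          exact Eventually.of_forall fun x => mul_nonneg (by linarith) (add_nonneg
            (indicator_nonneg (fun y _ => hu0 y) x)
            (mul_nonneg (hw0 x) (Real.rpow_nonneg (hg0 x) _)))
      _ = ENNReal.ofReal ((p + 1) * (X + Y)) := by
          rw [integral_const_mul, integral_add iX iY]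
      _ ≤ _ := ENNReal.ofReal_le_ofReal hYX'
  have hSob : eLpNorm u q volume ≤ S * ENNReal.ofReal (c * X) := by
    refine (eLpNorm_le_eLpNorm_fderiv_one volume hu1 huc (p := q) (by rw [hfr]; exact hconj)).trans ?_
    exact mul_le_mul_right hD _
  have hXE : ENNReal.ofReal X ≤ S * ENNReal.ofReal (c * X) * volume E ^ θ := by
    have e3 : ENNReal.ofReal X = eLpNorm u 1 (volume.restrict E) := by
      rw [eLpNorm_one_eq_lintegral_enorm, hX, integral_indicator hEm, Measure.restrict_restrict hEm,
        inter_eq_left.2 hEω, ofReal_integral_eq_lintegral_ofReal iu.integrableOn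
        (Eventually.of_forall hu0)]
      congr 1
      ext x
      rw [← ofReal_norm, Real.norm_of_nonneg (hu0 x)]
    rw [e3]
    have := eLpNorm_le_eLpNorm_mul_rpow_measure_univ (μ := volume.restrict E) (p := 1)
      (q := (q : ℝ≥0∞)) (f := u) (by exact_mod_cast hq1.le) hu1.continuous.aestronglyMeasurable
    rw [Measure.restrict_apply_univ] at this
    refine this.trans (mul_le_mul_left ?_ _)
    exact (eLpNorm_mono_measure _ Measure.restrict_le_self).trans hSob
  have hXz : X = 0 := by
    by_contra hne
    have hXp : 0 < X := lt_of_le_of_ne hX0 (Ne.symm hne)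
    have hoX : ENNReal.ofReal X ≠ 0 := (ENNReal.ofReal_pos.2 hXp).ne'
    have e4 : S * ENNReal.ofReal (c * X) * volume E ^ θ =
        (S * ENNReal.ofReal c * volume E ^ θ) * ENNReal.ofReal X := by
      rw [ENNReal.ofReal_mul hc0]; ring
    rw [e4] at hXE
    have := ENNReal.mul_lt_mul_left hoX ENNReal.ofReal_ne_top hsmall
    rw [one_mul] at this
    exact absurd hXE (not_le.2 this)
  rw [hXz, mul_zero, ENNReal.ofReal_zero, mul_zero, nonpos_iff_eq_zero,
    eLpNorm_eq_zero_iff hu1.continuous.aestronglyMeasurable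
      (by exact_mod_cast (zero_lt_one.trans hq1).ne')] at hSob
  have huz : u = 0 := (Continuous.ae_eq_iff_eq volume hu1.continuous continuous_zero).1 hSob
  have : u x₀ = 0 := by rw [huz]; rfl
  rw [hu, indicator_of_mem hx₀ω] at this
  have hpos : 0 < w x₀ := lt_max_of_lt_left (by linarith)
  exact (Real.rpow_pos_of_pos hpos (p + 1)).ne' this

/-- Lemma 4.2 (maximum principle): a nonnegative solution of
`div A(x,Dv) + b(x)|Dv|^α ≥ 0` on a nonempty bounded open set `ω` attains its maximum on
the boundary: `max_{cl ω} v = max_{∂ω} v`. -/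
theorem stmt_9 (n : ℕ) (hn : 2 ≤ n) (p C₁ C₂ α : ℝ) (hp : 1 < p)
    (hC₁ : 0 < C₁) (hC₂ : 0 < C₂) (hα₁ : p - 1 ≤ α) (hα₂ : α ≤ p)
    (A : Euc n → Euc n → Euc n) (hA : StructCond A p C₁ C₂)
    (b : Euc n → ℝ) (hbm : Measurable b) (hb0 : ∀ x, 0 ≤ b x) (hbloc : LocBdd b)
    (ω : Set (Euc n)) (hω : IsOpen ω) (hωne : ω.Nonempty) (hωbdd : Bornology.IsBounded ω)
    (v : Euc n → ℝ) (hvc : ContinuousOn v (closure ω)) (hv1 : ContDiffOn ℝ 1 v ω)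
    (hv0 : ∀ x ∈ closure ω, 0 ≤ v x)
    (hint : IntegrableOn (fun x => ‖gradient v x‖ ^ p) ω)
    (hsol : IsWeakSol A b α (fun _ => 0) ω v) :
    sSup (v '' closure ω) = sSup (v '' frontier ω) := by
  have hcl : IsCompact (closure ω) := hωbdd.isCompact_closure
  have hne : (closure ω).Nonempty := hωne.closure
  obtain ⟨x₀, hx₀, hmax⟩ := hcl.exists_isMaxOn hne hvc
  have hbd : BddAbove (v '' closure ω) := ⟨v x₀, by rintro _ ⟨x, hx, rfl⟩; exact hmax hx⟩
  have hfs : v '' frontier ω ⊆ v '' closure ω := image_mono frontier_subset_closure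
  apply le_antisymm
  · refine csSup_le (hne.image v) ?_
    rintro _ ⟨x, hx, rfl⟩
    refine (hmax hx).trans ?_
    by_contra h
    exact core hn hp hC₁ hC₂ hα₁ hA hbm hb0 hbloc hω hωbdd hvc hv1 hsol hx₀ (fun y hy => hmax hy)
      (fun y hy => le_csSup (hbd.mono hfs) (mem_image_of_mem v hy)) (not_le.1 h)
  · rcases (frontier ω).eq_empty_or_nonempty with h | h
    · rw [h, image_empty, Real.sSup_empty]
      exact (hv0 x₀ hx₀).trans (le_csSup hbd (mem_image_of_mem v hx₀))
    · exact csSup_le_csSup hbd (h.image v) hfs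
end
end
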